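/- arXiv:2002.09651 — 4 statements merged into one kernel-verified Lean document; each statement's English description precedes it below -/
import Mathlib

section
/- Let X be a Polish space, E a countable Borel equivalence relation on X, μ an E-invariant Borel probability measure, φ : X → ℕ ∪ {∞} a Borel function, and ψ : X → X a Borel function whose graph is contained in E such that the fiber ψ⁻¹(x) has exactly φ(x) elements for all x ∈ X. Then ∫ φ dμ = 1. -/
/-!
If `ψ` is injective on a Borel set `Q`, then `μ (ψ '' Q) = μ Q`: away from the fixed points of `ψ`,
the set `Q` splits into countably many Borel pieces `B` with `ψ '' B` disjoint from `B`, and on each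
of these `ψ` extends to an involution of `X` with graph in `E` that exchanges `B` and `ψ '' B`
(`measure_image_of_disjoint`, `exists_seq_measure_image`). If `X` is partitioned into countably many
such Borel sets `Q n`, then `φ x` is the number of `n` with `x ∈ ψ '' Q n`, so
`∫ φ dμ = ∑ μ (ψ '' Q n) = ∑ μ (Q n) = 1`.

The partition exists because the fibers of `ψ` are countable, being contained in `E`-classes; this
is a case of the Lusin–Novikov theorem (`PsiSmall.univ_of_measurable`). After refining the topology,
`ψ` is continuous. Suppose that `X` is not a countable union of Borel sets on which `ψ` is
injective. Call a sequence of sets thin if, up to a set which is such a countable union, their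
images can be enclosed in Borel sets with empty intersection; the constant sequence `X` is not thin.
A non-thin sequence stays non-thin when one term is replaced by a suitable member of a countable
cover of it (`not_thin_refine`), and when two equal terms are replaced by suitable separated parts
(`not_thin_split`). Repeating these operations, the terms shrink to points `z j`, each of which is a
limit of others. All `z j` lie in the same fiber, since otherwise disjoint open neighbourhoods of
two images would witness thinness. The closure of `{z j}` is thus a nonempty perfect subset of a
fiber, which contradicts countability.
-/

open MeasureTheory ENNReal
open Set Topology

/-! ### Countable-to-one Borel maps are countable unions of injective Borel pieces -/

/-- A set is `ψ`-small if it is covered by countably many measurable sets on each of which `ψ` is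
injective. -/
def PsiSmall {Z Y : Type*} [MeasurableSpace Z] (ψ : Z → Y) (S : Set Z) : Prop :=
  ∃ 𝒜 : Set (Set Z), 𝒜.Countable ∧ (∀ A ∈ 𝒜, MeasurableSet A ∧ InjOn ψ A) ∧ S ⊆ ⋃₀ 𝒜

/-- A sequence of arbitrary sets `D j` is `ψ`-thin if, after discarding a `ψ`-small set, the images
`ψ '' D j` can be enclosed in measurable sets `C j` with empty intersection. -/
def PsiThin {Z Y : Type*} [MeasurableSpace Z] [MeasurableSpace Y] (ψ : Z → Y)
    (D : ℕ → Set Z) : Prop :=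
  ∃ S, PsiSmall ψ S ∧ ∃ C : ℕ → Set Y, (∀ j, MeasurableSet (C j)) ∧
    (∀ j, ∀ z ∈ D j, z ∉ S → ψ z ∈ C j) ∧ ∀ y, ∃ j, y ∉ C j

section Thin

variable {Z Y : Type*} [MeasurableSpace Z] {ψ : Z → Y}

lemma PsiSmall.empty : PsiSmall ψ ∅ := ⟨∅, by simp, by simp, by simp⟩

lemma PsiSmall.iUnion {ι : Type*} [Countable ι] {S : ι → Set Z} (h : ∀ i, PsiSmall ψ (S i)) :
    PsiSmall ψ (⋃ i, S i) := by
  choose 𝒜 h1 h2 h3 using h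
  refine ⟨⋃ i, 𝒜 i, countable_iUnion h1, ?_, ?_⟩
  · intro A hA
    obtain ⟨i, hi⟩ := mem_iUnion.1 hA
    exact h2 i A hi
  · refine iUnion_subset fun i => (h3 i).trans (sUnion_subset_sUnion (subset_iUnion 𝒜 i))

lemma PsiSmall.union_injOn {S M : Set Z} (h : PsiSmall ψ S) (hM : MeasurableSet M)
    (hi : InjOn ψ M) : PsiSmall ψ (S ∪ M) := by
  obtain ⟨𝒜, h1, h2, h3⟩ := h
  refine ⟨insert M 𝒜, h1.insert M, ?_, ?_⟩
  · rintro A (rfl | hA)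
    exacts [⟨hM, hi⟩, h2 A hA]
  · rw [sUnion_insert, union_comm]
    exact union_subset_union_right M h3

variable [MeasurableSpace Y]

/-- If `D j` is covered by countably many sets and `D` is not thin, then `D j` can be replaced by
its intersection with one of them. This is the usual separation argument:
`⋃ i, ψ '' (A i)` and a set `B` are separated once all `ψ '' (A i)` are separated from `B`. -/
lemma not_thin_refine {ι : Type*} [Countable ι] {D : ℕ → Set Z} (hD : ¬ PsiThin ψ D) (j : ℕ)
    (A : ι → Set Z) (hA : D j ⊆ ⋃ i, A i) :
    ∃ i, ¬ PsiThin ψ (Function.update D j (D j ∩ A i)) := by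
  by_contra! hcon
  choose S hS C hC hDC hE using hcon
  apply hD
  refine ⟨⋃ i, S i, PsiSmall.iUnion hS,
    fun k => if k = j then ⋃ i, C i j else ⋂ i, C i k, ?_, ?_, ?_⟩
  · intro k
    dsimp only
    split_ifs
    · exact MeasurableSet.iUnion fun i => hC i j
    · exact MeasurableSet.iInter fun i => hC i k
  · intro k z hz hzS
    simp only [mem_iUnion, not_exists] at hzS
    by_cases hk : k = j
    · subst hk
      obtain ⟨i, hi⟩ := mem_iUnion.1 (hA hz)
      simp only [if_true]
      refine mem_iUnion.2 ⟨i, hDC i k z ?_ (hzS i)⟩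
      simpa using ⟨hz, hi⟩
    · simp only [if_neg hk]
      refine mem_iInter.2 fun i => hDC i k z ?_ (hzS i)
      simpa [Function.update_of_ne hk] using hz
  · intro y
    by_cases hy : ∃ i, y ∈ C i j
    · obtain ⟨i, hi⟩ := hy
      obtain ⟨k, hk⟩ := hE i y
      have hkj : k ≠ j := by rintro rfl; exact hk hi
      refine ⟨k, ?_⟩
      simp only [if_neg hkj, mem_iInter, not_forall]
      exact ⟨i, hk⟩
    · refine ⟨j, ?_⟩
      simpa using hy

lemma not_thin_copy {D : ℕ → Set Z} (hD : ¬ PsiThin ψ D) {j N : ℕ} (hjN : N ≠ j) :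
    ¬ PsiThin ψ (Function.update D N (D j)) := by
  rintro ⟨S, hS, C, hC, hDC, hE⟩
  apply hD
  refine ⟨S, hS, fun k => if k = N then univ else if k = j then C j ∩ C N else C k, ?_, ?_, ?_⟩
  · intro k
    dsimp only
    split_ifs
    exacts [MeasurableSet.univ, (hC j).inter (hC N), hC k]
  · intro k z hz hzS
    dsimp only
    split_ifs with h1 h2
    · trivial
    · subst h2
      exact ⟨hDC k z (by simpa [Function.update_of_ne h1] using hz) hzS,
        hDC N z (by simpa using hz) hzS⟩
    · exact hDC k z (by simpa [Function.update_of_ne h1] using hz) hzS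
  · intro y
    obtain ⟨k, hk⟩ := hE y
    by_cases hkN : k = N
    · exact ⟨j, by simp only [if_neg hjN.symm, if_true]; rintro ⟨-, h⟩; exact hk (hkN ▸ h)⟩
    · refine ⟨k, ?_⟩
      simp only [if_neg hkN]
      split_ifs with h
      · rintro ⟨h', -⟩; exact hk (h ▸ h')
      · exact hk

/-- If two members of a non-thin sequence coincide, one can be cut down by `U p` and the other by
`V p` for some pair `p` of a countable family of pairs separating the points of `Z`. Otherwise the
enclosing sets for the different pairs combine to a measurable set `M` on which `ψ` is injective,
and removing `M` shows that the given sequence is thin. -/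
lemma not_thin_split {ι : Type*} [Countable ι] (hψ : Measurable ψ) {D : ℕ → Set Z}
    (hD : ¬ PsiThin ψ D) {a b : ℕ}
    (hab : b ≠ a) (hDab : D b = D a) (U V : ι → Set Z) (hU : ∀ p, MeasurableSet (U p))
    (hV : ∀ p, MeasurableSet (V p))
    (hUV : ∀ x y, x ≠ y → ∃ p, x ∈ U p ∧ y ∈ V p) :
    ∃ p, ¬ PsiThin ψ (Function.update (Function.update D a (D a ∩ U p)) b (D b ∩ V p)) := by
  by_contra! hcon
  choose S hS C hC hDC hE using hcon
  apply hD
  have hDa : ∀ p, ∀ z ∈ D a, z ∈ U p → z ∉ S p → ψ z ∈ C p a := fun p z hz hzU hzS =>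
    hDC p a z (by simpa [Function.update_of_ne hab.symm] using ⟨hz, hzU⟩) hzS
  have hDb : ∀ p, ∀ z ∈ D a, z ∈ V p → z ∉ S p → ψ z ∈ C p b := fun p z hz hzV hzS =>
    hDC p b z (by simpa [hDab] using ⟨hz, hzV⟩) hzS
  have hDk : ∀ p k, k ≠ a → k ≠ b → ∀ z ∈ D k, z ∉ S p → ψ z ∈ C p k := fun p k hka hkb z hz hzS =>
    hDC p k z (by simpa [Function.update_of_ne hka, Function.update_of_ne hkb] using hz) hzS
  let W : Set Y := ⋂ k, ⋂ (_ : k ≠ a ∧ k ≠ b), ⋂ p, C p k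
  have hW : MeasurableSet W := MeasurableSet.iInter fun k => MeasurableSet.iInter fun _ =>
    MeasurableSet.iInter fun p => hC p k
  let M : Set Z := (⋂ p, ((U p)ᶜ ∪ ψ ⁻¹' (C p a)) ∩ ((V p)ᶜ ∪ ψ ⁻¹' (C p b))) ∩ ψ ⁻¹' W
  have hM : MeasurableSet M :=
    (MeasurableSet.iInter fun p => ((hU p).compl.union (hψ (hC p a))).inter
      ((hV p).compl.union (hψ (hC p b)))).inter (hψ hW)
  have hMi : InjOn ψ M := by
    intro x hx y hy hxy
    by_contra hne
    obtain ⟨p, hxp, hyp⟩ := hUV x y hne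
    obtain ⟨k, hk⟩ := hE p (ψ x)
    have h1 := (mem_iInter.1 hx.1 p).1
    have h2 := (mem_iInter.1 hy.1 p).2
    by_cases hka : k = a
    · subst hka
      exact h1.elim (fun h => h hxp) hk
    by_cases hkb : k = b
    · subst hkb
      exact h2.elim (fun h => h hyp) (fun h => hk (by rw [hxy]; exact h))
    · have h3 := hx.2
      simp only [W, mem_preimage, mem_iInter] at h3
      exact hk (h3 k ⟨hka, hkb⟩ p)
  refine ⟨(⋃ p, S p) ∪ M, (PsiSmall.iUnion hS).union_injOn hM hMi,
    fun k => if k ≠ a ∧ k ≠ b then ⋂ p, C p k else Wᶜ, ?_, ?_, ?_⟩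
  · intro k
    dsimp only
    split_ifs
    exacts [MeasurableSet.iInter fun p => hC p k, hW.compl]
  · intro k z hz hzS
    simp only [mem_union, mem_iUnion, not_or, not_exists] at hzS
    dsimp only
    split_ifs with hk
    · exact mem_iInter.2 fun p => hDk p k hk.1 hk.2 z hz (hzS.1 p)
    · have hz' : z ∈ D a := by
        by_cases hka : k = a
        · exact hka ▸ hz
        · have hkb : k = b := by tauto
          rw [← hDab, ← hkb]; exact hz
      intro hzW
      refine hzS.2 ⟨mem_iInter.2 fun p => ⟨?_, ?_⟩, hzW⟩
      · by_cases h : z ∈ U p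
        · exact Or.inr (hDa p z hz' h (hzS.1 p))
        · exact Or.inl h
      · by_cases h : z ∈ V p
        · exact Or.inr (hDb p z hz' h (hzS.1 p))
        · exact Or.inl h
  · intro y
    by_cases hy : y ∈ W
    · exact ⟨a, by simpa using hy⟩
    · simp only [W, mem_iInter, not_forall] at hy
      obtain ⟨k, hk, p, hp⟩ := hy
      refine ⟨k, ?_⟩
      simp only [if_pos hk, mem_iInter, not_forall]
      exact ⟨p, hp⟩

lemma PsiThin.of_eq_empty {D : ℕ → Set Z} {j : ℕ} (h : D j = ∅) : PsiThin ψ D := by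
  refine ⟨∅, .empty, fun k => if k = j then ∅ else univ, ?_, ?_, fun y => ⟨j, by simp⟩⟩
  · intro k; dsimp only; split_ifs
    exacts [MeasurableSet.empty, MeasurableSet.univ]
  · intro k z hz _
    dsimp only
    split_ifs with hk
    · subst hk; rw [h] at hz; exact hz
    · trivial

lemma PsiSmall.of_thin_univ (h : PsiThin ψ (fun _ => univ)) : PsiSmall ψ univ := by
  obtain ⟨S, hS, C, -, hDC, hE⟩ := h
  have : S = univ := by
    refine eq_univ_of_forall fun z => ?_
    by_contra hz
    obtain ⟨j, hj⟩ := hE (ψ z)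
    exact hj (hDC j z trivial hz)
  exact this ▸ hS

end Thin

section Perfect

variable {Z Y : Type*} [MetricSpace Z] [SecondCountableTopology Z]
  [MeasurableSpace Z] [BorelSpace Z] [TopologicalSpace Y] [MeasurableSpace Y]
  [BorelSpace Y] {ψ : Z → Y}

/-- One step of the construction: `D j` shrinks to a small piece, and a fresh index `i`
receives a nearby piece with disjoint closure. -/
lemma not_thin_step (hψ : Continuous ψ) {D : ℕ → Set Z} (hD : ¬ PsiThin ψ D)
    (hN : ∃ N, ∀ k ≥ N, D k = univ) (j : ℕ) {ε : ℝ} (hε : 0 < ε) :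
    ∃ D' : ℕ → Set Z, ¬ PsiThin ψ D' ∧ (∃ N, ∀ k ≥ N, D' k = univ) ∧ (∀ k, D' k ⊆ D k) ∧
      ∃ i c, Disjoint (closure (D' j)) (closure (D' i)) ∧
        D' j ⊆ Metric.closedBall c ε ∧ D' i ⊆ Metric.closedBall c ε := by
  obtain ⟨N, hN⟩ := hN
  obtain ⟨s, hsc, hsd⟩ := TopologicalSpace.exists_countable_dense Z
  have := hsc.to_subtype
  obtain ⟨c, hc⟩ := not_thin_refine hD j (fun c : s => Metric.closedBall (c : Z) ε) (by
    intro z _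
    obtain ⟨c, hc, hcz⟩ := hsd.exists_dist_lt z hε
    exact mem_iUnion.2 ⟨⟨c, hc⟩, hcz.le⟩)
  set i := max N (j + 1) with hi
  have hij : i ≠ j := by omega
  set D1 := Function.update D j (D j ∩ Metric.closedBall (c : Z) ε) with hD1
  have h2 := not_thin_copy hc hij
  set D2 := Function.update D1 i (D1 j) with hD2
  have hD2ij : D2 i = D2 j := by simp [hD2, Function.update_of_ne hij.symm]
  have hD2j : D2 j = D j ∩ Metric.closedBall (c : Z) ε := by
    simp [hD2, hD1, Function.update_of_ne hij.symm]
  let b := TopologicalSpace.countableBasis Z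
  have hb := TopologicalSpace.isBasis_countableBasis Z
  have : Countable b := (TopologicalSpace.countable_countableBasis Z).to_subtype
  let ι := {p : b × b // Disjoint (closure (p.1 : Set Z)) (closure (p.2 : Set Z))}
  obtain ⟨p, hp⟩ := not_thin_split hψ.measurable h2 hij hD2ij (fun p : ι => (p.1.1 : Set Z))
    (fun p : ι => (p.1.2 : Set Z)) (fun p => (hb.isOpen p.1.1.2).measurableSet)
    (fun p => (hb.isOpen p.1.2.2).measurableSet) (by
      intro x y hxy
      obtain ⟨u, hxu, hu, v, hyv, hv, huv⟩ := exists_open_nhds_disjoint_closure hxy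
      obtain ⟨u', hu', hxu', hu'u⟩ := hb.exists_subset_of_mem_open hxu hu
      obtain ⟨v', hv', hyv', hv'v⟩ := hb.exists_subset_of_mem_open hyv hv
      exact ⟨⟨(⟨u', hu'⟩, ⟨v', hv'⟩), huv.mono (closure_mono hu'u) (closure_mono hv'v)⟩,
        hxu', hyv'⟩)
  set D3 := Function.update (Function.update D2 j (D2 j ∩ p.1.1)) i (D2 i ∩ p.1.2) with hD3
  have hD3j : D3 j = D2 j ∩ p.1.1 := by simp [hD3, Function.update_of_ne hij.symm]
  have hD3i : D3 i = D2 i ∩ p.1.2 := by simp [hD3]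
  have hD3k : ∀ k, k ≠ j → k ≠ i → D3 k = D k := by
    intro k hkj hki
    simp [hD3, hD2, hD1, Function.update_of_ne hkj, Function.update_of_ne hki]
  refine ⟨D3, hp, ⟨i + 1, fun k hk => ?_⟩, fun k => ?_, i, c, ?_, ?_, ?_⟩
  · rw [hD3k k (by omega) (by omega)]
    exact hN k (by omega)
  · by_cases hkj : k = j
    · rw [hkj, hD3j, hD2j]
      exact inter_subset_left.trans inter_subset_left
    by_cases hki : k = i
    · rw [hki, hN i (le_max_left _ _)]
      exact subset_univ _
    · rw [hD3k k hkj hki]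
  · rw [hD3i, hD3j]
    exact p.2.mono (closure_mono inter_subset_right) (closure_mono inter_subset_right)
  · rw [hD3j, hD2j]
    exact inter_subset_left.trans inter_subset_right
  · rw [hD3i, hD2ij, hD2j]
    exact inter_subset_left.trans inter_subset_right

/-- Iterating `not_thin_step` produces points `z j` which all lie in one fiber and each of which is
an accumulation point of the others; the closure of `{z j}` is a nonempty perfect subset of that
fiber, hence uncountable. -/
lemma PsiSmall.univ_of_continuous [CompleteSpace Z] [T2Space Y] (hψ : Continuous ψ)
    (hcount : ∀ y, (ψ ⁻¹' {y}).Countable) : PsiSmall ψ univ := by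
  by_contra hsmall
  have h0 : ¬ PsiThin ψ (fun _ => univ) := fun h => hsmall (.of_thin_univ h)
  let State := {D : ℕ → Set Z // ¬ PsiThin ψ D ∧ ∃ N, ∀ k ≥ N, D k = univ}
  have hstep : ∀ (n : ℕ) (D : State), ∃ D' : State, (∀ k, D'.1 k ⊆ D.1 k) ∧
      ∃ i c, Disjoint (closure (D'.1 n.unpair.1)) (closure (D'.1 i)) ∧
        D'.1 n.unpair.1 ⊆ Metric.closedBall c (1 / ((n : ℝ) + 1)) ∧
        D'.1 i ⊆ Metric.closedBall c (1 / ((n : ℝ) + 1)) := by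
    intro n D
    obtain ⟨D', h1, h2, h3, h4⟩ := not_thin_step hψ D.2.1 D.2.2 n.unpair.1
      (ε := 1 / ((n : ℝ) + 1)) (by positivity)
    exact ⟨⟨D', h1, h2⟩, h3, h4⟩
  choose next hsub hnext using hstep
  let F : ℕ → State := fun n => Nat.rec ⟨fun _ => univ, h0, 0, fun _ _ => rfl⟩ next n
  have hF : ∀ n, F (n + 1) = next n (F n) := fun n => rfl
  have hanti : ∀ k, Antitone fun n => (F n).1 k := fun k =>
    antitone_nat_of_succ_le fun n => by rw [hF]; exact hsub n (F n) k
  have hne : ∀ n k, ((F n).1 k).Nonempty := by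
    intro n k
    by_contra h
    exact (F n).2.1 (.of_eq_empty (not_nonempty_iff_eq_empty.1 h))
  -- Each index is treated at infinitely many stages, so the diameters tend to zero.
  have hsmallball : ∀ j, ∀ ε > 0, ∀ n₀ : ℕ, ∃ n ≥ n₀, ∃ i c,
      Disjoint (closure ((F n).1 j)) (closure ((F n).1 i)) ∧
        (F n).1 j ⊆ Metric.closedBall c ε ∧ (F n).1 i ⊆ Metric.closedBall c ε := by
    intro j ε hε n₀
    obtain ⟨m, hm⟩ := exists_nat_one_div_lt hε
    let n := Nat.pair j (max m n₀)
    have hn : max m n₀ ≤ n := Nat.right_le_pair _ _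
    obtain ⟨i, c, h1, h2, h3⟩ := hnext n (F n)
    have hnj : n.unpair.1 = j := by simp [n]
    rw [hnj, ← hF] at h1 h2
    rw [← hF] at h3
    have hle : 1 / ((n : ℝ) + 1) ≤ ε := by
      refine le_trans ?_ hm.le
      apply one_div_le_one_div_of_le (by positivity)
      have : (m : ℝ) ≤ n := by exact_mod_cast (le_max_left _ _).trans hn
      linarith
    exact ⟨n + 1, ((le_max_right _ _).trans hn).trans (Nat.le_succ _), i, c, h1,
      h2.trans (Metric.closedBall_subset_closedBall hle),
      h3.trans (Metric.closedBall_subset_closedBall hle)⟩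
  have hz : ∀ j, ∃ z, ∀ n, z ∈ closure ((F n).1 j) := by
    intro j
    choose w hw using fun n => hne n j
    have hcau : CauchySeq w := by
      rw [Metric.cauchySeq_iff']
      intro ε hε
      obtain ⟨n, -, i, c, -, h2, -⟩ := hsmallball j (ε / 3) (by positivity) 0
      refine ⟨n, fun k hk => ?_⟩
      have h3 := h2 (hanti j hk (hw k))
      have h4 := h2 (hw n)
      rw [Metric.mem_closedBall] at h3 h4
      have := dist_triangle_right (w k) (w n) c
      linarith
    obtain ⟨z, hz⟩ := cauchySeq_tendsto_of_complete hcau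
    exact ⟨z, fun n => mem_closure_of_tendsto hz
      (Filter.eventually_atTop.2 ⟨n, fun k hk => hanti j hk (hw k)⟩)⟩
  choose z hz using hz
  have hclose : ∀ {n j c ε}, (F n).1 j ⊆ Metric.closedBall c ε → dist (z j) c ≤ ε := fun h =>
    closure_minimal h Metric.isClosed_closedBall (hz _ _)
  have hnhds : ∀ j, ∀ U ∈ 𝓝 (z j), ∃ n₀, ∀ n ≥ n₀, (F n).1 j ⊆ U := by
    intro j U hU
    obtain ⟨ε, hε, hεU⟩ := Metric.mem_nhds_iff.1 hU
    obtain ⟨n, -, i, c, -, h2, -⟩ := hsmallball j (ε / 3) (by positivity) 0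
    refine ⟨n, fun k hk x hx => hεU ?_⟩
    have h3 : dist x c ≤ ε / 3 := h2 (hanti j hk hx)
    have h4 := hclose h2
    have := dist_triangle_right x (z j) c
    rw [Metric.mem_ball]
    linarith
  have hfib : ∀ j, ψ (z j) = ψ (z 0) := by
    intro j
    by_contra hne'
    have hj0 : j ≠ 0 := by rintro rfl; exact hne' rfl
    obtain ⟨O₁, O₂, hO₁, hO₂, h1, h2, hdis⟩ := t2_separation hne'
    obtain ⟨n₁, hn₁⟩ := hnhds j _ (hψ.continuousAt.preimage_mem_nhds (hO₁.mem_nhds h1))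
    obtain ⟨n₂, hn₂⟩ := hnhds 0 _ (hψ.continuousAt.preimage_mem_nhds (hO₂.mem_nhds h2))
    have hn₁ := hn₁ (max n₁ n₂) (le_max_left _ _)
    have hn₂ := hn₂ (max n₁ n₂) (le_max_right _ _)
    refine (F (max n₁ n₂)).2.1 ⟨∅, .empty,
      fun k => if k = j then O₁ else if k = 0 then O₂ else univ, ?_, ?_, ?_⟩
    · intro k; dsimp only; split_ifs
      exacts [hO₁.measurableSet, hO₂.measurableSet, MeasurableSet.univ]
    · intro k x hx _
      dsimp only
      split_ifs with hk hk'
      · subst hk; exact hn₁ hx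
      · subst hk'; exact hn₂ hx
      · trivial
    · intro y
      by_cases hy : y ∈ O₁
      · exact ⟨0, by simpa [hj0.symm] using disjoint_left.1 hdis hy⟩
      · exact ⟨j, by simpa using hy⟩
  have hpre : Preperfect (range z) := by
    rw [preperfect_iff_nhds]
    rintro _ ⟨j, rfl⟩ U hU
    obtain ⟨ε, hε, hεU⟩ := Metric.mem_nhds_iff.1 hU
    obtain ⟨n, -, i, c, h1, h2, h3⟩ := hsmallball j (ε / 3) (by positivity) 0
    refine ⟨z i, ⟨hεU ?_, mem_range_self i⟩, ?_⟩
    · have h4 := hclose h2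
      have h5 := hclose h3
      have := dist_triangle_right (z i) (z j) c
      rw [Metric.mem_ball]
      linarith
    · intro h
      exact disjoint_left.1 h1 (hz j n) (h ▸ hz i n)
  obtain ⟨f, hf, -, hfi⟩ := hpre.perfect_closure.exists_nat_bool_injection
    (range_nonempty z).closure
  have hsubset : closure (range z) ⊆ ψ ⁻¹' {ψ (z 0)} := by
    refine closure_minimal ?_ (isClosed_singleton.preimage hψ)
    rintro _ ⟨j, rfl⟩
    exact hfib j
  have hcr : (range f).Countable := (hcount _).mono (hf.trans hsubset)
  have : Countable (ℕ → Bool) := by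
    have := hcr.to_subtype
    exact (Equiv.ofInjective f hfi).countable_iff.2 this
  obtain ⟨e, he⟩ := exists_surjective_nat (ℕ → Bool)
  obtain ⟨n, hn⟩ := he fun n => !(e n n)
  simpa using congrFun hn n

end Perfect

/-- A countable-to-one Borel map on a Polish space is injective on each of countably many Borel
sets covering the space (a case of the Lusin–Novikov theorem). -/
lemma PsiSmall.univ_of_measurable {X Y : Type*} [TopologicalSpace X] [PolishSpace X]
    [MeasurableSpace X] [BorelSpace X] [TopologicalSpace Y] [T2Space Y]
    [SecondCountableTopology Y] [MeasurableSpace Y] [BorelSpace Y] {ψ : X → Y}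
    (hψ : Measurable ψ) (hcount : ∀ y, (ψ ⁻¹' {y}).Countable) : PsiSmall ψ univ := by
  rename_i t _ mX hX _ _ _ _ _
  have hmX : mX = @borel X t := hX.measurable_eq
  have hpolt : @PolishSpace X t := inferInstance
  obtain ⟨t', ht', hc, hpol⟩ := hψ.exists_continuous
  have hb : @BorelSpace X t' _ := by
    refine @BorelSpace.mk X t' _ ?_
    rw [hmX]
    exact (@borel_eq_borel_of_le X t' t hpol hpolt ht').symm
  let := @TopologicalSpace.upgradeIsCompletelyMetrizable X t' _
  have : @SecondCountableTopology X t' := hpol.toSecondCountableTopology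
  exact PsiSmall.univ_of_continuous hc hcount

/-! ### Invariance of the measure under injective partial maps inside `E` -/

section Invariance

variable {X : Type*} [TopologicalSpace X] [PolishSpace X] [MeasurableSpace X] [BorelSpace X]
  {E : X → X → Prop} {μ : Measure X} {ψ : X → X}

/-- If `ψ` is injective on `B` and `ψ '' B` is disjoint from `B`, then `ψ` and its inverse glue to
an involution of `X` exchanging `B` and `ψ '' B`. -/
lemma measure_image_of_disjoint (hEeq : Equivalence E)
    (hinv : ∀ T : X ≃ᵐ X, (∀ x, E x (T x)) → ∀ B : Set X, MeasurableSet B → μ (T '' B) = μ B)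
    (hψ : Measurable ψ) (hgraph : ∀ x, E x (ψ x)) {B : Set X} (hB : MeasurableSet B)
    (hi : InjOn ψ B) (hd : Disjoint B (ψ '' B)) : μ (ψ '' B) = μ B := by
  classical
  rcases B.eq_empty_or_nonempty with rfl | ⟨x₀, -⟩
  · simp
  have : Nonempty X := ⟨x₀⟩
  have himg : ∀ C, MeasurableSet C → MeasurableSet (ψ '' (B ∩ C)) := fun C hC =>
    (hB.inter hC).image_of_measurable_injOn hψ (hi.mono inter_subset_left)
  let g := Function.invFunOn ψ B
  have hg : ∀ x ∈ B, g (ψ x) = x := fun x hx => hi.leftInvOn_invFunOn hx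
  let T : X → X := fun x => if x ∈ B then ψ x else if x ∈ ψ '' B then g x else x
  have hT1 : ∀ x ∈ B, T x = ψ x := fun x hx => if_pos hx
  have hT2 : ∀ x ∈ B, T (ψ x) = x := fun x hx => by
    have h1 : ψ x ∉ B := disjoint_right.1 hd (mem_image_of_mem ψ hx)
    simp only [T, if_neg h1, if_pos (mem_image_of_mem ψ hx), hg x hx]
  have hT3 : ∀ x, x ∉ B → x ∉ ψ '' B → T x = x := fun x h1 h2 => by
    simp only [T, if_neg h1, if_neg h2]
  have hTinv : Function.Involutive T := by
    intro x
    by_cases h1 : x ∈ B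
    · rw [hT1 x h1, hT2 x h1]
    by_cases h2 : x ∈ ψ '' B
    · obtain ⟨y, hy, rfl⟩ := h2
      rw [hT2 y hy, hT1 y hy]
    · rw [hT3 x h1 h2, hT3 x h1 h2]
  have hTm : Measurable T := by
    intro C hC
    have : T ⁻¹' C = (B ∩ ψ ⁻¹' C) ∪ ψ '' (B ∩ C) ∪ (C \ (B ∪ ψ '' (B ∩ univ))) := by
      ext x
      rw [inter_univ]
      by_cases h1 : x ∈ B
      · have h2 : x ∉ ψ '' (B ∩ C) := fun h =>
          disjoint_left.1 hd h1 (image_mono inter_subset_left h)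
        simp [hT1 x h1, h1, -mem_image, h2]
      by_cases h2 : x ∈ ψ '' B
      · have hiff : T x ∈ C ↔ x ∈ ψ '' (B ∩ C) := by
          obtain ⟨y, hy, rfl⟩ := h2
          rw [hT2 y hy]
          constructor
          · exact fun h => ⟨y, ⟨hy, h⟩, rfl⟩
          · rintro ⟨y', ⟨hy', hC'⟩, he⟩
            rwa [← hi hy' hy he]
        simp [h1, h2, -mem_image, hiff]
      · have h3 : x ∉ ψ '' (B ∩ C) := fun h => h2 (image_mono inter_subset_left h)
        simp [hT3 x h1 h2, h1, h2, h3, -mem_image]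
    rw [this]
    exact ((hB.inter (hψ hC)).union (himg C hC)).union (hC.diff (hB.union (himg _ .univ)))
  have hTE : ∀ x, E x (T x) := by
    intro x
    by_cases h1 : x ∈ B
    · rw [hT1 x h1]; exact hgraph x
    by_cases h2 : x ∈ ψ '' B
    · obtain ⟨y, hy, rfl⟩ := h2
      rw [hT2 y hy]; exact hEeq.symm (hgraph y)
    · rw [hT3 x h1 h2]; exact hEeq.refl x
  have := hinv (MeasurableEquiv.ofInvolutive T hTinv hTm) hTE B hB
  rw [← this]
  congr 1
  exact image_congr fun x hx => (hT1 x hx).symm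

/-- The space is covered by countably many pieces on which `ψ` is injective and preserves
measure: intersect the injective pieces with `{x | ψ x = x}` and with the sets
`V ∩ ψ ⁻¹' Vᶜ`, for `V` in a countable basis. -/
lemma exists_seq_measure_image (hEeq : Equivalence E)
    (hEcount : ∀ x : X, {y | E x y}.Countable)
    (hinv : ∀ T : X ≃ᵐ X, (∀ x, E x (T x)) → ∀ B : Set X, MeasurableSet B → μ (T '' B) = μ B)
    (hψ : Measurable ψ) (hgraph : ∀ x, E x (ψ x)) :
    ∃ P : ℕ → Set X, (∀ n, MeasurableSet (P n) ∧ InjOn ψ (P n) ∧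
      ∀ Q ⊆ P n, MeasurableSet Q → μ (ψ '' Q) = μ Q) ∧ ⋃ n, P n = univ := by
  obtain ⟨𝒜, h𝒜c, h𝒜, hcov⟩ : PsiSmall ψ univ := PsiSmall.univ_of_measurable hψ fun y =>
    (hEcount y).mono fun x (hx : ψ x = y) => hx ▸ hEeq.symm (hgraph x)
  let b := TopologicalSpace.countableBasis X
  have hb := TopologicalSpace.isBasis_countableBasis X
  let ℛ : Set (Set X) := insert {x | ψ x = x} ((fun V => V ∩ ψ ⁻¹' Vᶜ) '' b)
  have hℛc : ℛ.Countable := ((TopologicalSpace.countable_countableBasis X).image _).insert _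
  have hℛm : ∀ R ∈ ℛ, MeasurableSet R := by
    rintro R (rfl | ⟨V, hV, rfl⟩)
    · exact measurableSet_eq_fun hψ measurable_id
    · have := (hb.isOpen hV).measurableSet
      exact this.inter (hψ this.compl)
  have hℛμ : ∀ R ∈ ℛ, ∀ Q ⊆ R, InjOn ψ Q → MeasurableSet Q → μ (ψ '' Q) = μ Q := by
    rintro R (rfl | ⟨V, hV, rfl⟩) Q hQ hQi hQm
    · rw [image_congr (g := id) hQ, image_id]
    · refine measure_image_of_disjoint hEeq hinv hψ hgraph hQm hQi (disjoint_left.2 ?_)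
      rintro _ hx ⟨y, hy, rfl⟩
      exact (hQ hy).2 (hQ hx).1
  have hℛcov : ∀ x, ∃ R ∈ ℛ, x ∈ R := by
    intro x
    by_cases hx : ψ x = x
    · exact ⟨_, mem_insert _ _, hx⟩
    · obtain ⟨V, hV, hxV, hsub⟩ := hb.exists_subset_of_mem_open
        (show x ∈ ({ψ x}ᶜ : Set X) from fun h => hx h.symm) isOpen_compl_singleton
      exact ⟨_, mem_insert_of_mem _ ⟨V, hV, rfl⟩, hxV, fun h => hsub h rfl⟩
  let 𝒢 : Set (Set X) := insert ∅ (image2 (fun A R => A ∩ R) 𝒜 ℛ)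
  obtain ⟨P, hP⟩ : ∃ P : ℕ → Set X, 𝒢 = range P :=
    ((h𝒜c.image2 hℛc _).insert ∅).exists_eq_range (insert_nonempty _ _)
  refine ⟨P, fun n => ?_, eq_univ_of_forall fun x => ?_⟩
  · have : P n ∈ 𝒢 := hP ▸ mem_range_self n
    rcases this with h | ⟨A, hA, R, hR, h⟩
    · rw [h]
      refine ⟨.empty, injOn_empty _, fun Q hQ _ => ?_⟩
      simp [subset_empty_iff.1 hQ]
    · rw [← h]
      refine ⟨(h𝒜 A hA).1.inter (hℛm R hR), (h𝒜 A hA).2.mono inter_subset_left,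
        fun Q hQ hQm => ?_⟩
      exact hℛμ R hR Q (hQ.trans inter_subset_right)
        ((h𝒜 A hA).2.mono (hQ.trans inter_subset_left)) hQm
  · obtain ⟨A, hA, hxA⟩ := hcov (mem_univ x)
    obtain ⟨R, hR, hxR⟩ := hℛcov x
    have : A ∩ R ∈ 𝒢 := mem_insert_of_mem _ ⟨A, hA, R, hR, rfl⟩
    rw [hP] at this
    obtain ⟨n, hn⟩ := this
    exact mem_iUnion.2 ⟨n, hn ▸ ⟨hxA, hxR⟩⟩

end Invariance

/-- If `ψ` is a Borel map whose graph is contained in `E` and whose fiber over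
each `x` has exactly `φ x` elements, and `μ` is `E`-invariant, then `∫ φ dμ = 1`. -/
theorem stmt_2 {X : Type*} [TopologicalSpace X] [PolishSpace X]
    [MeasurableSpace X] [BorelSpace X]
    (E : X → X → Prop) (hEeq : Equivalence E)
    (hEmeas : MeasurableSet {p : X × X | E p.1 p.2})
    (hEcount : ∀ x : X, {y | E x y}.Countable)
    (μ : Measure X) [IsProbabilityMeasure μ]
    (hinv : ∀ T : X ≃ᵐ X, (∀ x, E x (T x)) →
      ∀ B : Set X, MeasurableSet B → μ (T '' B) = μ B)
    (φ : X → ℕ∞) (hφ : Measurable φ)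
    (ψ : X → X) (hψ : Measurable ψ)
    (hgraph : ∀ x : X, E x (ψ x))
    (hfiber : ∀ x : X, (ψ ⁻¹' {x}).encard = φ x) :
    ∫⁻ x, (φ x).toENNReal ∂μ = 1 := by
  obtain ⟨P, hP, hcov⟩ := exists_seq_measure_image hEeq hEcount hinv hψ hgraph
  let Q := disjointed P
  have hQP : ∀ n, Q n ⊆ P n := disjointed_subset P
  have hQm : ∀ n, MeasurableSet (Q n) := fun n => MeasurableSet.disjointed (fun i => (hP i).1) n
  have hQi : ∀ n, InjOn ψ (Q n) := fun n => (hP n).2.1.mono (hQP n)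
  have hQd : Pairwise (Function.onFun Disjoint Q) := disjoint_disjointed P
  have hQu : ⋃ n, Q n = univ := by rw [iUnion_disjointed, hcov]
  have hQψ : ∀ n, MeasurableSet (ψ '' Q n) := fun n =>
    (hQm n).image_of_measurable_injOn hψ (hQi n)
  -- The fiber over `x` meets `Q n` in one point if `x ∈ ψ '' Q n`, and in none otherwise.
  have hφ' : ∀ x, (φ x).toENNReal = ∑' n, (ψ '' Q n).indicator 1 x := by
    intro x
    have hf : MeasurableSet (ψ ⁻¹' {x}) := hψ (measurableSet_singleton x)
    have h1 : ψ ⁻¹' {x} = ⋃ n, ψ ⁻¹' {x} ∩ Q n := by rw [← inter_iUnion, hQu, inter_univ]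
    rw [← hfiber x, ← Measure.count_apply hf, h1, measure_iUnion
      (fun m n hmn => (hQd hmn).mono inter_subset_right inter_subset_right)
      (fun n => hf.inter (hQm n))]
    refine tsum_congr fun n => ?_
    by_cases hx : x ∈ ψ '' Q n
    · rw [indicator_of_mem hx]
      obtain ⟨y, hy, rfl⟩ := hx
      have : ψ ⁻¹' {ψ y} ∩ Q n = {y} := by
        ext w
        constructor
        · rintro ⟨h, hw⟩
          exact hQi n hw hy h
        · rintro rfl
          exact ⟨rfl, hy⟩
      rw [this]
      simp
    · rw [indicator_of_notMem hx]
      have : ψ ⁻¹' {x} ∩ Q n = ∅ := by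
        refine eq_empty_of_forall_notMem ?_
        rintro w ⟨h, hw⟩
        exact hx ⟨w, hw, h⟩
      rw [this]
      simp
  calc ∫⁻ x, (φ x).toENNReal ∂μ = ∫⁻ x, ∑' n, (ψ '' Q n).indicator 1 x ∂μ := by simp_rw [hφ']
    _ = ∑' n, ∫⁻ x, (ψ '' Q n).indicator 1 x ∂μ :=
      lintegral_tsum fun n => (measurable_one.indicator (hQψ n)).aemeasurable
    _ = ∑' n, μ (Q n) := tsum_congr fun n => by
      rw [lintegral_indicator_one (hQψ n), (hP n).2.2 _ (hQP n) (hQm n)]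
    _ = 1 := by rw [← measure_iUnion hQd hQm, hQu, measure_univ]
end

section
/- Let X be a Polish space, E a countable Borel equivalence relation on X, φ : X → ℕ ∪ {∞} a Borel function, and μ an E-ergodic, E-invariant Borel probability measure with ∫ φ dμ = 1. Then there is an E-invariant μ-conull Borel set C ⊆ X and a Borel retraction ψ : C → C ∩ supp(φ) with graph contained in E such that |ψ⁻¹(x)| = φ(x) for all x ∈ C. -/
/-!
Matching zeros of `φ` with surplus mass. Give each `x` in the support of `φ` its `φ x - 1` surplus
slots `(x, i)`, `i + 1 < φ x`. A retraction with the required fibres is the same as a Borel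
bijection, inside `E`, between the zeros of `φ` and the slots. Mean one says precisely that zeros
and slots have equal measure (`measure_zero_eq_slots`).

The relation `E` is a countable union of graphs of Borel partial injections
(`exists_partialInj_cover`), which preserve `μ` because a partial injection with disjoint domain and
range extends to an involutive automorphism (`measure_fst_eq_snd`). Matching greedily along these
partial injections (`exists_greedy_matching`) leaves remainders of equal measure, no unmatched zero
being `E`-related to an unmatched slot. Their saturations are disjoint and invariant, so by
ergodicity one of them is null, hence both remainders are null, and so are their saturations.
Removing these gives `C` (`exists_matching`).

The decomposition of `E` rests on the Lusin–Novikov theorem, `LusinNovikov.small_univ`: a Borel map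
`g : Z → X` with countable fibres is injective on each piece of a countable Borel cover of `Z`. If
not, pass to a finer Polish topology making `g` continuous and consider finite families of basic
open sets. Call a family terminal for a Borel set `Y` if `g` is injective on one of its slices, the
set of points of `Y` in a given member whose fibre meets all members inside `Y`. Slices are
analytic, so by Lusin separation a slice on which `g` is injective has a Borel superset of the same
kind; these countably many supersets can be removed from `Y`. After this removal every nonterminal
family can be refined by splitting any of its members in two (`exists_splitting`). Iterating
produces a Cantor scheme whose branches all lie in one fibre of `g`, which is then uncountable
(`exists_uncountable_fiber`).
-/

open MeasureTheory ENNReal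

/-! ### The Lusin–Novikov theorem -/

namespace LusinNovikov

open Set Filter Topology TopologicalSpace

/-- The points of `V j ∩ Y` whose `g`-fibre meets `V i ∩ Y` for every `i ∈ a`. -/
def slice {Z X : Type*} (g : Z → X) (V : ℕ → Set Z) (a : Finset ℕ) (Y : Set Z) (j : ℕ) : Set Z :=
  {z | z ∈ V j ∧ z ∈ Y ∧ ∀ i ∈ a, ∃ w ∈ V i ∩ Y, g w = g z}

/-- `s` is covered by countably many Borel sets on each of which `g` is injective. -/
def Small {Z X : Type*} [MeasurableSpace Z] (g : Z → X) (s : Set Z) : Prop :=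
  ∃ B : ℕ → Set Z, (∀ n, MeasurableSet (B n)) ∧ (∀ n, InjOn g (B n)) ∧ s ⊆ ⋃ n, B n

/-- The finite family `a` is terminal for `Y` if `g` is injective on one of its slices, so that the
corresponding open set cannot be split into two pieces meeting a common fibre. -/
def Terminal {Z X : Type*} (g : Z → X) (V : ℕ → Set Z) (a : Finset ℕ) (Y : Set Z) : Prop :=
  ∃ j ∈ a, InjOn g (slice g V a Y j)

lemma Small.mono {Z X : Type*} [MeasurableSpace Z] {g : Z → X} {s t : Set Z}
    (ht : Small g t) (h : s ⊆ t) : Small g s := by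
  obtain ⟨B, h1, h2, h3⟩ := ht
  exact ⟨B, h1, h2, h.trans h3⟩

lemma Small.of_injOn {Z X : Type*} [MeasurableSpace Z] {g : Z → X} {s : Set Z}
    (hs : MeasurableSet s) (h : InjOn g s) : Small g s :=
  ⟨fun _ => s, fun _ => hs, fun _ => h, fun _ hx => mem_iUnion.2 ⟨0, hx⟩⟩

lemma Small.iUnion {Z X ι : Type*} [MeasurableSpace Z] [Countable ι] {g : Z → X} {s : ι → Set Z}
    (hs : ∀ i, Small g (s i)) : Small g (⋃ i, s i) := by
  choose B h1 h2 h3 using hs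
  rcases isEmpty_or_nonempty ι with h | h
  · simpa using Small.of_injOn MeasurableSet.empty (injOn_empty g)
  obtain ⟨e, he⟩ := exists_surjective_nat (ι × ℕ)
  refine ⟨fun n => B (e n).1 (e n).2, fun n => h1 _ _, fun n => h2 _ _, ?_⟩
  refine iUnion_subset fun i x hx => ?_
  obtain ⟨m, hm⟩ := mem_iUnion.1 (h3 i hx)
  obtain ⟨n, hn⟩ := he (i, m)
  exact mem_iUnion.2 ⟨n, by simpa [hn] using hm⟩

lemma slice_mono {Z X : Type*} {g : Z → X} {V : ℕ → Set Z} {a : Finset ℕ} {Y Y' : Set Z}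
    (h : Y ⊆ Y') (j : ℕ) : slice g V a Y j ⊆ slice g V a Y' j := by
  rintro z ⟨h1, h2, h3⟩
  refine ⟨h1, h h2, fun i hi => ?_⟩
  obtain ⟨w, hw, e⟩ := h3 i hi
  exact ⟨w, ⟨hw.1, h hw.2⟩, e⟩

lemma Terminal.mono {Z X : Type*} {g : Z → X} {V : ℕ → Set Z} {a : Finset ℕ} {Y Y' : Set Z}
    (h : Y ⊆ Y') (ht : Terminal g V a Y') : Terminal g V a Y := by
  obtain ⟨j, hj, hi⟩ := ht
  exact ⟨j, hj, hi.mono (slice_mono h j)⟩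

/-- By two applications of Lusin separation, an analytic set on which `g` is injective is contained
in a Borel set on which `g` is injective. -/
lemma exists_measurable_injOn_superset {Z X : Type*} [TopologicalSpace Z] [PolishSpace Z]
    [MeasurableSpace Z] [BorelSpace Z] [TopologicalSpace X] [T2Space X]
    {g : Z → X} (hg : Continuous g) {A : Set Z} (hA : AnalyticSet A) (hi : InjOn g A) :
    ∃ B, A ⊆ B ∧ MeasurableSet B ∧ InjOn g B := by
  -- `N S` is the set of points sharing their fibre with another point, the latter in `S`.
  let R : Set (Z × Z) := {p | p.1 ≠ p.2 ∧ g p.1 = g p.2}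
  have hR : MeasurableSet R := by
    apply MeasurableSet.inter
    · exact (isClosed_eq continuous_fst continuous_snd).measurableSet.compl
    · exact (isClosed_eq (hg.comp continuous_fst) (hg.comp continuous_snd)).measurableSet
  let N : Set Z → Set Z := fun S => Prod.snd '' (R ∩ Prod.fst ⁻¹' S)
  have hN : ∀ S, AnalyticSet S → AnalyticSet (N S) := by
    intro S hS
    refine AnalyticSet.image_of_continuous ?_ continuous_snd
    rw [inter_eq_iInter]
    refine AnalyticSet.iInter fun b => ?_
    cases b
    · exact hS.preimage continuous_fst
    · exact hR.analyticSet
  have h1 : Disjoint A (N A) := by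
    rw [Set.disjoint_left]
    rintro z hz ⟨⟨w, z'⟩, ⟨⟨hne, he⟩, hw⟩, rfl⟩
    exact hne (hi hw hz he)
  obtain ⟨B₁, hAB₁, hd₁, hB₁⟩ := hA.measurablySeparable (hN A hA) h1
  have h2 : Disjoint A (N B₁) := by
    rw [Set.disjoint_left]
    rintro z hz ⟨⟨w, z'⟩, ⟨⟨hne, he⟩, hw⟩, rfl⟩
    exact Set.disjoint_left.1 hd₁ ⟨(z', w), ⟨⟨Ne.symm hne, he.symm⟩, hz⟩, rfl⟩ hw
  obtain ⟨B₂, hAB₂, hd₂, hB₂⟩ := hA.measurablySeparable (hN B₁ hB₁.analyticSet) h2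
  refine ⟨B₁ ∩ B₂, subset_inter hAB₁ hAB₂, hB₁.inter hB₂, ?_⟩
  intro z hz w hw he
  by_contra hne
  exact Set.disjoint_left.1 hd₂ ⟨(z, w), ⟨⟨hne, he⟩, hz.1⟩, rfl⟩ hw.2

lemma analyticSet_slice {Z X : Type*} [TopologicalSpace Z] [PolishSpace Z]
    [MeasurableSpace Z] [BorelSpace Z] [TopologicalSpace X] [PolishSpace X] [MeasurableSpace X]
    [BorelSpace X] {g : Z → X} (hg : Continuous g) {V : ℕ → Set Z} (hV : ∀ i, IsOpen (V i))
    (a : Finset ℕ) {Y : Set Z} (hY : MeasurableSet Y) (j : ℕ) : AnalyticSet (slice g V a Y j) := by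
  have h : slice g V a Y j = ⋂ o : Option a,
      o.elim (V j ∩ Y) (fun i => g ⁻¹' (g '' (V i ∩ Y))) := by
    ext z
    simp only [slice, mem_ofPred_eq, mem_iInter, Option.forall, Option.elim_none, mem_inter_iff,
      Option.elim_some, mem_preimage, mem_image, Subtype.forall, and_assoc]
  rw [h]
  refine AnalyticSet.iInter fun o => ?_
  have hVm : ∀ i, MeasurableSet (V i ∩ Y) := fun i => (hV i).measurableSet.inter hY
  cases o with
  | none => exact (hVm j).analyticSet
  | some i => exact ((hVm i).analyticSet_image hg.measurable).preimage hg

/-- If `Z` is not `Small`, there is a notion `P` of good finite family (being nonterminal for a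
suitable Borel set) such that good families exist, any two members of a good family meet a common
fibre, and each member contains two disjoint basic sets of small diameter which can be added to the
family, keeping it good. -/
lemma exists_splitting {Z X : Type*} [MetricSpace Z] [CompleteSpace Z] [SecondCountableTopology Z]
    [MeasurableSpace Z] [BorelSpace Z] [TopologicalSpace X] [PolishSpace X] [MeasurableSpace X]
    [BorelSpace X] {g : Z → X} (hg : Continuous g) {V : ℕ → Set Z}
    (hV : IsTopologicalBasis (range V)) (hns : ¬ Small g univ) :
    ∃ P : Finset ℕ → Prop, (∃ k, P {k}) ∧
      (∀ a, P a → ∀ i ∈ a, ∀ j ∈ a, ∃ z ∈ V i, ∃ w ∈ V j, g z = g w) ∧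
      ∀ a, P a → ∀ j ∈ a, ∀ ε > 0, ∃ k l, closure (V k) ⊆ V j ∧ closure (V l) ⊆ V j ∧
        Disjoint (V k) (V l) ∧ Metric.ediam (V k) ≤ ε ∧ Metric.ediam (V l) ≤ ε ∧
        P (insert k (insert l a)) := by
  classical
  have hVo : ∀ i, IsOpen (V i) := fun i => hV.isOpen (mem_range_self i)
  have hsplit : ∀ (z : Z) (O : Set Z), IsOpen O → z ∈ O → ∀ ε > (0 : ℝ≥0∞),
      ∃ k, z ∈ V k ∧ closure (V k) ⊆ O ∧ Metric.ediam (V k) ≤ ε := by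
    intro z O hO hz ε hε
    obtain ⟨C, hC, hCc, hCO⟩ := exists_mem_nhds_isClosed_subset (hO.mem_nhds hz)
    have hb : C ∩ Metric.eball z (ε / 2) ∈ 𝓝 z :=
      inter_mem hC (Metric.eball_mem_nhds z (ENNReal.half_pos hε.ne'))
    obtain ⟨_, ⟨k, rfl⟩, hzk, hk⟩ := hV.mem_nhds_iff.1 hb
    refine ⟨k, hzk, (closure_minimal (hk.trans inter_subset_left) hCc).trans hCO, ?_⟩
    calc Metric.ediam (V k) ≤ Metric.ediam (Metric.eball z (ε / 2)) :=
          Metric.ediam_mono (hk.trans inter_subset_right)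
      _ ≤ 2 * (ε / 2) := Metric.ediam_eball_le
      _ = ε := ENNReal.mul_div_cancel (by simp) (by simp)
  -- `Y` is co-small and realises every terminality that some co-small Borel set realises.
  obtain ⟨Y, hYm, hYs, hYt⟩ : ∃ Y, MeasurableSet Y ∧ Small g Yᶜ ∧ ∀ a Y', MeasurableSet Y' →
      Small g Y'ᶜ → Terminal g V a Y' → Terminal g V a Y := by
    have : ∀ a, ∃ Y, MeasurableSet Y ∧ Small g Yᶜ ∧ ∀ Y', MeasurableSet Y' →
        Small g Y'ᶜ → Terminal g V a Y' → Terminal g V a Y := by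
      intro a
      by_cases h : ∃ Y', MeasurableSet Y' ∧ Small g Y'ᶜ ∧ Terminal g V a Y'
      · obtain ⟨Y', h1, h2, h3⟩ := h
        exact ⟨Y', h1, h2, fun _ _ _ _ => h3⟩
      · refine ⟨univ, MeasurableSet.univ, ?_, fun Y' h1 h2 h3 => (h ⟨Y', h1, h2, h3⟩).elim⟩
        simpa using Small.of_injOn MeasurableSet.empty (injOn_empty g)
    choose Y h1 h2 h3 using this
    refine ⟨⋂ a, Y a, MeasurableSet.iInter h1, ?_, ?_⟩
    · rw [compl_iInter]
      exact Small.iUnion h2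
    · exact fun a Y' hm hs ht => (h3 a Y' hm hs ht).mono (iInter_subset _ a)
  have hB : ∀ a : {a // Terminal g V a Y}, ∃ B, MeasurableSet B ∧ InjOn g B ∧
      ∃ j ∈ a.1, slice g V a Y j ⊆ B := by
    rintro ⟨a, j, hj, hi⟩
    obtain ⟨B, h1, h2, h3⟩ :=
      exists_measurable_injOn_superset hg (analyticSet_slice hg hVo a hYm j) hi
    exact ⟨B, h2, h3, j, hj, h1⟩
  choose B hBm hBi hBs using hB
  let Y' : Set Z := Y \ ⋃ a, B a
  have hY'Y : Y' ⊆ Y := sdiff_subset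
  have hY'm : MeasurableSet Y' := hYm.diff (MeasurableSet.iUnion hBm)
  have hY's : Small g Y'ᶜ := by
    have h : Y'ᶜ ⊆ ⋃ b : Bool, bif b then Yᶜ else ⋃ a, B a := by
      intro z hz
      by_cases h : z ∈ Y
      · refine mem_iUnion.2 ⟨false, ?_⟩
        by_contra h'
        exact hz ⟨h, h'⟩
      · exact mem_iUnion.2 ⟨true, h⟩
    refine Small.mono (Small.iUnion fun b => ?_) h
    cases b
    · exact Small.iUnion fun a => Small.of_injOn (hBm a) (hBi a)
    · exact hYs
  -- A family all of whose members meet a single fibre inside `Y'` is nonterminal.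
  have key : ∀ (a : Finset ℕ) (x : X), (∀ i ∈ a, ∃ w ∈ V i ∩ Y', g w = x) →
      ¬ Terminal g V a Y := by
    intro a x hx ht
    obtain ⟨j, hj, hjs⟩ := hBs ⟨a, ht⟩
    obtain ⟨w, hw, rfl⟩ := hx j hj
    have : w ∈ slice g V a Y j := slice_mono hY'Y j ⟨hw.1, hw.2, hx⟩
    exact hw.2.2 (mem_iUnion.2 ⟨_, hjs this⟩)
  refine ⟨fun a => ¬ Terminal g V a Y, ?_, ?_, ?_⟩
  · obtain ⟨z, hz⟩ : Y'.Nonempty := by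
      by_contra h
      rw [not_nonempty_iff_eq_empty] at h
      rw [h, compl_empty] at hY's
      exact hns hY's
    obtain ⟨k, hk, -, -⟩ := hsplit z univ isOpen_univ trivial 1 one_pos
    refine ⟨k, key _ (g z) fun i hi => ⟨z, ⟨?_, hz⟩, rfl⟩⟩
    rwa [Finset.mem_singleton.1 hi]
  · intro a ha i hi j hj
    have : ¬ InjOn g (slice g V a Y i) := fun h => ha ⟨i, hi, h⟩
    have hne : (slice g V a Y i).Nonempty := by
      by_contra h
      rw [not_nonempty_iff_eq_empty] at h
      exact this (h ▸ injOn_empty g)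
    obtain ⟨z, hz, -, h⟩ := hne
    obtain ⟨w, hw, e⟩ := h j hj
    exact ⟨z, hz, w, hw.1, e.symm⟩
  · intro a ha j hj ε hε
    have h : ¬ InjOn g (slice g V a Y' j) := fun h => ha (hYt a Y' hY'm hY's ⟨j, hj, h⟩)
    simp only [InjOn, not_forall] at h
    obtain ⟨z, hz, w, hw, he, hne⟩ := h
    obtain ⟨O₁, O₂, hO₁, hO₂, hzO, hwO, hd⟩ := t2_separation hne
    obtain ⟨k, hk, hkc, hkd⟩ := hsplit z (V j ∩ O₁) ((hVo j).inter hO₁) ⟨hz.1, hzO⟩ ε hε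
    obtain ⟨l, hl, hlc, hld⟩ := hsplit w (V j ∩ O₂) ((hVo j).inter hO₂) ⟨hw.1, hwO⟩ ε hε
    refine ⟨k, l, hkc.trans inter_subset_left, hlc.trans inter_subset_left,
      hd.mono ((subset_closure.trans hkc).trans inter_subset_right)
        ((subset_closure.trans hlc).trans inter_subset_right), hkd, hld, key _ (g z) ?_⟩
    intro i hi
    rw [Finset.mem_insert, Finset.mem_insert] at hi
    rcases hi with rfl | rfl | hi
    · exact ⟨z, ⟨hk, hz.2.1⟩, rfl⟩
    · exact ⟨w, ⟨hl, hw.2.1⟩, he.symm⟩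
    · exact hz.2.2 i hi

/-- Bookkeeping: iterating the splittings gives a countable family, any two members of which meet a
common fibre, and in which every member is split at every scale. -/
lemma exists_closed_family {Z X : Type*} [MetricSpace Z] {g : Z → X} {V : ℕ → Set Z}
    {P : Finset ℕ → Prop} (h0 : ∃ k, P {k})
    (h1 : ∀ a, P a → ∀ i ∈ a, ∀ j ∈ a, ∃ z ∈ V i, ∃ w ∈ V j, g z = g w)
    (h2 : ∀ a, P a → ∀ j ∈ a, ∀ ε > (0 : ℝ≥0∞), ∃ k l, closure (V k) ⊆ V j ∧ closure (V l) ⊆ V j ∧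
        Disjoint (V k) (V l) ∧ Metric.ediam (V k) ≤ ε ∧ Metric.ediam (V l) ≤ ε ∧
        P (insert k (insert l a))) :
    ∃ S : Set ℕ, S.Nonempty ∧ (∀ i ∈ S, ∀ j ∈ S, ∃ z ∈ V i, ∃ w ∈ V j, g z = g w) ∧
      ∀ j ∈ S, ∀ m : ℕ, ∃ k ∈ S, ∃ l ∈ S, closure (V k) ⊆ V j ∧ closure (V l) ⊆ V j ∧
        Disjoint (V k) (V l) ∧ Metric.ediam (V k) ≤ ((m : ℝ≥0∞) + 1)⁻¹ ∧
        Metric.ediam (V l) ≤ ((m : ℝ≥0∞) + 1)⁻¹ := by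
  classical
  obtain ⟨k₀, hk₀⟩ := h0
  have hpos : ∀ m : ℕ, (0 : ℝ≥0∞) < ((m : ℝ≥0∞) + 1)⁻¹ := fun m => by
    rw [ENNReal.inv_pos]
    exact ENNReal.add_ne_top.2 ⟨ENNReal.natCast_ne_top m, ENNReal.one_ne_top⟩
  have step : ∀ (a : {a // P a}) (n : ℕ), ∃ b : {a // P a}, a.1 ⊆ b.1 ∧ (n.unpair.1 ∈ a.1 →
      ∃ k ∈ b.1, ∃ l ∈ b.1, closure (V k) ⊆ V n.unpair.1 ∧ closure (V l) ⊆ V n.unpair.1 ∧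
        Disjoint (V k) (V l) ∧ Metric.ediam (V k) ≤ ((n.unpair.2 : ℝ≥0∞) + 1)⁻¹ ∧
        Metric.ediam (V l) ≤ ((n.unpair.2 : ℝ≥0∞) + 1)⁻¹) := by
    rintro ⟨a, ha⟩ n
    by_cases hn : n.unpair.1 ∈ a
    · obtain ⟨k, l, q1, q2, q3, q4, q5, q6⟩ := h2 a ha _ hn _ (hpos n.unpair.2)
      refine ⟨⟨_, q6⟩, fun i hi => by simp [hi], fun _ => ⟨k, by simp, l, by simp, q1, q2, q3, q4, q5⟩⟩
    · exact ⟨⟨a, ha⟩, subset_rfl, fun h => (hn h).elim⟩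
  choose f hf1 hf2 using step
  let a : ℕ → {a // P a} := fun n => Nat.rec ⟨{k₀}, hk₀⟩ (fun n b => f b n) n
  have hmono : Monotone fun n => (a n).1 := monotone_nat_of_le_succ fun n => hf1 (a n) n
  refine ⟨⋃ n, ((a n).1 : Set ℕ), ⟨k₀, mem_iUnion.2 ⟨0, by simp [a]⟩⟩, ?_, ?_⟩
  · intro i hi j hj
    obtain ⟨n, hn⟩ := mem_iUnion.1 hi
    obtain ⟨m, hm⟩ := mem_iUnion.1 hj
    exact h1 _ (a (max n m)).2 i (hmono (le_max_left n m) hn) j (hmono (le_max_right n m) hm)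
  · intro j hj m
    obtain ⟨n, hn⟩ := mem_iUnion.1 hj
    -- stage `pair j (max n m)` comes after `n`, and treats the member `j` at a scale below `m`
    let N := Nat.pair j (max n m)
    have hN : N.unpair = (j, max n m) := Nat.unpair_pair _ _
    have hnN : n ≤ N := (le_max_left n m).trans (Nat.right_le_pair _ _)
    obtain ⟨k, hk, l, hl, q1, q2, q3, q4, q5⟩ := hf2 (a N) N (by rw [hN]; exact hmono hnN hn)
    rw [hN] at q1 q2 q4 q5
    have hle : (((max n m : ℕ) : ℝ≥0∞) + 1)⁻¹ ≤ ((m : ℝ≥0∞) + 1)⁻¹ := by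
      gcongr
      exact le_max_right n m
    exact ⟨k, mem_iUnion.2 ⟨N + 1, hk⟩, l, mem_iUnion.2 ⟨N + 1, hl⟩, q1, q2, q3,
      q4.trans hle, q5.trans hle⟩

/-- A family as in `exists_closed_family` supports a Cantor scheme whose induced map sends the
Cantor space injectively into one fibre of `g`. -/
lemma exists_uncountable_fiber {Z X : Type*} [MetricSpace Z] [CompleteSpace Z]
    [TopologicalSpace X] [T2Space X] {g : Z → X} (hg : Continuous g) {V : ℕ → Set Z}
    {S : Set ℕ} (hne : S.Nonempty) (h1 : ∀ i ∈ S, ∀ j ∈ S, ∃ z ∈ V i, ∃ w ∈ V j, g z = g w)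
    (h2 : ∀ j ∈ S, ∀ m : ℕ, ∃ k ∈ S, ∃ l ∈ S, closure (V k) ⊆ V j ∧ closure (V l) ⊆ V j ∧
        Disjoint (V k) (V l) ∧ Metric.ediam (V k) ≤ ((m : ℝ≥0∞) + 1)⁻¹ ∧
        Metric.ediam (V l) ≤ ((m : ℝ≥0∞) + 1)⁻¹) :
    ∃ x, ¬ (g ⁻¹' {x}).Countable := by
  have h2' : ∀ (j : S) (m : ℕ), ∃ c : Bool → S, (∀ b, closure (V (c b)) ⊆ V j) ∧
      Disjoint (V (c false)) (V (c true)) ∧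
      ∀ b, Metric.ediam (V (c b)) ≤ ((m : ℝ≥0∞) + 1)⁻¹ := by
    rintro ⟨j, hj⟩ m
    obtain ⟨k, hk, l, hl, q1, q2, q3, q4, q5⟩ := h2 j hj m
    refine ⟨fun b => bif b then ⟨l, hl⟩ else ⟨k, hk⟩, ?_, q3, ?_⟩
    · intro b; cases b <;> assumption
    · intro b; cases b <;> assumption
  choose c hc1 hc2 hc3 using h2'
  obtain ⟨j₀, hj₀⟩ := hne
  let D : List Bool → S := fun s => List.rec ⟨j₀, hj₀⟩ (fun b t d => c d t.length b) s
  have hD : ∀ b t, D (b :: t) = c (D t) t.length b := fun _ _ => rfl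
  let A : List Bool → Set Z := fun s => V (D s).1
  have hanti : CantorScheme.ClosureAntitone A := fun l b => by
    simp only [A, hD]
    exact hc1 _ _ b
  have hdisj : CantorScheme.Disjoint A := by
    intro l a b hab
    have := hc2 (D l) l.length
    simp only [A, hD]
    cases a <;> cases b <;> first | exact (hab rfl).elim | exact this | exact this.symm
  have hdiam : CantorScheme.VanishingDiam A := by
    intro x
    rw [← tendsto_add_atTop_iff_nat 1]
    have hlim : Tendsto (fun n : ℕ => ((n : ℝ≥0∞) + 1)⁻¹) atTop (𝓝 0) := by
      have := (tendsto_add_atTop_iff_nat 1).2 ENNReal.tendsto_inv_nat_nhds_zero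
      simpa using this
    refine tendsto_of_tendsto_of_tendsto_of_le_of_le tendsto_const_nhds hlim
      (fun _ => zero_le) fun n => ?_
    have := hc3 (D (PiNat.res x n)) (PiNat.res x n).length (x n)
    rw [PiNat.res_length] at this
    simpa only [A, PiNat.res_succ, hD, PiNat.res_length] using this
  have hnon : ∀ l, (A l).Nonempty := fun l => by
    obtain ⟨z, hz, -⟩ := h1 _ (D l).2 _ (D l).2
    exact ⟨z, hz⟩
  have huniv := hanti.map_of_vanishingDiam hdiam hnon
  let F : (ℕ → Bool) → Z := fun x => (CantorScheme.inducedMap A).2 ⟨x, huniv ▸ mem_univ x⟩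
  have hF : Function.Injective F := fun x y hxy => by
    simpa using congrArg Subtype.val (hdisj.map_injective hxy)
  have hFm : ∀ x n, F x ∈ A (PiNat.res x n) := fun x n => CantorScheme.map_mem _ n
  -- points of `A (res x n)` converge to `F x`, and the sets at level `n` meet a common fibre
  have hconst : ∀ x y, g (F x) = g (F y) := by
    intro x y
    have hzw : ∀ n, ∃ z ∈ A (PiNat.res x n), ∃ w ∈ A (PiNat.res y n), g z = g w :=
      fun n => h1 _ (D _).2 _ (D _).2
    choose z hz w hw he using hzw
    have hlim : ∀ (x : ℕ → Bool) (z : ℕ → Z), (∀ n, z n ∈ A (PiNat.res x n)) →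
        Tendsto z atTop (𝓝 (F x)) := by
      intro x z hz
      rw [tendsto_iff_edist_tendsto_0]
      exact tendsto_of_tendsto_of_tendsto_of_le_of_le tendsto_const_nhds (hdiam x)
        (fun _ => zero_le) fun n => Metric.edist_le_ediam_of_mem (hz n) (hFm x n)
    have t1 := (hg.tendsto _).comp (hlim x z hz)
    have t2 := (hg.tendsto _).comp (hlim y w hw)
    refine tendsto_nhds_unique t1 (t2.congr fun n => ?_)
    exact (he n).symm
  refine ⟨g (F fun _ => true), fun hcount => ?_⟩
  have hpre := hcount.preimage hF
  have huniv' : F ⁻¹' (g ⁻¹' {g (F fun _ => true)}) = univ :=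
    eq_univ_of_forall fun x => hconst x _
  rw [huniv', countable_univ_iff, ← Cardinal.mk_le_aleph0_iff] at hpre
  refine absurd hpre (not_le.2 ?_)
  simpa using Cardinal.cantor Cardinal.aleph0

lemma small_univ_of_continuous {Z X : Type*} [TopologicalSpace Z] [PolishSpace Z]
    [MeasurableSpace Z] [BorelSpace Z] [TopologicalSpace X] [PolishSpace X] [MeasurableSpace X]
    [BorelSpace X] {g : Z → X} (hg : Continuous g) (hc : ∀ x, (g ⁻¹' {x}).Countable) :
    Small g univ := by
  let := upgradeIsCompletelyMetrizable Z
  rcases isEmpty_or_nonempty Z with hZ | hZ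
  · exact Small.of_injOn MeasurableSet.univ (Function.injective_of_subsingleton g).injOn
  by_contra hns
  obtain ⟨V, hV⟩ : ∃ V : ℕ → Set Z, IsTopologicalBasis (range V) := by
    obtain ⟨b, hb, -, hbas⟩ := exists_countable_basis Z
    have hbne : b.Nonempty := by
      obtain ⟨u, hu, -⟩ := hbas.mem_nhds_iff.1 (univ_mem : univ ∈ 𝓝 hZ.some)
      exact ⟨u, hu⟩
    obtain ⟨V, rfl⟩ := hb.exists_eq_range hbne
    exact ⟨V, hbas⟩
  obtain ⟨P, h0, h1, h2⟩ := exists_splitting hg hV hns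
  obtain ⟨S, hS, q1, q2⟩ := exists_closed_family h0 h1 h2
  obtain ⟨x, hx⟩ := exists_uncountable_fiber hg hS q1 q2
  exact hx (hc x)

/-- **Lusin–Novikov**: for a Borel map with countable fibres between standard Borel spaces, the
domain has a countable Borel cover on each piece of which the map is injective. -/
theorem small_univ {Z X : Type*} [MeasurableSpace Z] [StandardBorelSpace Z] [MeasurableSpace X]
    [StandardBorelSpace X] {g : Z → X} (hg : Measurable g)
    (hc : ∀ x, (g ⁻¹' {x}).Countable) : Small g univ := by
  let := upgradeStandardBorel X
  let tZ := upgradeStandardBorel Z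
  obtain ⟨t', hle, hcont, hpol⟩ := hg.exists_continuous
  have hbor : @BorelSpace Z t' _ :=
    ⟨(eq_borel_upgradeStandardBorel Z).trans
      (borel_eq_borel_of_le hpol tZ.toPolishSpace hle).symm⟩
  exact @small_univ_of_continuous Z X t' hpol _ hbor _ _ _ _ g hcont hc

end LusinNovikov

/-! ### Partial injections and invariant measures -/

namespace PmpMatching

open Set

/-- `M` is the graph of a Borel injection between subsets of `X` and `W`. -/
structure PartialInj {X W : Type*} [MeasurableSpace X] [MeasurableSpace W] (M : Set (X × W)) :
    Prop where
  meas : MeasurableSet M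
  fst : InjOn Prod.fst M
  snd : InjOn Prod.snd M

lemma PartialInj.mono {X W : Type*} [MeasurableSpace X] [MeasurableSpace W] {M N : Set (X × W)}
    (h : PartialInj M) (hN : MeasurableSet N) (hs : N ⊆ M) : PartialInj N :=
  ⟨hN, h.fst.mono hs, h.snd.mono hs⟩

/-- Countable additivity of `M ↦ μ (f '' M)` along injective Borel `f`, by Lusin–Souslin. -/
lemma measure_image_eq_tsum {Z X : Type*} [MeasurableSpace Z] [StandardBorelSpace Z]
    [MeasurableSpace X] [StandardBorelSpace X] (μ : Measure X) {f : Z → X} (hf : Measurable f)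
    {M : Set Z} (hM : MeasurableSet M) (hi : InjOn f M) {s : ℕ → Set Z}
    (hs : ∀ n, MeasurableSet (s n)) (hd : Pairwise (Function.onFun Disjoint s))
    (hc : M ⊆ ⋃ n, s n) : μ (f '' M) = ∑' n, μ (f '' (M ∩ s n)) := by
  have h : f '' M = ⋃ n, f '' (M ∩ s n) := by
    rw [← image_iUnion, ← inter_iUnion, inter_eq_left.2 hc]
  rw [h, measure_iUnion]
  · intro m n hmn
    refine Set.disjoint_left.2 ?_
    rintro _ ⟨p, hp, rfl⟩ ⟨q, hq, e⟩
    exact Set.disjoint_left.1 (hd hmn) hp.2 (hi hq.1 hp.1 e ▸ hq.2)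
  · exact fun n => (hM.inter (hs n)).image_of_measurable_injOn hf (hi.mono inter_subset_left)

variable {X W : Type*} [MeasurableSpace X] [StandardBorelSpace X] [MeasurableSpace W]
  [StandardBorelSpace W]

lemma PartialInj.measurableSet_fst {M : Set (X × W)} (h : PartialInj M) :
    MeasurableSet (Prod.fst '' M) :=
  h.meas.image_of_measurable_injOn measurable_fst h.fst

lemma PartialInj.measurableSet_snd {M : Set (X × W)} (h : PartialInj M) :
    MeasurableSet (Prod.snd '' M) :=
  h.meas.image_of_measurable_injOn measurable_snd h.snd

/-- A function with Borel graph is Borel, as preimages are injective projections. -/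
lemma measurable_of_graph {t : X → W} (h : MeasurableSet {p : X × W | t p.1 = p.2}) :
    Measurable t := by
  intro B hB
  have : t ⁻¹' B = Prod.fst '' ({p : X × W | t p.1 = p.2} ∩ Prod.snd ⁻¹' B) := by
    ext x
    constructor
    · exact fun hx => ⟨(x, t x), ⟨rfl, hx⟩, rfl⟩
    · rintro ⟨⟨x, y⟩, ⟨h, hy⟩, rfl⟩
      have h : t x = y := h
      simpa [h] using hy
  rw [this]
  refine (h.inter (measurable_snd hB)).image_of_measurable_injOn measurable_fst ?_
  rintro ⟨x, y⟩ ⟨h1, -⟩ ⟨x', y'⟩ ⟨h2, -⟩ rfl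
  exact Prod.ext rfl (h1.symm.trans h2)

/-- A countable Borel equivalence relation is a countable union of graphs of partial injections. -/
lemma exists_partialInj_cover {E : X → X → Prop} (hEeq : Equivalence E)
    (hEmeas : MeasurableSet {p : X × X | E p.1 p.2}) (hEcount : ∀ x : X, {y | E x y}.Countable) :
    ∃ F : ℕ → Set (X × X), (∀ n, PartialInj (F n)) ∧ ⋃ n, F n = {p : X × X | E p.1 p.2} := by
  have := hEmeas.standardBorel
  let Z := {p : X × X | E p.1 p.2}
  obtain ⟨B₁, m₁, i₁, c₁⟩ := LusinNovikov.small_univ (Z := Z) (g := fun p => p.1.1)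
    (measurable_fst.comp measurable_subtype_coe) (fun x => by
      refine MapsTo.countable_of_injOn (f := fun p : Z => p.1.2) ?_ ?_ (hEcount x)
      · rintro ⟨⟨a, b⟩, h⟩ rfl
        exact h
      · rintro ⟨⟨a, b⟩, h⟩ rfl ⟨⟨a', b'⟩, h'⟩ e e'
        exact Subtype.ext (Prod.ext e.symm e'))
  obtain ⟨B₂, m₂, i₂, c₂⟩ := LusinNovikov.small_univ (Z := Z) (g := fun p => p.1.2)
    (measurable_snd.comp measurable_subtype_coe) (fun x => by
      refine MapsTo.countable_of_injOn (f := fun p : Z => p.1.1) ?_ ?_ (hEcount x)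
      · rintro ⟨⟨a, b⟩, h⟩ rfl
        exact hEeq.symm h
      · rintro ⟨⟨a, b⟩, h⟩ rfl ⟨⟨a', b'⟩, h'⟩ e e'
        exact Subtype.ext (Prod.ext e' e.symm))
  refine ⟨fun n => Subtype.val '' (B₁ n.unpair.1 ∩ B₂ n.unpair.2), fun n => ⟨?_, ?_, ?_⟩, ?_⟩
  · exact (MeasurableEmbedding.subtype_coe hEmeas).measurableSet_image.2 ((m₁ _).inter (m₂ _))
  · rintro _ ⟨p, hp, rfl⟩ _ ⟨q, hq, rfl⟩ e
    exact congrArg _ (i₁ _ hp.1 hq.1 e)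
  · rintro _ ⟨p, hp, rfl⟩ _ ⟨q, hq, rfl⟩ e
    exact congrArg _ (i₂ _ hp.2 hq.2 e)
  · ext p
    rw [mem_iUnion]
    constructor
    · rintro ⟨n, q, -, rfl⟩
      exact q.2
    · intro hp
      obtain ⟨k, hk⟩ := mem_iUnion.1 (c₁ (mem_univ ⟨p, hp⟩))
      obtain ⟨l, hl⟩ := mem_iUnion.1 (c₂ (mem_univ ⟨p, hp⟩))
      exact ⟨Nat.pair k l, ⟨p, hp⟩, by simpa using ⟨hk, hl⟩, rfl⟩

/-- If the domain and range of a partial injection inside `E` are disjoint, swapping them is an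
automorphism, so they have equal measure. -/
lemma measure_fst_eq_snd_of_disjoint {E : X → X → Prop} (hEeq : Equivalence E) {μ : Measure X}
    (hinv : ∀ T : X ≃ᵐ X, (∀ x, E x (T x)) → ∀ B : Set X, MeasurableSet B → μ (T '' B) = μ B)
    {M : Set (X × X)} (hM : PartialInj M) (hME : ∀ p ∈ M, E p.1 p.2)
    (hd : Disjoint (Prod.fst '' M) (Prod.snd '' M)) :
    μ (Prod.fst '' M) = μ (Prod.snd '' M) := by
  let R : X → X → Prop := fun x y =>
    (x, y) ∈ M ∨ (y, x) ∈ M ∨ (x = y ∧ x ∉ Prod.fst '' M ∧ x ∉ Prod.snd '' M)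
  have hRs : ∀ x y, R x y → R y x := by
    rintro x y (h | h | ⟨rfl, h⟩)
    · exact Or.inr (Or.inl h)
    · exact Or.inl h
    · exact Or.inr (Or.inr ⟨rfl, h⟩)
  have hdis : ∀ {x y z}, (x, y) ∈ M → (z, x) ∈ M → False := fun h h' =>
    Set.disjoint_left.1 hd ⟨_, h, rfl⟩ ⟨_, h', rfl⟩
  have hRu : ∀ x y z, R x y → R x z → y = z := by
    rintro x y z (h | h | ⟨rfl, h, h'⟩) (k | k | ⟨rfl, k, k'⟩)
    · exact congrArg Prod.snd (hM.fst h k rfl)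
    · exact (hdis h k).elim
    · exact (k ⟨_, h, rfl⟩).elim
    · exact (hdis k h).elim
    · exact congrArg Prod.fst (hM.snd h k rfl)
    · exact (k' ⟨_, h, rfl⟩).elim
    · exact (h ⟨_, k, rfl⟩).elim
    · exact (h' ⟨_, k, rfl⟩).elim
    · rfl
  have hRe : ∀ x, ∃ y, R x y := by
    intro x
    by_cases h1 : x ∈ Prod.fst '' M
    · obtain ⟨⟨x, y⟩, h, rfl⟩ := h1
      exact ⟨y, Or.inl h⟩
    by_cases h2 : x ∈ Prod.snd '' M
    · obtain ⟨⟨y, x⟩, h, rfl⟩ := h2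
      exact ⟨y, Or.inr (Or.inl h)⟩
    exact ⟨x, Or.inr (Or.inr ⟨rfl, h1, h2⟩)⟩
  choose t ht using hRe
  have htt : ∀ x, t (t x) = x := fun x => hRu (t x) _ _ (ht _) (hRs _ _ (ht x))
  have htm : Measurable t := by
    apply measurable_of_graph
    have : {p : X × X | t p.1 = p.2} = M ∪ (Prod.swap ⁻¹' M ∪
        (diagonal X ∩ (Prod.fst ⁻¹' (Prod.fst '' M)ᶜ ∩ Prod.fst ⁻¹' (Prod.snd '' M)ᶜ))) := by
      ext ⟨x, y⟩
      change t x = y ↔ R x y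
      exact ⟨fun h => h ▸ ht x, fun h => hRu _ _ _ (ht x) h⟩
    rw [this]
    exact hM.meas.union ((measurable_swap hM.meas).union (measurableSet_diagonal.inter
      ((measurable_fst hM.measurableSet_fst.compl).inter
        (measurable_fst hM.measurableSet_snd.compl))))
  let T : X ≃ᵐ X := ⟨⟨t, t, htt, htt⟩, htm, htm⟩
  have hT : T '' (Prod.fst '' M) = Prod.snd '' M := by
    ext y
    constructor
    · rintro ⟨_, ⟨⟨x, z⟩, h, rfl⟩, rfl⟩
      exact ⟨(x, z), h, (hRu _ _ _ (ht x) (Or.inl h)).symm⟩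
    · rintro ⟨⟨x, y⟩, h, rfl⟩
      exact ⟨x, ⟨_, h, rfl⟩, hRu _ _ _ (ht x) (Or.inl h)⟩
  rw [← hT, hinv T ?_ _ hM.measurableSet_fst]
  intro x
  rcases ht x with h | h | ⟨h, -⟩
  · exact hME _ h
  · exact hEeq.symm (hME _ h)
  · change E x (t x)
    rw [← h]
    exact hEeq.refl x

/-- Invariance under automorphisms passes to partial injections inside `E`: away from the diagonal
these decompose into pieces with disjoint domain and range. -/
lemma measure_fst_eq_snd {E : X → X → Prop} (hEeq : Equivalence E) {μ : Measure X}
    (hinv : ∀ T : X ≃ᵐ X, (∀ x, E x (T x)) → ∀ B : Set X, MeasurableSet B → μ (T '' B) = μ B)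
    {M : Set (X × X)} (hM : PartialInj M) (hME : ∀ p ∈ M, E p.1 p.2) :
    μ (Prod.fst '' M) = μ (Prod.snd '' M) := by
  have hsep : HasCountableSeparatingOn X MeasurableSet univ :=
    MeasurableSpace.CountablySeparated.countably_separated
  obtain ⟨S, hS, hSs⟩ := exists_seq_separating X MeasurableSet.empty univ
  let U : ℕ → Set X := fun n =>
    bif (Equiv.boolProdNatEquivNat.symm n).1 then S (Equiv.boolProdNatEquivNat.symm n).2
    else (S (Equiv.boolProdNatEquivNat.symm n).2)ᶜ
  have hU : ∀ n, MeasurableSet (U n) := by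
    intro n
    simp only [U]
    cases (Equiv.boolProdNatEquivNat.symm n).1
    · exact (hS _).compl
    · exact hS _
  let t : ℕ → Set (X × X) := fun n => Nat.casesOn n (diagonal X) (fun k => U k ×ˢ (U k)ᶜ)
  have ht : ∀ n, MeasurableSet (t n) := by
    intro n
    cases n with
    | zero => exact measurableSet_diagonal
    | succ k => exact (hU k).prod (hU k).compl
  have htc : M ⊆ ⋃ n, disjointed t n := by
    rw [iUnion_disjointed]
    rintro ⟨x, y⟩ -
    by_cases hxy : x = y
    · exact mem_iUnion.2 ⟨0, hxy⟩
    have : ∃ n, ¬ (x ∈ S n ↔ y ∈ S n) := by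
      by_contra! h
      exact hxy (hSs x trivial y trivial h)
    obtain ⟨n, hn⟩ := this
    have hUe : ∀ b, U (Equiv.boolProdNatEquivNat (b, n)) = bif b then S n else (S n)ᶜ :=
      fun b => by simp [U]
    by_cases hx : x ∈ S n
    · refine mem_iUnion.2 ⟨Equiv.boolProdNatEquivNat (true, n) + 1, ?_⟩
      change x ∈ U _ ∧ y ∉ U _
      rw [hUe]
      exact ⟨hx, fun hy => hn ⟨fun _ => hy, fun _ => hx⟩⟩
    · refine mem_iUnion.2 ⟨Equiv.boolProdNatEquivNat (false, n) + 1, ?_⟩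
      change x ∈ U _ ∧ y ∉ U _
      rw [hUe]
      exact ⟨hx, fun hy => hn ⟨fun h => (hx h).elim, fun h => (hy h).elim⟩⟩
  have hm : ∀ n, MeasurableSet (disjointed t n) := fun n => MeasurableSet.disjointed ht n
  rw [measure_image_eq_tsum μ measurable_fst hM.meas hM.fst hm (disjoint_disjointed t) htc,
    measure_image_eq_tsum μ measurable_snd hM.meas hM.snd hm (disjoint_disjointed t) htc]
  congr 1
  ext n
  have hsub : M ∩ disjointed t n ⊆ t n := inter_subset_right.trans (disjointed_subset t n)
  have hP : PartialInj (M ∩ disjointed t n) := hM.mono (hM.meas.inter (hm n)) inter_subset_left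
  cases n with
  | zero =>
    congr 1
    exact image_congr fun p hp => hsub hp
  | succ k =>
    refine measure_fst_eq_snd_of_disjoint hEeq hinv hP (fun p hp => hME p hp.1) ?_
    rw [Set.disjoint_left]
    rintro _ ⟨p, hp, rfl⟩ ⟨q, hq, e⟩
    have h1 : p.1 ∈ U k := (hsub hp).1
    have h2 : q.2 ∉ U k := (hsub hq).2
    exact h2 (e ▸ h1)

/-- Greedy matching of `A ⊆ X` with `Y ⊆ W` along countably many partial injections `G n`: after
the process no `G n` relates an unmatched point of `A` to an unmatched point of `Y`. -/
lemma exists_greedy_matching {G : ℕ → Set (X × W)} (hG : ∀ n, PartialInj (G n)) {A : Set X}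
    {Y : Set W} (hA : MeasurableSet A) (hY : MeasurableSet Y) :
    ∃ M, PartialInj M ∧ M ⊆ ⋃ n, G n ∧ M ⊆ A ×ˢ Y ∧
      ∀ n, ∀ p ∈ G n, p.1 ∈ A → p.2 ∈ Y → p.1 ∈ Prod.fst '' M ∨ p.2 ∈ Prod.snd '' M := by
  let next : ℕ → Set (X × W) → Set (X × W) := fun n M =>
    M ∪ (G n ∩ (A \ Prod.fst '' M) ×ˢ (Y \ Prod.snd '' M))
  let N : ℕ → Set (X × W) := fun n => Nat.rec ∅ next n
  have hN : ∀ n, N (n + 1) = N n ∪ (G n ∩ (A \ Prod.fst '' N n) ×ˢ (Y \ Prod.snd '' N n)) :=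
    fun _ => rfl
  have hmono : Monotone N := monotone_nat_of_le_succ fun n => by
    rw [hN]
    exact subset_union_left
  have hP : ∀ n, PartialInj (N n) := by
    intro n
    induction n with
    | zero => exact ⟨MeasurableSet.empty, injOn_empty _, injOn_empty _⟩
    | succ n ih =>
      rw [hN]
      refine ⟨ih.meas.union ((hG n).meas.inter ((hA.diff ih.measurableSet_fst).prod
        (hY.diff ih.measurableSet_snd))), ?_, ?_⟩
      · rintro p (hp | hp) q (hq | hq) e
        · exact ih.fst hp hq e
        · exact (hq.2.1.2 ⟨p, hp, e⟩).elim
        · exact (hp.2.1.2 ⟨q, hq, e.symm⟩).elim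
        · exact (hG n).fst hp.1 hq.1 e
      · rintro p (hp | hp) q (hq | hq) e
        · exact ih.snd hp hq e
        · exact (hq.2.2.2 ⟨p, hp, e⟩).elim
        · exact (hp.2.2.2 ⟨q, hq, e.symm⟩).elim
        · exact (hG n).snd hp.1 hq.1 e
  have hdir : ∀ p ∈ ⋃ n, N n, ∀ q ∈ ⋃ n, N n, ∃ n, p ∈ N n ∧ q ∈ N n := by
    intro p hp q hq
    obtain ⟨n, hn⟩ := mem_iUnion.1 hp
    obtain ⟨m, hm⟩ := mem_iUnion.1 hq
    exact ⟨max n m, hmono (le_max_left _ _) hn, hmono (le_max_right _ _) hm⟩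
  have hsub : ∀ n, N n ⊆ (⋃ n, G n) ∩ A ×ˢ Y := by
    intro n
    induction n with
    | zero => exact empty_subset _
    | succ n ih =>
      rw [hN]
      refine union_subset ih fun p hp => ?_
      exact ⟨mem_iUnion.2 ⟨n, hp.1⟩, hp.2.1.1, hp.2.2.1⟩
  refine ⟨⋃ n, N n, ⟨MeasurableSet.iUnion fun n => (hP n).meas, ?_, ?_⟩,
    iUnion_subset fun n => (hsub n).trans inter_subset_left,
    iUnion_subset fun n => (hsub n).trans inter_subset_right, ?_⟩
  · intro p hp q hq e
    obtain ⟨n, h1, h2⟩ := hdir p hp q hq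
    exact (hP n).fst h1 h2 e
  · intro p hp q hq e
    obtain ⟨n, h1, h2⟩ := hdir p hp q hq
    exact (hP n).snd h1 h2 e
  · intro n p hp hpA hpY
    by_contra! h
    have h1 : p.1 ∉ Prod.fst '' N n := fun h' => h.1 (image_mono (subset_iUnion N n) h')
    have h2 : p.2 ∉ Prod.snd '' N n := fun h' => h.2 (image_mono (subset_iUnion N n) h')
    have : p ∈ N (n + 1) := by
      rw [hN]
      exact Or.inr ⟨hp, ⟨hpA, h1⟩, ⟨hpY, h2⟩⟩
    exact h.1 ⟨p, mem_iUnion.2 ⟨n + 1, this⟩, rfl⟩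

/-- Invariance for partial injections into `X × ℕ` which stay in the same `E`-class. -/
lemma measure_fst_eq_prod_count_snd {E : X → X → Prop} (hEeq : Equivalence E) {μ : Measure X}
    [SFinite μ]
    (hinv : ∀ T : X ≃ᵐ X, (∀ x, E x (T x)) → ∀ B : Set X, MeasurableSet B → μ (T '' B) = μ B)
    {M : Set (X × (X × ℕ))} (hM : PartialInj M) (hME : ∀ p ∈ M, E p.1 p.2.1) :
    μ (Prod.fst '' M) = μ.prod Measure.count (Prod.snd '' M) := by
  let s : ℕ → Set (X × (X × ℕ)) := fun i => {p | p.2.2 = i}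
  have hs : ∀ i, MeasurableSet (s i) := fun i =>
    (measurable_snd.comp measurable_snd) (measurableSet_singleton i)
  have hd : Pairwise (Function.onFun Disjoint s) := by
    intro i j hij
    rw [Function.onFun, Set.disjoint_left]
    intro p hp hq
    exact hij (hp.symm.trans hq)
  have hc : M ⊆ ⋃ i, s i := fun p _ => mem_iUnion.2 ⟨p.2.2, rfl⟩
  rw [measure_image_eq_tsum μ measurable_fst hM.meas hM.fst hs hd hc,
    measure_image_eq_tsum _ measurable_snd hM.meas hM.snd hs hd hc]
  congr 1
  ext i
  let D : Set (X × X) := (fun p => (p.1, (p.2, i))) ⁻¹' M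
  have hD : PartialInj D := by
    refine ⟨(measurable_fst.prodMk (measurable_snd.prodMk measurable_const)) hM.meas, ?_, ?_⟩
    · intro p hp q hq e
      have := hM.fst hp hq e
      simp only [Prod.mk.injEq] at this
      exact Prod.ext this.1 this.2.1
    · intro p hp q hq e
      have := hM.snd hp hq (Prod.ext e rfl)
      simp only [Prod.mk.injEq] at this
      exact Prod.ext this.1 this.2.1
  have h1 : Prod.fst '' (M ∩ s i) = Prod.fst '' D := by
    ext x
    constructor
    · rintro ⟨⟨x, y, j⟩, ⟨h, rfl⟩, rfl⟩
      exact ⟨(x, y), h, rfl⟩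
    · rintro ⟨⟨x, y⟩, h, rfl⟩
      exact ⟨(x, (y, i)), ⟨h, rfl⟩, rfl⟩
  have h2 : Prod.snd '' (M ∩ s i) = (Prod.snd '' D) ×ˢ {i} := by
    ext ⟨y, k⟩
    constructor
    · rintro ⟨⟨x, y, j⟩, ⟨h, rfl⟩, e⟩
      cases e
      exact ⟨⟨(x, y), h, rfl⟩, rfl⟩
    · rintro ⟨⟨⟨x, y⟩, h, rfl⟩, rfl⟩
      exact ⟨(x, (y, k)), ⟨h, rfl⟩, rfl⟩
  rw [h1, h2, Measure.prod_prod, Measure.count_singleton, mul_one]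
  exact measure_fst_eq_snd hEeq hinv hD fun p hp => hME _ hp

/-- The `E`-saturation of a set. -/
def sat {X : Type*} (E : X → X → Prop) (B : Set X) : Set X := {x | ∃ y ∈ B, E y x}

lemma sat_eq {X : Type*} {E : X → X → Prop} {F : ℕ → Set (X × X)}
    (hFE : ⋃ n, F n = {p : X × X | E p.1 p.2}) (B : Set X) :
    sat E B = ⋃ n, Prod.snd '' (F n ∩ Prod.fst ⁻¹' B) := by
  ext x
  rw [mem_iUnion]
  constructor
  · rintro ⟨y, hy, h⟩
    have : (y, x) ∈ ⋃ n, F n := hFE ▸ h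
    obtain ⟨n, hn⟩ := mem_iUnion.1 this
    exact ⟨n, (y, x), ⟨hn, hy⟩, rfl⟩
  · rintro ⟨n, ⟨y, x⟩, ⟨h, hy⟩, rfl⟩
    have : (y, x) ∈ {p : X × X | E p.1 p.2} := hFE ▸ mem_iUnion.2 ⟨n, h⟩
    exact ⟨y, hy, this⟩

lemma measurableSet_sat {E : X → X → Prop} {F : ℕ → Set (X × X)} (hF : ∀ n, PartialInj (F n))
    (hFE : ⋃ n, F n = {p : X × X | E p.1 p.2}) {B : Set X} (hB : MeasurableSet B) :
    MeasurableSet (sat E B) := by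
  rw [sat_eq hFE]
  exact MeasurableSet.iUnion fun n =>
    ((hF n).mono ((hF n).meas.inter (measurable_fst hB)) inter_subset_left).measurableSet_snd

lemma measure_sat_eq_zero {E : X → X → Prop} (hEeq : Equivalence E) {μ : Measure X}
    (hinv : ∀ T : X ≃ᵐ X, (∀ x, E x (T x)) → ∀ B : Set X, MeasurableSet B → μ (T '' B) = μ B)
    {F : ℕ → Set (X × X)} (hF : ∀ n, PartialInj (F n))
    (hFE : ⋃ n, F n = {p : X × X | E p.1 p.2}) {B : Set X} (hB : MeasurableSet B)
    (h0 : μ B = 0) : μ (sat E B) = 0 := by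
  rw [sat_eq hFE, measure_iUnion_null_iff]
  intro n
  rw [← measure_fst_eq_snd hEeq hinv
    ((hF n).mono ((hF n).meas.inter (measurable_fst hB)) inter_subset_left)]
  · refine measure_mono_null ?_ h0
    rintro _ ⟨p, hp, rfl⟩
    exact hp.2
  · intro p hp
    have : p ∈ {p : X × X | E p.1 p.2} := hFE ▸ mem_iUnion.2 ⟨n, hp.1⟩
    exact this

lemma encard_slots_add (m : ℕ∞) :
    {i : ℕ | (i : ℕ∞) + 1 < m}.encard + (if m = 0 then 0 else 1) = m := by
  induction m using ENat.recTopCoe with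
  | top =>
    have : {i : ℕ | (i : ℕ∞) + 1 < ⊤} = univ := by
      ext i
      simp
    rw [this]
    simp
  | coe n =>
    cases n with
    | zero => simp
    | succ k =>
      have : {i : ℕ | (i : ℕ∞) + 1 < ((k + 1 : ℕ) : ℕ∞)} = Finset.range k := by
        ext i
        rw [mem_ofPred_eq, Finset.mem_coe, Finset.mem_range]
        norm_cast
        omega
      rw [this, encard_coe_eq_coe_finsetCard]
      simp

/-! ### Matching zeros with surplus slots -/

/-- The set of surplus slots: the point `x` has `φ x - 1` of them. -/
def slots {X : Type*} (φ : X → ℕ∞) : Set (X × ℕ) := {p | (p.2 : ℕ∞) + 1 < φ p.1}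

lemma measurableSet_slots {X : Type*} [MeasurableSpace X] {φ : X → ℕ∞} (hφ : Measurable φ) : MeasurableSet (slots φ) := by
  have : slots φ = ⋃ i : ℕ, (φ ⁻¹' Ioi ((i : ℕ∞) + 1)) ×ˢ {i} := by
    ext ⟨x, i⟩
    simp [slots]
  rw [this]
  exact MeasurableSet.iUnion fun i =>
    (hφ (MeasurableSet.of_discrete)).prod (measurableSet_singleton i)

/-- The mean of `φ` is the measure of its support plus that of the surplus slots; mean one thus
says that there are as many slots as zeros of `φ`. -/
lemma measure_zero_eq_slots {X : Type*} [MeasurableSpace X] {φ : X → ℕ∞} (hφ : Measurable φ) (μ : Measure X)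
    [IsProbabilityMeasure μ] (hint : ∫⁻ x, (φ x).toENNReal ∂μ = 1) :
    μ (φ ⁻¹' {0}) = μ.prod Measure.count (slots φ) := by
  have hm : MeasurableSet (φ ⁻¹' {0}) := hφ MeasurableSet.of_discrete
  have h1 : ∫⁻ x, (φ x).toENNReal ∂μ
      = μ.prod Measure.count (slots φ) + μ (φ ⁻¹' {0})ᶜ := by
    rw [Measure.prod_apply (measurableSet_slots hφ), ← lintegral_indicator_one hm.compl,
      ← lintegral_add_right _ (measurable_one.indicator hm.compl)]
    refine lintegral_congr fun x => ?_
    rw [Measure.count_apply MeasurableSet.of_discrete]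
    have h := congrArg ENat.toENNReal (encard_slots_add (φ x))
    rw [ENat.toENNReal_add] at h
    rw [← h]
    congr 1
    by_cases hx : φ x = 0 <;> simp [hx]
  have h2 : μ (φ ⁻¹' {0}) + μ (φ ⁻¹' {0})ᶜ = 1 := by
    rw [measure_add_measure_compl hm, measure_univ]
  rw [hint] at h1
  exact (ENNReal.add_left_inj (measure_ne_top μ _)).1 (h2.trans h1)

/-- The matching of zeros of `φ` with surplus slots is complete on an invariant conull Borel set:
by ergodicity the saturations of the unmatched zeros and of the unmatched slots cannot both be
conull, while these remainders have equal measure. -/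
lemma exists_matching {E : X → X → Prop} (hEeq : Equivalence E)
    (hEmeas : MeasurableSet {p : X × X | E p.1 p.2}) (hEcount : ∀ x : X, {y | E x y}.Countable)
    {φ : X → ℕ∞} (hφ : Measurable φ) {μ : Measure X} [IsProbabilityMeasure μ]
    (hinv : ∀ T : X ≃ᵐ X, (∀ x, E x (T x)) → ∀ B : Set X, MeasurableSet B → μ (T '' B) = μ B)
    (herg : ∀ B : Set X, MeasurableSet B → (∀ x y, x ∈ B → E x y → y ∈ B) → μ B = 0 ∨ μ Bᶜ = 0)
    (hint : ∫⁻ x, (φ x).toENNReal ∂μ = 1) :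
    ∃ (M : Set (X × (X × ℕ))) (C : Set X), PartialInj M ∧ MeasurableSet C ∧ μ Cᶜ = 0 ∧
      (∀ x y, x ∈ C → E x y → y ∈ C) ∧
      (∀ p ∈ M, φ p.1 = 0 ∧ p.2 ∈ slots φ ∧ E p.1 p.2.1) ∧
      (∀ x ∈ C, φ x = 0 → x ∈ Prod.fst '' M) ∧
      (∀ x ∈ C, ∀ i, (x, i) ∈ slots φ → (x, i) ∈ Prod.snd '' M) := by
  obtain ⟨F, hF, hFE⟩ := exists_partialInj_cover hEeq hEmeas hEcount
  have hmem : ∀ {x y}, E x y ↔ ∃ n, (x, y) ∈ F n := fun {x y} => by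
    rw [← mem_iUnion, hFE, mem_ofPred_eq]
  -- `G n` sends `x` to the slot `(y, i)`, for `(x, y) ∈ F k`, where `n` codes `(k, i)`
  let G : ℕ → Set (X × (X × ℕ)) := fun n =>
    {p | (p.1, p.2.1) ∈ F n.unpair.1 ∧ p.2.2 = n.unpair.2}
  have hG : ∀ n, PartialInj (G n) := by
    intro n
    refine ⟨?_, ?_, ?_⟩
    · exact MeasurableSet.inter
        ((measurable_fst.prodMk (measurable_fst.comp measurable_snd)) (hF _).meas)
        ((measurable_snd.comp measurable_snd) (measurableSet_singleton n.unpair.2))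
    · rintro ⟨x, y, i⟩ ⟨h, rfl⟩ ⟨x', y', i'⟩ ⟨h', rfl⟩ e
      have := (hF _).fst h h' e
      simp_all
    · rintro ⟨x, y, i⟩ ⟨h, rfl⟩ ⟨x', y', i'⟩ ⟨h', rfl⟩ e
      have := (hF _).snd h h' (congrArg Prod.fst e)
      simp_all
  have hA : MeasurableSet (φ ⁻¹' {0}) := hφ MeasurableSet.of_discrete
  have hY := measurableSet_slots hφ
  obtain ⟨M, hM, hMG, hMAY, hmax⟩ := exists_greedy_matching hG hA hY
  have hME : ∀ p ∈ M, E p.1 p.2.1 := by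
    intro p hp
    obtain ⟨n, hn⟩ := mem_iUnion.1 (hMG hp)
    exact hmem.2 ⟨_, hn.1⟩
  -- the unmatched zeros and the unmatched slots
  let A' : Set X := φ ⁻¹' {0} \ Prod.fst '' M
  let Y' : Set (X × ℕ) := slots φ \ Prod.snd '' M
  have hA' : MeasurableSet A' := hA.diff hM.measurableSet_fst
  have hY' : MeasurableSet Y' := hY.diff hM.measurableSet_snd
  have hAY' : μ A' = μ.prod Measure.count Y' := by
    have h1 : Prod.fst '' M ⊆ φ ⁻¹' {0} := by
      rintro _ ⟨p, hp, rfl⟩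
      exact (hMAY hp).1
    have h2 : Prod.snd '' M ⊆ slots φ := by
      rintro _ ⟨p, hp, rfl⟩
      exact (hMAY hp).2
    have h3 := measure_fst_eq_prod_count_snd hEeq hinv hM hME
    rw [measure_sdiff h1 hM.measurableSet_fst.nullMeasurableSet (measure_ne_top μ _),
      measure_sdiff h2 hM.measurableSet_snd.nullMeasurableSet (h3 ▸ measure_ne_top μ _), h3,
      measure_zero_eq_slots hφ μ hint]
  let B' : Set X := ⋃ i : ℕ, (fun x => (x, i)) ⁻¹' Y'
  have hB' : MeasurableSet B' :=
    MeasurableSet.iUnion fun i => (measurable_id.prodMk measurable_const) hY'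
  have hBY' : μ B' = 0 ↔ μ.prod Measure.count Y' = 0 := by
    constructor
    · intro h
      refine measure_mono_null (t := B' ×ˢ univ) ?_ ?_
      · rintro ⟨x, i⟩ h
        exact ⟨mem_iUnion.2 ⟨i, h⟩, trivial⟩
      · rw [Measure.prod_prod, h, zero_mul]
    · intro h
      rw [measure_iUnion_null_iff]
      intro i
      have h' : μ.prod Measure.count (((fun x => (x, i)) ⁻¹' Y') ×ˢ {i}) = 0 := by
        refine measure_mono_null ?_ h
        rintro ⟨x, j⟩ ⟨hx, rfl⟩
        exact hx
      rwa [Measure.prod_prod, Measure.count_singleton, mul_one] at h'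
  have hsatm : ∀ {B : Set X}, MeasurableSet B → MeasurableSet (sat E B) :=
    fun hB => measurableSet_sat hF hFE hB
  have hsati : ∀ {B : Set X} x y, x ∈ sat E B → E x y → y ∈ sat E B := by
    rintro B x y ⟨z, hz, h⟩ hxy
    exact ⟨z, hz, hEeq.trans h hxy⟩
  have hsub : ∀ {B : Set X}, B ⊆ sat E B := fun {_ x} hx => ⟨x, hx, hEeq.refl x⟩
  have hdisj : sat E A' ∩ sat E B' = ∅ := by
    rw [eq_empty_iff_forall_notMem]
    rintro z ⟨⟨x, hx, hxz⟩, y, hy, hyz⟩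
    obtain ⟨i, hi⟩ := mem_iUnion.1 hy
    obtain ⟨k, hk⟩ := hmem.1 (hEeq.trans hxz (hEeq.symm hyz))
    rcases hmax (Nat.pair k i) (x, (y, i)) ⟨by simpa using hk, by simp⟩ hx.1 hi.1 with h | h
    · exact hx.2 h
    · exact hi.2 h
  have hA0 : μ A' = 0 := by
    by_contra hne
    have hne' : μ B' ≠ 0 := by rwa [Ne, hBY', ← hAY']
    have c1 : μ (sat E A')ᶜ = 0 := (herg _ (hsatm hA') hsati).resolve_left
      fun h => hne (measure_mono_null hsub h)
    have c2 : μ (sat E B')ᶜ = 0 := (herg _ (hsatm hB') hsati).resolve_left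
      fun h => hne' (measure_mono_null hsub h)
    have h : μ ((sat E A')ᶜ ∪ (sat E B')ᶜ) = 0 := measure_union_null c1 c2
    rw [← compl_inter, hdisj, compl_empty, measure_univ] at h
    exact one_ne_zero h
  have hB0 : μ B' = 0 := hBY'.2 (hAY' ▸ hA0)
  refine ⟨M, (sat E A' ∪ sat E B')ᶜ, hM, ((hsatm hA').union (hsatm hB')).compl, ?_, ?_, ?_, ?_, ?_⟩
  · rw [compl_compl]
    exact measure_union_null (measure_sat_eq_zero hEeq hinv hF hFE hA' hA0)
      (measure_sat_eq_zero hEeq hinv hF hFE hB' hB0)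
  · rintro x y hx hxy (h | h)
    · exact hx (Or.inl (hsati y x h (hEeq.symm hxy)))
    · exact hx (Or.inr (hsati y x h (hEeq.symm hxy)))
  · exact fun p hp => ⟨(hMAY hp).1, (hMAY hp).2, hME p hp⟩
  · intro x hx h0
    by_contra h
    exact hx (Or.inl (hsub ⟨h0, h⟩))
  · intro x hx i hi
    by_contra h
    exact hx (Or.inr (hsub (mem_iUnion.2 ⟨i, hi, h⟩)))

end PmpMatching

/-- Existence, on an invariant conull Borel set, of a Borel retraction onto the
support of `φ` with prescribed fiber cardinalities, given `∫ φ dμ = 1` and `μ` ergodic and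
invariant. -/
theorem stmt_3 {X : Type*} [TopologicalSpace X] [PolishSpace X]
    [MeasurableSpace X] [BorelSpace X]
    (E : X → X → Prop) (hEeq : Equivalence E)
    (hEmeas : MeasurableSet {p : X × X | E p.1 p.2})
    (hEcount : ∀ x : X, {y | E x y}.Countable)
    (φ : X → ℕ∞) (hφ : Measurable φ)
    (μ : Measure X) [IsProbabilityMeasure μ]
    (hinv : ∀ T : X ≃ᵐ X, (∀ x, E x (T x)) →
      ∀ B : Set X, MeasurableSet B → μ (T '' B) = μ B)
    (herg : ∀ B : Set X, MeasurableSet B → (∀ x y, x ∈ B → E x y → y ∈ B) →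
      μ B = 0 ∨ μ Bᶜ = 0)
    (hint : ∫⁻ x, (φ x).toENNReal ∂μ = 1) :
    ∃ C : Set X, MeasurableSet C ∧ μ Cᶜ = 0 ∧
      (∀ x y, x ∈ C → E x y → y ∈ C) ∧
      ∃ ψ : X → X, Measurable ψ ∧
        (∀ x ∈ C, ψ x ∈ C ∧ φ (ψ x) ≠ 0 ∧ E x (ψ x)) ∧
        (∀ y ∈ C, φ y ≠ 0 → ψ y = y) ∧
        (∀ x ∈ C, (C ∩ ψ ⁻¹' {x}).encard = φ x) := by
  obtain ⟨M, C, hM, hC, hC0, hCi, hME, hCA, hCY⟩ :=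
    PmpMatching.exists_matching hEeq hEmeas hEcount hφ hinv herg hint
  -- `ψ` sends a matched zero to the base point of its slot, and fixes every other point.
  have hex : ∀ x, ∃ y, (∃ i, (x, (y, i)) ∈ M) ∨ (x = y ∧ x ∉ Prod.fst '' M) := by
    intro x
    by_cases h : x ∈ Prod.fst '' M
    · obtain ⟨⟨x, y, i⟩, h, rfl⟩ := h
      exact ⟨y, Or.inl ⟨i, h⟩⟩
    · exact ⟨x, Or.inr ⟨rfl, h⟩⟩
  choose ψ hψ using hex
  have hψM : ∀ x y i, (x, (y, i)) ∈ M → ψ x = y := by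
    intro x y i h
    rcases hψ x with ⟨j, hj⟩ | ⟨-, hx⟩
    · exact congrArg (fun p => p.2.1) (hM.fst hj h rfl)
    · exact (hx ⟨_, h, rfl⟩).elim
  have hψF : ∀ x, x ∉ Prod.fst '' M → ψ x = x := by
    intro x hx
    rcases hψ x with ⟨j, hj⟩ | ⟨h, -⟩
    · exact (hx ⟨_, hj, rfl⟩).elim
    · exact h.symm
  have hfix : ∀ y, φ y ≠ 0 → ψ y = y := by
    refine fun y hy => hψF y ?_
    rintro ⟨p, hp, rfl⟩
    exact hy (hME p hp).1
  have hpos : ∀ {y : X} {i : ℕ}, (y, i) ∈ PmpMatching.slots φ → φ y ≠ 0 := fun h =>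
    (pos_of_gt h).ne'
  refine ⟨C, hC, hC0, hCi, ψ, ?_, ?_, fun y _ => hfix y, ?_⟩
  · apply PmpMatching.measurable_of_graph
    have : {p : X × X | ψ p.1 = p.2} = (⋃ i : ℕ, (fun p : X × X => (p.1, (p.2, i))) ⁻¹' M) ∪
        (Set.diagonal X ∩ Prod.fst ⁻¹' (Prod.fst '' M)ᶜ) := by
      ext ⟨x, y⟩
      constructor
      · rintro (rfl : ψ x = y)
        rcases hψ x with ⟨j, hj⟩ | ⟨h, h'⟩
        · exact Or.inl (Set.mem_iUnion.2 ⟨j, hj⟩)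
        · exact Or.inr ⟨h, h'⟩
      · rintro (h | ⟨h, h'⟩)
        · obtain ⟨i, hi⟩ := Set.mem_iUnion.1 h
          exact hψM x y i hi
        · exact (hψF x h').trans h
    rw [this]
    exact (MeasurableSet.iUnion fun i =>
      (measurable_fst.prodMk (measurable_snd.prodMk measurable_const)) hM.meas).union
      (measurableSet_diagonal.inter (measurable_fst hM.measurableSet_fst.compl))
  · intro x hx
    by_cases h0 : φ x = 0
    · obtain ⟨⟨x, y, i⟩, h, rfl⟩ := hCA x hx h0
      obtain ⟨-, h2, h3⟩ := hME _ h
      rw [hψM x y i h]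
      exact ⟨hCi x y hx h3, hpos h2, h3⟩
    · rw [hfix x h0]
      exact ⟨hx, h0, hEeq.refl x⟩
  · intro x hx
    by_cases h0 : φ x = 0
    · have : C ∩ ψ ⁻¹' {x} = ∅ := by
        rw [Set.eq_empty_iff_forall_notMem]
        rintro z ⟨hz, rfl : ψ z = x⟩
        by_cases hz0 : φ z = 0
        · obtain ⟨⟨z, y, i⟩, h, rfl⟩ := hCA z hz hz0
          rw [hψM z y i h] at h0
          exact hpos (hME _ h).2.1 h0
        · exact hz0 (hfix z hz0 ▸ h0)
      rw [this, h0, Set.encard_empty]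
    -- the fibre consists of `x` and of the points matched with the slots of `x`
    let Mx : Set (X × (X × ℕ)) := M ∩ {p | p.2.1 = x}
    have hfib : C ∩ ψ ⁻¹' {x} = insert x (Prod.fst '' Mx) := by
      ext z
      constructor
      · rintro ⟨hz, hzx : ψ z = x⟩
        by_cases hz0 : φ z = 0
        · obtain ⟨⟨z, y, i⟩, h, rfl⟩ := hCA z hz hz0
          exact Or.inr ⟨_, ⟨h, (hψM z y i h).symm.trans hzx⟩, rfl⟩
        · exact Or.inl ((hfix z hz0).symm.trans hzx)
      · rintro (rfl | ⟨⟨z, y, i⟩, ⟨h, rfl⟩, rfl⟩)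
        · exact ⟨hx, hfix z h0⟩
        · exact ⟨hCi y z hx (hEeq.symm (hME _ h).2.2), hψM z y i h⟩
    have hnot : x ∉ Prod.fst '' Mx := by
      rintro ⟨p, hp, rfl⟩
      exact h0 (hME p hp.1).1
    have hslot : (fun p : X × (X × ℕ) => p.2.2) '' Mx = {i : ℕ | (i : ℕ∞) + 1 < φ x} := by
      ext i
      constructor
      · rintro ⟨⟨z, y, i⟩, ⟨h, rfl⟩, rfl⟩
        exact (hME _ h).2.1
      · intro hi
        obtain ⟨⟨z, y, j⟩, h, e⟩ := hCY x hx i hi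
        cases e
        exact ⟨_, ⟨h, rfl⟩, rfl⟩
    have hinj : Set.InjOn (fun p : X × (X × ℕ) => p.2.2) Mx := by
      rintro p ⟨hp, hpx⟩ q ⟨hq, hqx⟩ e
      exact hM.snd hp hq (Prod.ext (hpx.trans hqx.symm) e)
    have hcard := PmpMatching.encard_slots_add (φ x)
    rw [if_neg h0] at hcard
    rw [hfib, Set.encard_insert_of_notMem hnot,
      (hM.fst.mono Set.inter_subset_left).encard_image, ← hinj.encard_image, hslot, hcard]
end

section
/- Let X and Y be Polish spaces, E a countable Borel equivalence relation on X, R ⊆ X × Y a Borel set with countable vertical sections, and μ an E-ergodic, E-invariant Borel probability measure on X with ∫ |R_x| dμ(x) = 1, where R_x = {y : (x,y) ∈ R}. Then there is a Borel function π : R → X such that x E π(x,y) for all (x,y) ∈ R, and for μ-almost every x ∈ X, the vertical section over x of the image of R under (x,y) ↦ (π(x,y), y) has exactly one element. -/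
open MeasureTheory ENNReal

/-!
Equip `R` with the measure `A ↦ ∫ |A_x| dμ(x)`, of total mass `1`. A bijection, modulo null sets,
from `R` to `X` that moves first coordinates only along `E` is the required `π`, so the claim is
that `R` and `X`, having the same mass, can be matched inside `E`.

By the Lusin–Novikov theorem, the set of pairs `((x, y), x')` with `(x, y) ∈ R` and `x E x'` is a
countable union of Borel sets on which both `x` and `x'` are injective. Going through these pieces
one at a time and matching whatever is still unmatched (`exists_maximal_matching`) gives a Borel
partial injection from `R` to `X` such that no unmatched `(x, y)` and unmatched `x'` satisfy
`x E x'`. As `μ` is invariant, it preserves mass (`measure_image_eq`). By ergodicity the saturation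
of the unmatched part of `X` is null or conull; hence the unmatched part of `X` or that of `R` is
null, and since the total masses agree, both are.

The Lusin–Novikov theorem (`lusin_novikov`) is proved by contradiction: if the domain of a
continuous countable-to-one `f` is not a countable union of Borel sets on which `f` is injective, a
Cantor scheme produces a copy of `ℕ → Bool` inside one fibre of `f` (`small_univ`). The scheme is
kept going by the notion of a large finite family of open sets (`Large`, `split_one`), where Lusin
separation turns analytic sets on which `f` is injective into Borel ones.
-/


namespace LN
open Set Topology TopologicalSpace

/-! ### The Lusin–Novikov theorem for continuous maps -/

/-- `B` is a countable union of Borel sets on each of which `f` is injective. -/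
def Small {Z X : Type*} [MeasurableSpace Z] (f : Z → X) (B : Set Z) : Prop :=
  ∃ 𝒞 : Set (Set Z), 𝒞.Countable ∧ (∀ C ∈ 𝒞, MeasurableSet C ∧ InjOn f C) ∧ B = ⋃₀ 𝒞

/-- The family `U` is large if no small set `B` meets every tuple `(z k)` with `z k ∈ U k` and
constant `f (z k)`: some such tuple avoids `B` altogether. -/
def Large {Z X κ : Type*} [MeasurableSpace Z] (f : Z → X) (U : κ → Set Z) : Prop :=
  ∀ B, Small f B → ∃ x, ∀ k, ∃ z ∈ U k, z ∉ B ∧ f z = x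

section small
variable {Z X : Type*} [MeasurableSpace Z] {f : Z → X}

lemma Small.measurableSet {B : Set Z} (h : Small f B) : MeasurableSet B := by
  obtain ⟨𝒞, hc, h, rfl⟩ := h
  exact MeasurableSet.sUnion hc fun C hC => (h C hC).1

lemma Small.of_injOn {C : Set Z} (hC : MeasurableSet C) (hi : InjOn f C) : Small f C :=
  ⟨{C}, countable_singleton C, by simp [hC, hi], by simp⟩

lemma Small.biUnion {ι : Type*} {s : Set ι} (hs : s.Countable) {B : ι → Set Z}
    (h : ∀ i ∈ s, Small f (B i)) : Small f (⋃ i ∈ s, B i) := by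
  choose! 𝒞 h1 h2 h3 using h
  refine ⟨⋃ i ∈ s, 𝒞 i, hs.biUnion h1, ?_, ?_⟩
  · simp only [mem_iUnion]
    rintro C ⟨i, hi, hC⟩
    exact h2 i hi C hC
  · rw [sUnion_iUnion]
    refine iUnion_congr fun i => ?_
    rw [sUnion_iUnion]
    exact iUnion_congr fun hi => h3 i hi

lemma Small.union {B C : Set Z} (hB : Small f B) (hC : Small f C) : Small f (B ∪ C) := by
  obtain ⟨𝒞, hc, h, rfl⟩ := hB
  obtain ⟨𝒟, hd, h', rfl⟩ := hC
  refine ⟨𝒞 ∪ 𝒟, hc.union hd, ?_, sUnion_union 𝒞 𝒟 |>.symm⟩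
  rintro C (hC | hC)
  exacts [h C hC, h' C hC]

end small

section polish

variable {Z X : Type*} [TopologicalSpace Z] [PolishSpace Z] [MeasurableSpace Z] [BorelSpace Z]
  [TopologicalSpace X] [T2Space X] {f : Z → X}

lemma analytic_other (hf : Continuous f) {A : Set Z} (hA : AnalyticSet A) :
    AnalyticSet {z | ∃ a ∈ A, a ≠ z ∧ f a = f z} := by
  obtain ⟨γ, _, _, g, hg, rfl⟩ := analyticSet_iff_exists_polishSpace_range.1 hA
  borelize γ
  have hm : MeasurableSet {p : Z × γ | g p.2 ≠ p.1 ∧ f (g p.2) = f p.1} :=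
    ((isClosed_eq (by fun_prop) (by fun_prop)).measurableSet.compl).inter
      (isClosed_eq (by fun_prop) (by fun_prop)).measurableSet
  convert hm.analyticSet_image measurable_fst using 1
  ext z
  simp

lemma analytic_fibre (hf : Continuous f) {A : Set Z} (hA : MeasurableSet A) :
    AnalyticSet {z | ∃ a ∈ A, f a = f z} := by
  have hm : MeasurableSet {p : Z × Z | p.2 ∈ A ∧ f p.2 = f p.1} :=
    (measurable_snd hA).inter (isClosed_eq (by fun_prop) (by fun_prop)).measurableSet
  convert hm.analyticSet_image measurable_fst using 1
  ext z
  simp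

/-- An analytic set on which `f` is injective is contained in a Borel set with the same property;
this takes two applications of Lusin separation. -/
lemma exists_injOn_hull (hf : Continuous f) {A : Set Z} (hA : AnalyticSet A) (hi : InjOn f A) :
    ∃ B, A ⊆ B ∧ MeasurableSet B ∧ InjOn f B := by
  obtain ⟨B₁, h1, h2, h3⟩ := hA.measurablySeparable (analytic_other hf hA) (by
    rw [Set.disjoint_left]
    rintro z hz ⟨a, ha, hne, h⟩
    exact hne (hi ha hz h))
  obtain ⟨B₂, k1, k2, k3⟩ := hA.measurablySeparable (analytic_other hf h3.analyticSet) (by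
    rw [Set.disjoint_left]
    rintro z hz ⟨b, hb, hne, h⟩
    exact Set.disjoint_left.1 h2 ⟨z, hz, hne.symm, h.symm⟩ hb)
  refine ⟨B₁ ∩ B₂, subset_inter h1 k1, h3.inter k3, ?_⟩
  rintro b hb b' hb' h
  by_contra hne
  exact Set.disjoint_left.1 k2 ⟨b', hb'.1, Ne.symm hne, h.symm⟩ hb.2

lemma exists_basic {Z : Type*} [MetricSpace Z] {ε : ℝ} (hε : 0 < ε) {O : Set Z} (hO : IsOpen O)
    {ℬ : Set (Set Z)} (hℬ : IsTopologicalBasis ℬ) {z : Z} (hz : z ∈ O) :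
    ∃ V ∈ ℬ, z ∈ V ∧ closure V ⊆ O ∧ ∀ x ∈ V, ∀ y ∈ V, dist x y < ε := by
  obtain ⟨V, hV, hzV, hcl⟩ := hℬ.exists_closure_subset
    ((hO.inter Metric.isOpen_ball).mem_nhds ⟨hz, Metric.mem_ball_self (half_pos hε)⟩)
  refine ⟨V, hV, hzV, hcl.trans inter_subset_left, fun x hx y hy => ?_⟩
  have hx' := (hcl (subset_closure hx)).2
  have hy' := (hcl (subset_closure hy)).2
  rw [Metric.mem_ball] at hx' hy'
  linarith [dist_triangle_right x y z]

/-- If two members of a large family of open sets coincide, they can be replaced by small disjoint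
open subsets. Otherwise every pair `(V, V')` of basic open sets has a small set witnessing that the
refined family is not large; outside the union `B` of these witnesses, the points of `U a` that
extend to a tuple form an analytic set on which `f` is injective, and adding a Borel hull of it to
`B` contradicts the largeness of `U`. -/
lemma split_one {Z : Type*} [MetricSpace Z] [PolishSpace Z] [MeasurableSpace Z] [BorelSpace Z]
    {f : Z → X} (hf : Continuous f) {κ : Type*} [Countable κ] [DecidableEq κ] {U : κ → Set Z}
    (hU : ∀ k, IsOpen (U k)) (hL : Large f U) {ε : ℝ} (hε : 0 < ε) {a a' : κ} (haa : a ≠ a')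
    (hUa : U a' = U a) :
    ∃ V V' : Set Z, IsOpen V ∧ IsOpen V' ∧ closure V ⊆ U a ∧ closure V' ⊆ U a ∧ Disjoint V V' ∧
      (∀ x ∈ V, ∀ y ∈ V, dist x y < ε) ∧ (∀ x ∈ V', ∀ y ∈ V', dist x y < ε) ∧
      Large f (Function.update (Function.update U a V) a' V') := by
  obtain ⟨ℬ, hℬc, -, hℬ⟩ := exists_countable_basis Z
  by_contra! hcon
  let Pr : Set (Set Z × Set Z) := {p | (p.1 ∈ ℬ ∧ p.2 ∈ ℬ) ∧ closure p.1 ⊆ U a ∧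
    closure p.2 ⊆ U a ∧ Disjoint p.1 p.2 ∧ (∀ x ∈ p.1, ∀ y ∈ p.1, dist x y < ε) ∧
    (∀ x ∈ p.2, ∀ y ∈ p.2, dist x y < ε)}
  have hPr : Pr.Countable := (hℬc.prod hℬc).mono fun p hp => hp.1
  have key : ∀ p ∈ Pr, ∃ B, Small f B ∧ ∀ x, ∃ k,
      ∀ z ∈ Function.update (Function.update U a p.1) a' p.2 k, z ∉ B → f z ≠ x := by
    rintro p ⟨⟨h1, h2⟩, h3, h4, h5, h6, h7⟩
    have := hcon p.1 p.2 (hℬ.isOpen h1) (hℬ.isOpen h2) h3 h4 h5 h6 h7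
    simpa only [Large, not_forall, not_exists, not_and, exists_prop] using this
  choose! C hC hCx using key
  set B := ⋃ p ∈ Pr, C p with hB
  have hBs : Small f B := Small.biUnion hPr hC
  let D : Set Z := (U a \ B) ∩ ⋂ k, {z | ∃ z' ∈ U k \ B, f z' = f z}
  have hm : ∀ k, MeasurableSet (U k \ B) := fun k => (hU k).measurableSet.diff hBs.measurableSet
  have hD : AnalyticSet D := by
    have : Nonempty κ := ⟨a⟩
    have h2 : AnalyticSet (⋂ k, {z | ∃ z' ∈ U k \ B, f z' = f z}) :=
      AnalyticSet.iInter fun k => analytic_fibre hf (hm k)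
    have := AnalyticSet.iInter (s := fun b : Bool => cond b (U a \ B)
      (⋂ k, {z | ∃ z' ∈ U k \ B, f z' = f z})) (by
        rintro (_ | _)
        exacts [h2, (hm a).analyticSet])
    rwa [← inter_eq_iInter] at this
  have hDi : InjOn f D := by
    intro z hz z' hz' hzz
    by_contra hne
    obtain ⟨O, O', hO, hO', hzO, hzO', hd⟩ := t2_separation hne
    obtain ⟨V, hV, hzV, hcV, hdV⟩ := exists_basic hε ((hU a).inter hO) hℬ ⟨hz.1.1, hzO⟩
    obtain ⟨V', hV', hzV', hcV', hdV'⟩ := exists_basic hε ((hU a).inter hO') hℬ ⟨hz'.1.1, hzO'⟩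
    have hp : (V, V') ∈ Pr := ⟨⟨hV, hV'⟩, hcV.trans inter_subset_left,
      hcV'.trans inter_subset_left, hd.mono (subset_closure.trans (hcV.trans inter_subset_right))
        (subset_closure.trans (hcV'.trans inter_subset_right)), hdV, hdV'⟩
    have hsub : C (V, V') ⊆ B := subset_biUnion_of_mem (u := fun p => C p) hp
    obtain ⟨k, hk⟩ := hCx _ hp (f z)
    by_cases h1 : k = a'
    · subst h1
      exact hk z' (by simpa using hzV') (fun h => hz'.1.2 (hsub h)) hzz.symm
    by_cases h2 : k = a
    · subst h2
      exact hk z (by simpa [Function.update_of_ne haa] using hzV) (fun h => hz.1.2 (hsub h)) rfl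
    · obtain ⟨w, hw, hfw⟩ := mem_iInter.1 hz.2 k
      exact hk w (by simpa [Function.update_of_ne h1, Function.update_of_ne h2] using hw.1)
        (fun h => hw.2 (hsub h)) hfw
  obtain ⟨D', hDD, hD'm, hD'i⟩ := exists_injOn_hull hf hD hDi
  obtain ⟨x, hx⟩ := hL (B ∪ D') (hBs.union (Small.of_injOn hD'm hD'i))
  obtain ⟨z, hz, hzn, rfl⟩ := hx a
  refine hzn (Or.inr (hDD ⟨⟨hz, fun h => hzn (Or.inl h)⟩, mem_iInter.2 fun k => ?_⟩))
  obtain ⟨w, hw, hwn, hfw⟩ := hx k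
  exact ⟨w, ⟨hw, fun h => hwn (Or.inl h)⟩, hfw⟩

/-- Every member of a finite large family of open sets can be split into two small disjoint open
sets so that the doubled family is large. -/
lemma split_all {Z : Type*} [MetricSpace Z] [PolishSpace Z] [MeasurableSpace Z] [BorelSpace Z]
    {f : Z → X} (hf : Continuous f) {ι : Type*} [Fintype ι] {U : ι → Set Z}
    (hU : ∀ i, IsOpen (U i)) (hL : Large f U) {ε : ℝ} (hε : 0 < ε) :
    ∃ W : ι × Bool → Set Z, (∀ k, IsOpen (W k)) ∧ Large f W ∧
      ∀ i, Disjoint (W (i, false)) (W (i, true)) ∧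
        ∀ b, closure (W (i, b)) ⊆ U i ∧ ∀ x ∈ W (i, b), ∀ y ∈ W (i, b), dist x y < ε := by
  classical
  suffices h : ∀ G : Finset ι, ∃ W : ι × Bool → Set Z, (∀ k, IsOpen (W k)) ∧ Large f W ∧
      (∀ i ∉ G, ∀ b, W (i, b) = U i) ∧
      ∀ i ∈ G, Disjoint (W (i, false)) (W (i, true)) ∧
        ∀ b, closure (W (i, b)) ⊆ U i ∧ ∀ x ∈ W (i, b), ∀ y ∈ W (i, b), dist x y < ε by
    obtain ⟨W, h1, h2, -, h3⟩ := h Finset.univ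
    exact ⟨W, h1, h2, fun i => h3 i (Finset.mem_univ i)⟩
  intro G
  induction G using Finset.induction_on with
  | empty =>
    refine ⟨fun k => U k.1, fun k => hU _, fun B hB => ?_, by simp, by simp⟩
    obtain ⟨x, hx⟩ := hL B hB
    exact ⟨x, fun k => hx k.1⟩
  | insert i G hi ih =>
    obtain ⟨W, h1, h2, h3, h4⟩ := ih
    obtain ⟨V, V', hV, hV', hcV, hcV', hd, hdV, hdV', hLn⟩ :=
      split_one hf h1 h2 hε (a := (i, false)) (a' := (i, true)) (by simp)
        ((h3 i hi true).trans (h3 i hi false).symm)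
    rw [h3 i hi] at hcV hcV'
    refine ⟨_, ?_, hLn, ?_, ?_⟩
    · intro k
      simp only [Function.update_apply]
      split_ifs
      exacts [hV', hV, h1 k]
    · intro j hj b
      rw [Finset.mem_insert, not_or] at hj
      simp [hj.1, h3 j hj.2]
    · intro j hj
      by_cases hji : j = i
      · subst hji
        simp only [Function.update_apply]
        simp only [Prod.mk.injEq, Bool.false_eq_true, and_false, if_false, if_true, true_and]
        refine ⟨hd, ?_⟩
        rintro (_ | _)
        · simpa using ⟨hcV, hdV⟩
        · simpa using ⟨hcV', hdV'⟩
      · have := h4 j ((Finset.mem_insert.1 hj).resolve_left hji)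
        simpa [Function.update_apply, hji] using this

/-- If a continuous `f` has countable fibres, its domain is small. Otherwise `split_all` yields a
Cantor scheme of large families indexed by `Fin n → Bool`; its branches are pairwise distinct
points in a single fibre of `f`. -/
lemma small_univ (hf : Continuous f) (hc : ∀ x, {z | f z = x}.Countable) :
    Small f (univ : Set Z) := by
  by_contra hns
  let := TopologicalSpace.upgradeIsCompletelyMetrizable Z
  -- the possible `n`-th levels of the scheme
  let St (n : ℕ) := {U : (Fin n → Bool) → Set Z // (∀ s, IsOpen (U s)) ∧ Large f U}
  have step : ∀ (n : ℕ) (S : St n), ∃ S' : St (n + 1), ∀ s : Fin (n + 1) → Bool,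
      closure (S'.1 s) ⊆ S.1 (fun i => s i.castSucc) ∧
      (∀ x ∈ S'.1 s, ∀ y ∈ S'.1 s, dist x y < (1 / 2 : ℝ) ^ n) ∧
      ∀ t : Fin (n + 1) → Bool, (∀ i : Fin n, s i.castSucc = t i.castSucc) →
        s (Fin.last n) ≠ t (Fin.last n) → Disjoint (S'.1 s) (S'.1 t) := by
    rintro n ⟨U, hU, hL⟩
    obtain ⟨W, h1, h2, h3⟩ := split_all hf hU hL (ε := (1 / 2 : ℝ) ^ n) (by positivity)
    refine ⟨⟨fun s => W (fun i => s i.castSucc, s (Fin.last n)), fun s => h1 _, fun B hB => ?_⟩,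
      fun s => ⟨((h3 _).2 _).1, ((h3 _).2 _).2, ?_⟩⟩
    · obtain ⟨x, hx⟩ := h2 B hB
      exact ⟨x, fun s => hx _⟩
    · intro t hst hl
      have : (fun i : Fin n => t i.castSucc) = fun i => s i.castSucc := funext fun i => (hst i).symm
      simp only [this]
      rcases hs : s (Fin.last n) <;> rcases ht : t (Fin.last n)
      · exact absurd (hs.trans ht.symm) hl
      · exact (h3 _).1
      · exact (h3 _).1.symm
      · exact absurd (hs.trans ht.symm) hl
  have S0 : St 0 := ⟨fun _ => univ, fun _ => isOpen_univ, fun B hB => by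
    by_contra! hcon
    have : B = univ := by
      refine eq_univ_of_forall fun z => ?_
      by_contra hz
      obtain ⟨k, hk⟩ := hcon (f z)
      exact hk z (mem_univ z) hz rfl
    exact hns (this ▸ hB)⟩
  choose next hnext using step
  let S : ∀ n, St n := fun n => Nat.rec S0 next n
  let A (σ : ℕ → Bool) (n : ℕ) : Set Z := (S n).1 fun i => σ i
  have hcl : ∀ σ n, closure (A σ (n + 1)) ⊆ A σ n := fun σ n => (hnext n (S n) fun i => σ i).1
  have hdiam : ∀ σ n, ∀ x ∈ A σ (n + 1), ∀ y ∈ A σ (n + 1), dist x y < (1 / 2 : ℝ) ^ n :=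
    fun σ n => (hnext n (S n) fun i => σ i).2.1
  have hdisj : ∀ (σ τ : ℕ → Bool) n, (∀ i < n, σ i = τ i) → σ n ≠ τ n →
      Disjoint (A σ (n + 1)) (A τ (n + 1)) := fun σ τ n h h' =>
    (hnext n (S n) fun i => σ i).2.2 (fun i => τ i) (fun i => h i i.2) (by simpa using h')
  have hanti : ∀ σ, Antitone (A σ) := fun σ =>
    antitone_nat_of_succ_le fun n => subset_closure.trans (hcl σ n)
  have hpt : ∀ n, ∃ x, ∀ σ, ∃ z ∈ A σ n, f z = x := fun n => by
    obtain ⟨x, hx⟩ := (S n).2.2 ∅ ⟨∅, countable_empty, by simp, by simp⟩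
    refine ⟨x, fun σ => ?_⟩
    obtain ⟨z, hz, -, h⟩ := hx fun i => σ i
    exact ⟨z, hz, h⟩
  choose x hx using hpt
  choose z hzA hzx using hx
  have hlim : ∀ σ, ∃ w, Filter.Tendsto (fun n => z n σ) Filter.atTop (𝓝 w) := fun σ => by
    refine cauchySeq_tendsto_of_complete ?_
    rw [← cauchySeq_shift 1]
    refine cauchySeq_of_le_geometric (1 / 2) 1 (by norm_num) fun n => ?_
    rw [one_mul]
    exact (hdiam σ n (z (n + 1) σ) (hzA (n + 1) σ) (z (n + 1 + 1) σ) (hanti σ (Nat.le_succ (n + 1)) (hzA (n + 1 + 1) σ))).le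
  choose w hw using hlim
  have hwA : ∀ σ n, w σ ∈ A σ n := fun σ n => by
    refine hcl σ n (mem_closure_of_tendsto (hw σ) ?_)
    filter_upwards [Filter.eventually_ge_atTop (n + 1)] with m hm
    exact hanti σ hm (hzA m σ)
  have hwinj : Function.Injective w := by
    intro σ τ h
    by_contra hne
    have hex : ∃ n, σ n ≠ τ n := by
      by_contra! hcon
      exact hne (funext hcon)
    classical
    have hd := hdisj σ τ (Nat.find hex) (fun i hi => not_not.1 (Nat.find_min hex hi))
      (Nat.find_spec hex)
    have h1 := hwA τ (Nat.find hex + 1)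
    rw [← h] at h1
    exact Set.disjoint_left.1 hd (hwA σ (Nat.find hex + 1)) h1
  -- Along every branch `f (z n σ) = x n` does not depend on `σ`, so neither does the limit.
  have hconst : ∀ σ, f (w σ) = f (w fun _ => false) := fun σ => by
    have h1 := ((hf.tendsto _).comp (hw σ))
    have h2 := ((hf.tendsto _).comp (hw fun _ => false))
    simp only [Function.comp_def, hzx] at h1 h2
    exact tendsto_nhds_unique h1 h2
  have h1 : (univ : Set (ℕ → Bool)).Countable :=
    ((hc (f (w fun _ => false))).preimage hwinj).mono fun σ _ => hconst σ
  obtain ⟨e, he⟩ := h1.exists_eq_range univ_nonempty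
  obtain ⟨n, hn⟩ : (fun n => !e n n) ∈ range e := he ▸ mem_univ _
  simpa using congrFun hn n

end polish

/-! ### Consequences of Lusin–Novikov for Borel maps -/

section borel

variable {W X A : Type*} [MeasurableSpace W] [StandardBorelSpace W] [MeasurableSpace X]
  [StandardBorelSpace X] [MeasurableSpace A] [StandardBorelSpace A]

/-- **Lusin–Novikov theorem**: a countable-to-one Borel map between standard Borel spaces is
injective on each piece of a countable Borel cover of its domain. -/
theorem lusin_novikov {f : W → X} (hf : Measurable f) (hc : ∀ x, {w | f w = x}.Countable) :
    ∃ B : ℕ → Set W, (∀ n, MeasurableSet (B n) ∧ InjOn f (B n)) ∧ ⋃ n, B n = univ := by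
  have hs : Small f (univ : Set W) := by
    let := upgradeStandardBorel X
    let hW := upgradeStandardBorel W
    obtain ⟨t', hle, hfc, hp⟩ := hf.exists_continuous
    have hb : @BorelSpace W t' _ :=
      ⟨hW.toBorelSpace.measurable_eq.trans (borel_eq_borel_of_le hp hW.toPolishSpace hle).symm⟩
    exact @small_univ W X t' hp _ hb _ _ f hfc hc
  obtain ⟨𝒞, h1, h2, h3⟩ := hs
  obtain ⟨B, hB⟩ := (h1.insert ∅).exists_eq_range (insert_nonempty _ _)
  refine ⟨B, fun n => ?_, ?_⟩
  · have : B n ∈ insert ∅ 𝒞 := hB ▸ mem_range_self n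
    rcases this with h | h
    · simp [h]
    · exact h2 _ h
  · rw [← sUnion_range, ← hB, sUnion_insert, ← h3, empty_union]

lemma measurableSet_image_of_countable {f : W → X} (hf : Measurable f) {P : Set W}
    (hP : MeasurableSet P) (hc : ∀ x, {w | w ∈ P ∧ f w = x}.Countable) :
    MeasurableSet (f '' P) := by
  have := hP.standardBorel
  obtain ⟨B, hB, hU⟩ := lusin_novikov (f := fun w : P => f w) (hf.comp measurable_subtype_coe)
    (fun x => ((hc x).preimage Subtype.val_injective).mono fun w hw => show _ ∧ _ from ⟨w.2, hw⟩)
  have : f '' P = ⋃ n, (fun w : P => f w) '' B n := by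
    rw [← image_iUnion, hU, image_univ]
    ext
    simp
  rw [this]
  exact MeasurableSet.iUnion fun n =>
    (hB n).1.image_of_measurable_injOn (hf.comp measurable_subtype_coe) (hB n).2

/-- A map between standard Borel spaces with Borel graph is Borel. -/
lemma measurable_of_graph {f : W → X} (h : MeasurableSet {p : W × X | f p.1 = p.2}) :
    Measurable f := by
  intro S hS
  have : f ⁻¹' S = Prod.fst '' ({p : W × X | f p.1 = p.2} ∩ Prod.snd ⁻¹' S) := by
    ext w
    constructor
    · intro hw
      exact ⟨(w, f w), ⟨rfl, hw⟩, rfl⟩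
    · rintro ⟨p, ⟨h1, h2⟩, rfl⟩
      rw [mem_preimage, h1]
      exact h2
  rw [this]
  refine (h.inter (measurable_snd hS)).image_of_measurable_injOn measurable_fst ?_
  rintro ⟨a, b⟩ ⟨h1, -⟩ ⟨a', b'⟩ ⟨h2, -⟩ rfl
  simp only [mem_ofPred_eq] at h1 h2
  rw [← h1, ← h2]

omit [MeasurableSpace W] [StandardBorelSpace W] [MeasurableSpace X] [StandardBorelSpace X] in
lemma injOn_iUnion_of_monotone {S : ℕ → Set W} (hS : Monotone S) {f : W → X}
    (h : ∀ n, InjOn f (S n)) : InjOn f (⋃ n, S n) := by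
  intro a ha b hb hab
  obtain ⟨m, hm⟩ := mem_iUnion.1 ha
  obtain ⟨n, hn⟩ := mem_iUnion.1 hb
  exact h (max m n) (hS (le_max_left m n) hm) (hS (le_max_right m n) hn) hab

/-- Given countably many Borel partial injections `P n` between `A` and `X`, encoded as subsets of
`W` on which `p` and `q` are injective, the greedy procedure adds at step `n` the part of `P n`
whose two ends are still unmatched. The result is a partial injection to which no point of any `P n`
can be added. -/
lemma exists_maximal_matching {p : W → A} {q : W → X} (hp : Measurable p) (hq : Measurable q)
    {P : ℕ → Set W} (hP : ∀ n, MeasurableSet (P n)) (hPp : ∀ n, InjOn p (P n))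
    (hPq : ∀ n, InjOn q (P n)) (hU : ⋃ n, P n = univ) :
    ∃ Γ : ℕ → Set W, (∀ n, MeasurableSet (Γ n)) ∧ (∀ n, Γ n ⊆ P n) ∧
      Pairwise (Function.onFun Disjoint Γ) ∧ InjOn p (⋃ n, Γ n) ∧ InjOn q (⋃ n, Γ n) ∧
      ∀ w, p w ∈ p '' (⋃ n, Γ n) ∨ q w ∈ q '' (⋃ n, Γ n) := by
  let new (n : ℕ) (S : Set W) : Set W := P n \ (p ⁻¹' (p '' S) ∪ q ⁻¹' (q '' S))
  let S : ℕ → Set W := fun n => Nat.rec ∅ (fun n S => S ∪ new n S) n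
  have hS : ∀ n, S (n + 1) = S n ∪ new n (S n) := fun n => rfl
  have key : ∀ n, MeasurableSet (S n) ∧ InjOn p (S n) ∧ InjOn q (S n) := by
    intro n
    induction n with
    | zero => exact ⟨MeasurableSet.empty, injOn_empty p, injOn_empty q⟩
    | succ n ih =>
      obtain ⟨h1, h2, h3⟩ := ih
      rw [hS]
      refine ⟨h1.union ((hP n).diff ((hp (h1.image_of_measurable_injOn hp h2)).union
        (hq (h1.image_of_measurable_injOn hq h3)))), ?_, ?_⟩
      · rintro a (ha | ha) b (hb | hb) hab
        · exact h2 ha hb hab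
        · exact absurd (Or.inl ⟨a, ha, hab⟩) hb.2
        · exact absurd (Or.inl ⟨b, hb, hab.symm⟩) ha.2
        · exact hPp n ha.1 hb.1 hab
      · rintro a (ha | ha) b (hb | hb) hab
        · exact h3 ha hb hab
        · exact absurd (Or.inr ⟨a, ha, hab⟩) hb.2
        · exact absurd (Or.inr ⟨b, hb, hab.symm⟩) ha.2
        · exact hPq n ha.1 hb.1 hab
  have hmono : Monotone S := monotone_nat_of_le_succ fun n => hS n ▸ subset_union_left
  have hnew : ∀ n, new n (S n) ⊆ S (n + 1) := fun n => hS n ▸ subset_union_right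
  have hUS : ⋃ n, new n (S n) = ⋃ n, S n := by
    refine subset_antisymm (iUnion_subset fun n => (hnew n).trans (subset_iUnion S (n + 1)))
      (iUnion_subset fun n => ?_)
    induction n with
    | zero => exact empty_subset _
    | succ n ih =>
      rw [hS]
      exact union_subset ih (subset_iUnion (fun n => new n (S n)) n)
  refine ⟨fun n => new n (S n), fun n => ?_, fun n => sdiff_subset, ?_, ?_, ?_, ?_⟩
  · obtain ⟨h1, h2, h3⟩ := key n
    exact (hP n).diff ((hp (h1.image_of_measurable_injOn hp h2)).union
        (hq (h1.image_of_measurable_injOn hq h3)))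
  · rw [pairwise_disjoint_on]
    intro m n hmn
    rw [Set.disjoint_left]
    intro w hm hn
    exact hn.2 (Or.inl ⟨w, hmono hmn (hnew m hm), rfl⟩)
  · rw [hUS]
    exact injOn_iUnion_of_monotone hmono fun n => (key n).2.1
  · rw [hUS]
    exact injOn_iUnion_of_monotone hmono fun n => (key n).2.2
  · intro w
    rw [hUS]
    obtain ⟨n, hn⟩ := mem_iUnion.1 (hU.symm ▸ mem_univ w : w ∈ ⋃ n, P n)
    by_cases h : w ∈ p ⁻¹' (p '' S n) ∪ q ⁻¹' (q '' S n)
    · exact h.imp (fun h => image_mono (subset_iUnion S n) h)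
        (fun h => image_mono (subset_iUnion S n) h)
    · exact Or.inl ⟨w, subset_iUnion S (n + 1) (hnew n ⟨hn, h⟩), rfl⟩

/-- A partial injection inside `E` with disjoint domain and range extends to a Borel involution, so
it preserves an `E`-invariant measure. -/
lemma measure_image_eq_of_disjoint {E : X → X → Prop} (hE : Equivalence E) {μ : Measure X}
    (hinv : ∀ T : X ≃ᵐ X, (∀ x, E x (T x)) →
      ∀ B : Set X, MeasurableSet B → μ (T '' B) = μ B)
    {r q : W → X} (hr : Measurable r) (hq : Measurable q) (hrq : ∀ w, E (r w) (q w))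
    {Q : Set W} (hQ : MeasurableSet Q) (hri : InjOn r Q) (hqi : InjOn q Q)
    (hd : Disjoint (r '' Q) (q '' Q)) : μ (r '' Q) = μ (q '' Q) := by
  classical
  have hrm := hQ.image_of_measurable_injOn hr hri
  have hqm := hQ.image_of_measurable_injOn hq hqi
  let G : X → X → Prop := fun x y => (∃ w ∈ Q, r w = x ∧ q w = y) ∨ (∃ w ∈ Q, q w = x ∧ r w = y) ∨
    (x ∉ r '' Q ∧ x ∉ q '' Q ∧ x = y)
  have hd' : ∀ w ∈ Q, ∀ w' ∈ Q, r w ≠ q w' := fun w hw w' hw' h =>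
    Set.disjoint_left.1 hd ⟨w, hw, rfl⟩ ⟨w', hw', h.symm⟩
  have hex : ∀ x, ∃ y, G x y := by
    intro x
    by_cases h1 : x ∈ r '' Q
    · obtain ⟨w, hw, rfl⟩ := h1
      exact ⟨_, Or.inl ⟨w, hw, rfl, rfl⟩⟩
    by_cases h2 : x ∈ q '' Q
    · obtain ⟨w, hw, rfl⟩ := h2
      exact ⟨_, Or.inr (Or.inl ⟨w, hw, rfl, rfl⟩)⟩
    exact ⟨x, Or.inr (Or.inr ⟨h1, h2, rfl⟩)⟩
  have huniq : ∀ x y y', G x y → G x y' → y = y' := by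
    rintro x y y' (⟨w, hw, rfl, rfl⟩ | ⟨w, hw, rfl, rfl⟩ | ⟨h1, h2, rfl⟩)
      (⟨w', hw', h, rfl⟩ | ⟨w', hw', h, rfl⟩ | ⟨h1', h2', rfl⟩)
    · rw [hri hw' hw h]
    · exact absurd h.symm (hd' _ hw _ hw')
    · exact absurd ⟨w, hw, rfl⟩ h1'
    · exact absurd h (hd' _ hw' _ hw)
    · rw [hqi hw' hw h]
    · exact absurd ⟨w, hw, rfl⟩ h2'
    · exact absurd ⟨w', hw', h⟩ h1
    · exact absurd ⟨w', hw', h⟩ h2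
    · rfl
  have hsymm : ∀ x y, G x y → G y x := by
    rintro x y (⟨w, hw, rfl, rfl⟩ | ⟨w, hw, rfl, rfl⟩ | ⟨h1, h2, rfl⟩)
    · exact Or.inr (Or.inl ⟨w, hw, rfl, rfl⟩)
    · exact Or.inl ⟨w, hw, rfl, rfl⟩
    · exact Or.inr (Or.inr ⟨h1, h2, rfl⟩)
  choose t ht using hex
  have hinvol : Function.Involutive t := fun x => huniq _ _ _ (ht (t x)) (hsymm _ _ (ht x))
  have htm : Measurable t := by
    refine measurable_of_graph ?_
    have : {p : X × X | t p.1 = p.2} = (fun w => (r w, q w)) '' Q ∪ ((fun w => (q w, r w)) '' Q ∪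
        (Prod.fst ⁻¹' (r '' Q)ᶜ ∩ (Prod.fst ⁻¹' (q '' Q)ᶜ ∩ {p : X × X | p.1 = p.2}))) := by
      ext ⟨x, y⟩
      have : t x = y ↔ G x y := ⟨fun h => h ▸ ht x, fun h => huniq _ _ _ (ht x) h⟩
      simp only [mem_ofPred_eq, this, G, mem_union, mem_image, mem_inter_iff, mem_preimage,
        mem_compl_iff, Prod.mk.injEq]
    rw [this]
    refine (hQ.image_of_measurable_injOn (hr.prodMk hq) ?_).union
      ((hQ.image_of_measurable_injOn (hq.prodMk hr) ?_).union
      ((measurable_fst hrm.compl).inter ((measurable_fst hqm.compl).inter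
        (measurableSet_eq_fun measurable_fst measurable_snd))))
    · exact fun a ha b hb h => hri ha hb (Prod.ext_iff.1 h).1
    · exact fun a ha b hb h => hqi ha hb (Prod.ext_iff.1 h).1
  have htE : ∀ x, E x (t x) := by
    intro x
    rcases ht x with ⟨w, hw, h1, h2⟩ | ⟨w, hw, h1, h2⟩ | ⟨-, -, h⟩
    · rw [← h2]
      conv_lhs => rw [← h1]
      exact hrq w
    · rw [← h2]
      conv_lhs => rw [← h1]
      exact hE.symm (hrq w)
    · rw [← h]
      exact hE.refl x
  have htr : ∀ w ∈ Q, t (r w) = q w := fun w hw =>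
    huniq _ _ _ (ht _) (Or.inl ⟨w, hw, rfl, rfl⟩)
  have := hinv (MeasurableEquiv.ofInvolutive t hinvol htm) htE (r '' Q) hrm
  rw [← this, image_image]
  congr 1
  exact image_congr htr

/-- A Borel partial injection `r w ↦ q w` inside `E` preserves an `E`-invariant measure. -/
lemma measure_image_eq {E : X → X → Prop} (hE : Equivalence E) {μ : Measure X}
    (hinv : ∀ T : X ≃ᵐ X, (∀ x, E x (T x)) →
      ∀ B : Set X, MeasurableSet B → μ (T '' B) = μ B)
    {r q : W → X} (hr : Measurable r) (hq : Measurable q) (hrq : ∀ w, E (r w) (q w))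
    {Q : Set W} (hQ : MeasurableSet Q) (hri : InjOn r Q) (hqi : InjOn q Q) :
    μ (r '' Q) = μ (q '' Q) := by
  let := upgradeStandardBorel X
  obtain ⟨b, hb⟩ := (countable_countableBasis X).insert ∅ |>.exists_eq_range (insert_nonempty _ _)
  have hbo : ∀ n, MeasurableSet (b n) := fun n => by
    have : b n ∈ insert ∅ (countableBasis X) := hb ▸ mem_range_self n
    rcases this with h | h
    · simp [h]
    · exact (isOpen_of_mem_countableBasis h).measurableSet
  -- Off the set where `r = q`, a basic open set separates `r w` from `q w`, which splits `Q` into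
  -- pieces with disjoint images.
  let S : ℕ → Set W := fun n => Nat.casesOn n {w | r w = q w} fun n => r ⁻¹' b n ∩ q ⁻¹' (b n)ᶜ
  have hSm : ∀ n, MeasurableSet (S n) := by
    rintro (_ | n)
    · exact measurableSet_eq_fun hr hq
    · exact (hr (hbo n)).inter (hq (hbo n).compl)
  have hSU : ⋃ n, S n = univ := by
    refine eq_univ_of_forall fun w => mem_iUnion.2 ?_
    by_cases h : r w = q w
    · exact ⟨0, h⟩
    · obtain ⟨V, hV, hrV, hVs⟩ := (isBasis_countableBasis X).exists_subset_of_mem_open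
        (show r w ∈ ({q w}ᶜ : Set X) from h) isOpen_compl_singleton
      obtain ⟨n, rfl⟩ : V ∈ range b := hb ▸ mem_insert_of_mem _ hV
      exact ⟨n + 1, hrV, fun hq => hVs hq rfl⟩
  have hpiece : ∀ n, μ (r '' (Q ∩ disjointed S n)) = μ (q '' (Q ∩ disjointed S n)) := by
    intro n
    have hsub : Q ∩ disjointed S n ⊆ S n := inter_subset_right.trans (disjointed_subset S n)
    rcases n with _ | n
    · rw [image_congr fun w hw => (hsub hw : r w = q w)]
    · refine measure_image_eq_of_disjoint hE hinv hr hq hrq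
        (hQ.inter (MeasurableSet.disjointed hSm _)) (hri.mono inter_subset_left)
        (hqi.mono inter_subset_left) ?_
      rw [Set.disjoint_left]
      rintro _ ⟨w, hw, rfl⟩ ⟨w', hw', h⟩
      exact (hsub hw').2 (h ▸ (hsub hw).1)
  have hsum : ∀ g : W → X, Measurable g → InjOn g Q →
      μ (g '' Q) = ∑' n, μ (g '' (Q ∩ disjointed S n)) := by
    intro g hg hgi
    rw [← measure_iUnion, ← image_iUnion, ← inter_iUnion, iUnion_disjointed, hSU, inter_univ]
    · intro m n hmn
      refine disjoint_image_image fun a ha b hb hab => ?_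
      have := hgi ha.1 hb.1 hab
      subst this
      exact Set.disjoint_left.1 (disjoint_disjointed S hmn) ha.2 hb.2
    · exact fun n => (hQ.inter (MeasurableSet.disjointed hSm _)).image_of_measurable_injOn hg
        (hgi.mono inter_subset_left)
  rw [hsum r hr hri, hsum q hq hqi]
  exact tsum_congr hpiece

end borel

end LN

/-! ### Matching `R` with `X` -/

open LN Set in
/-- Shifting a Borel set with countable vertical sections along `E` so that
almost every vertical section of the image becomes a singleton. -/
theorem stmt_4 {X Y : Type*} [TopologicalSpace X] [PolishSpace X]
    [MeasurableSpace X] [BorelSpace X]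
    [TopologicalSpace Y] [PolishSpace Y] [MeasurableSpace Y] [BorelSpace Y]
    (E : X → X → Prop) (hEeq : Equivalence E)
    (hEmeas : MeasurableSet {p : X × X | E p.1 p.2})
    (hEcount : ∀ x : X, {y | E x y}.Countable)
    (R : Set (X × Y)) (hR : MeasurableSet R)
    (hRcount : ∀ x : X, {y | (x, y) ∈ R}.Countable)
    (μ : Measure X) [IsProbabilityMeasure μ]
    (hinv : ∀ T : X ≃ᵐ X, (∀ x, E x (T x)) →
      ∀ B : Set X, MeasurableSet B → μ (T '' B) = μ B)
    (herg : ∀ B : Set X, MeasurableSet B → (∀ x y, x ∈ B → E x y → y ∈ B) →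
      μ B = 0 ∨ μ Bᶜ = 0)
    (hint : ∫⁻ x, ({y | (x, y) ∈ R}.encard).toENNReal ∂μ = 1) :
    ∃ π : X × Y → X, Measurable π ∧
      (∀ p ∈ R, E p.1 (π p)) ∧
      (∀ᵐ x ∂μ, {y | ∃ a : X, (a, y) ∈ R ∧ π (a, y) = x}.encard = 1) := by
  classical
  have hRE : ∀ x, {p : X × Y | p ∈ R ∧ E x p.1}.Countable := fun x => by
    refine ((hEcount x).biUnion fun x' _ => (hRcount x').image (Prod.mk x')).mono ?_
    rintro ⟨a, y⟩ ⟨h1, h2⟩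
    exact mem_biUnion (show a ∈ {y | E x y} from h2) ⟨y, h1, rfl⟩
  have hWm : MeasurableSet {w : (X × Y) × X | w.1 ∈ R ∧ E w.1.1 w.2} :=
    (measurable_fst hR).inter
      ((measurable_fst.fst.prodMk measurable_snd : Measurable fun w : (X × Y) × X =>
        (w.1.1, w.2)) hEmeas)
  -- A point `((x, y), x')` of `W` is a permissible assignment of `x'` to `(x, y) ∈ R`.
  let W := {w : (X × Y) × X // w.1 ∈ R ∧ E w.1.1 w.2}
  have : StandardBorelSpace W := hWm.standardBorel
  let p : W → X × Y := fun w => w.1.1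
  let q : W → X := fun w => w.1.2
  let r : W → X := fun w => w.1.1.1
  have hp : Measurable p := measurable_fst.comp measurable_subtype_coe
  have hq : Measurable q := measurable_snd.comp measurable_subtype_coe
  have hr : Measurable r := measurable_fst.comp hp
  have hrq : ∀ w, E (r w) (q w) := fun w => w.2.2
  obtain ⟨B, hB, hBU⟩ := lusin_novikov hr fun x =>
    (((hRE x).prod (hEcount x)).preimage Subtype.val_injective).mono (by
      rintro w rfl
      exact ⟨⟨w.2.1, hEeq.refl _⟩, w.2.2⟩)
  obtain ⟨C, hC, hCU⟩ := lusin_novikov hq fun x =>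
    (((hRE x).prod (hEcount x)).preimage Subtype.val_injective).mono (by
      rintro w rfl
      exact ⟨⟨w.2.1, hEeq.symm w.2.2⟩, hEeq.refl _⟩)
  -- On each `P n` both `x` and `x'` determine the point, so `P n` is a partial injection inside `E`
  -- and a fortiori a partial injection from `R` to `X`.
  let P : ℕ → Set W := fun n => B n.unpair.1 ∩ C n.unpair.2
  have hPr : ∀ n, InjOn r (P n) := fun n => (hB _).2.mono inter_subset_left
  have hPq : ∀ n, InjOn q (P n) := fun n => (hC _).2.mono inter_subset_right
  obtain ⟨Γ, hΓm, hΓP, hΓd, hΓp, hΓq, hmax⟩ := exists_maximal_matching hp hq (P := P)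
    (fun n => (hB _).1.inter (hC _).1)
    (fun n a ha b hb hab => hPr n ha hb (congrArg Prod.fst hab)) hPq (by
      refine eq_univ_of_forall fun w => ?_
      obtain ⟨m, hm⟩ := mem_iUnion.1 (hBU ▸ mem_univ w)
      obtain ⟨n, hn⟩ := mem_iUnion.1 (hCU ▸ mem_univ w)
      exact mem_iUnion.2 ⟨Nat.pair m n, by simpa [P] using ⟨hm, hn⟩⟩)
  set M := ⋃ n, Γ n with hM
  have hMm : MeasurableSet M := MeasurableSet.iUnion hΓm
  have hpM := hMm.image_of_measurable_injOn hp hΓp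
  have hqM := hMm.image_of_measurable_injOn hq hΓq
  have hrΓ : ∀ n, MeasurableSet (r '' Γ n) := fun n =>
    (hΓm n).image_of_measurable_injOn hr ((hPr n).mono (hΓP n))
  -- `N` collects the `x` lying below some unmatched point of `R`; `e x` counts these points.
  let N : Set X := Prod.fst '' (R \ p '' M)
  have hN : MeasurableSet N := by
    refine measurableSet_image_of_countable measurable_fst (hR.diff hpM) fun x => (hRE x).mono ?_
    rintro a ⟨h, rfl⟩
    exact ⟨h.1, hEeq.refl _⟩
  let e : X → ℝ≥0∞ := fun x => ({y | (x, y) ∈ R \ p '' M}.encard).toENNReal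
  -- Each `Γ n` matches at most one point of `R` over `x`, and different `n` match different points.
  have hcount : ∀ x, ({y | (x, y) ∈ R}.encard).toENNReal =
      ∑' n, (r '' Γ n).indicator 1 x + e x := by
    intro x
    have h1 : {y | (x, y) ∈ R} = (⋃ n, {y | (x, y) ∈ p '' Γ n}) ∪ {y | (x, y) ∈ R \ p '' M} := by
      ext y
      have h2 : (x, y) ∈ p '' M ↔ ∃ n, (x, y) ∈ p '' Γ n := by rw [hM, image_iUnion, mem_iUnion]
      have h3 : (x, y) ∈ p '' M → (x, y) ∈ R := by
        rintro ⟨w, -, h⟩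
        exact h ▸ w.2.1
      simp only [mem_ofPred_eq, mem_union, mem_iUnion, mem_sdiff, ← h2]
      tauto
    have hdis : Disjoint (⋃ n, {y | (x, y) ∈ p '' Γ n}) {y | (x, y) ∈ R \ p '' M} := by
      rw [Set.disjoint_left]
      intro y hy hy'
      obtain ⟨n, hn⟩ := mem_iUnion.1 hy
      exact hy'.2 (image_mono (subset_iUnion Γ n) hn)
    rw [h1, encard_union_eq hdis, ENat.toENNReal_add]
    congr 1
    have hss : ∀ n, {y | (x, y) ∈ p '' Γ n}.Subsingleton := by
      rintro n y ⟨w, hw, h⟩ y' ⟨w', hw', h'⟩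
      have : w = w' := hPr n (hΓP n hw) (hΓP n hw')
        ((congrArg Prod.fst h).trans (congrArg Prod.fst h').symm)
      subst this
      exact congrArg Prod.snd (h.symm.trans h')
    have hsm : ∀ n, MeasurableSet {y | (x, y) ∈ p '' Γ n} := fun n => (hss n).measurableSet
    rw [← Measure.count_apply (MeasurableSet.iUnion hsm), measure_iUnion ?_ hsm]
    · refine tsum_congr fun n => ?_
      rw [Measure.count_apply (hsm n)]
      by_cases hx : x ∈ r '' Γ n
      · rw [indicator_of_mem hx]
        obtain ⟨w, hw, rfl⟩ := hx
        have : {y | (r w, y) ∈ p '' Γ n} = {(p w).2} :=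
          (hss n).eq_singleton_of_mem ⟨w, hw, rfl⟩
        rw [this]
        simp
      · rw [indicator_of_notMem hx]
        have : {y | (x, y) ∈ p '' Γ n} = ∅ := by
          refine eq_empty_of_forall_notMem ?_
          rintro y ⟨w, hw, h⟩
          exact hx ⟨w, hw, congrArg Prod.fst h⟩
        rw [this]
        simp
    · intro m n hmn
      rw [Function.onFun, Set.disjoint_left]
      rintro y ⟨w, hw, h⟩ ⟨w', hw', h'⟩
      have : w = w' := hΓp (mem_iUnion_of_mem m hw) (mem_iUnion_of_mem n hw') (h.trans h'.symm)
      subst this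
      exact (Set.disjoint_left.1 (hΓd hmn) hw hw').elim
  -- By invariance `r '' Γ n` and `q '' Γ n` have the same measure, so the mass of the matched part
  -- of `R` is the measure of the matched part of `X`. No measurability of `e` is needed here.
  have hmass : μ (q '' M) + ∫⁻ x, e x ∂μ = 1 := by
    rw [← hint]
    simp_rw [hcount]
    rw [lintegral_add_left (Measurable.tsum fun n => measurable_one.indicator (hrΓ n)),
      lintegral_tsum fun n => (measurable_one.indicator (hrΓ n)).aemeasurable]
    congr 1
    rw [hM, image_iUnion, measure_iUnion]
    · refine tsum_congr fun n => ?_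
      rw [lintegral_indicator_one (hrΓ n)]
      exact (measure_image_eq hEeq hinv hr hq hrq (hΓm n) ((hPr n).mono (hΓP n))
        ((hPq n).mono (hΓP n))).symm
    · intro m n hmn
      refine disjoint_image_image fun a ha b hb hab => ?_
      have := hΓq (mem_iUnion_of_mem m ha) (mem_iUnion_of_mem n hb) hab
      subst this
      exact Set.disjoint_left.1 (hΓd hmn) ha hb
    · exact fun n => (hΓm n).image_of_measurable_injOn hq ((hPq n).mono (hΓP n))
  -- The saturation of the unmatched part of `X` is disjoint from `N` by maximality, and it is null
  -- or conull by ergodicity.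
  have hdich : μ N = 0 ∨ μ (q '' M)ᶜ = 0 := by
    let S : Set X := Prod.fst '' ({p : X × X | E p.1 p.2} ∩ Prod.snd ⁻¹' (q '' M)ᶜ)
    have hS : MeasurableSet S := by
      refine measurableSet_image_of_countable measurable_fst
        (hEmeas.inter (measurable_snd hqM.compl)) fun x =>
          ((countable_singleton x).prod (hEcount x)).mono ?_
      rintro a ⟨h, rfl⟩
      exact ⟨rfl, h.1⟩
    rcases herg S hS (by
      rintro _ y ⟨⟨a, b⟩, ⟨h1, h2⟩, rfl⟩ hy
      exact ⟨(y, b), ⟨hEeq.trans (hEeq.symm hy) h1, h2⟩, rfl⟩) with h | h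
    · exact Or.inr (measure_mono_null
        (fun x hx => show x ∈ S from ⟨(x, x), ⟨hEeq.refl x, hx⟩, rfl⟩) h)
    · refine Or.inl (measure_mono_null ?_ h)
      rintro _ ⟨a, ha, rfl⟩ ⟨⟨x, b⟩, ⟨h1, h2⟩, hx⟩
      obtain rfl : x = a.1 := hx
      rcases hmax ⟨(a, b), ha.1, h1⟩ with h | h
      exacts [ha.2 h, h2 h]
  have hnull : μ N = 0 ∧ μ (q '' M)ᶜ = 0 := by
    rcases hdich with h | h
    · refine ⟨h, (prob_compl_eq_zero_iff hqM).2 ?_⟩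
      have : ∫⁻ x, e x ∂μ = 0 := by
        rw [← lintegral_zero (μ := μ)]
        refine lintegral_congr_ae ?_
        filter_upwards [measure_eq_zero_iff_ae_notMem.1 h] with x hx
        have : {y | (x, y) ∈ R \ p '' M} = ∅ :=
          eq_empty_of_forall_notMem fun y hy => hx ⟨(x, y), hy, rfl⟩
        simp only [e, this]
        simp
      rwa [this, add_zero] at hmass
    · refine ⟨?_, h⟩
      rw [(prob_compl_eq_zero_iff hqM).1 h] at hmass
      have h0 : ∫⁻ x, e x ∂μ = 0 :=
        (ENNReal.add_right_inj ENNReal.one_ne_top).1 (hmass.trans (add_zero 1).symm)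
      rw [← lintegral_indicator_one hN, ← nonpos_iff_eq_zero, ← h0]
      refine lintegral_mono fun x => ?_
      refine indicator_le' (g := e) ?_ (fun _ _ => zero_le) x
      rintro _ ⟨a, ha, rfl⟩
      have : 1 ≤ {y | (a.1, y) ∈ R \ p '' M}.encard := one_le_encard_iff_nonempty.2 ⟨a.2, ha⟩
      simpa [e] using ENat.toENNReal_le.2 this
  -- `π` follows the matching where it is defined and is the first projection elsewhere.
  let G : X × Y → X → Prop := fun a x => (∃ w ∈ M, p w = a ∧ q w = x) ∨ (a ∉ p '' M ∧ a.1 = x)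
  have hex : ∀ a, ∃ x, G a x := by
    intro a
    by_cases h : a ∈ p '' M
    · obtain ⟨w, hw, rfl⟩ := h
      exact ⟨_, Or.inl ⟨w, hw, rfl, rfl⟩⟩
    · exact ⟨_, Or.inr ⟨h, rfl⟩⟩
  have huniq : ∀ a x x', G a x → G a x' → x = x' := by
    rintro a x x' (⟨w, hw, rfl, rfl⟩ | ⟨h, rfl⟩) (⟨w', hw', h', rfl⟩ | ⟨h', rfl⟩)
    · rw [hΓp hw' hw h']
    · exact absurd ⟨w, hw, rfl⟩ h'
    · exact absurd ⟨w', hw', h'⟩ h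
    · rfl
  choose π hπ using hex
  refine ⟨π, measurable_of_graph ?_, ?_, ?_⟩
  · have : {a : (X × Y) × X | π a.1 = a.2} = (fun w => (p w, q w)) '' M ∪
        (Prod.fst ⁻¹' (p '' M)ᶜ ∩ {a : (X × Y) × X | a.1.1 = a.2}) := by
      ext ⟨a, x⟩
      have : π a = x ↔ G a x := ⟨fun h => h ▸ hπ a, fun h => huniq _ _ _ (hπ a) h⟩
      simp only [mem_ofPred_eq, this, G, mem_union, mem_image, mem_inter_iff, mem_preimage,
        mem_compl_iff, Prod.mk.injEq]
    rw [this]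
    exact (hMm.image_of_measurable_injOn (hp.prodMk hq)
      fun a ha b hb h => hΓp ha hb (congrArg Prod.fst h)).union
      ((measurable_fst hpM.compl).inter (measurableSet_eq_fun measurable_fst.fst measurable_snd))
  · intro a _
    rcases hπ a with ⟨w, -, h1, h2⟩ | ⟨-, h⟩
    · rw [← h2, ← h1]
      exact hrq w
    · rw [← h]
      exact hEeq.refl _
  · filter_upwards [measure_eq_zero_iff_ae_notMem.1 hnull.1,
      measure_eq_zero_iff_ae_notMem.1 hnull.2] with x hxN hxM
    obtain ⟨w, hw, rfl⟩ := not_not.1 hxM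
    rw [encard_eq_one]
    refine ⟨(p w).2, subset_antisymm ?_ ?_⟩
    · rintro y ⟨a, ha, hax⟩
      rcases hπ (a, y) with ⟨w', hw', h1, h2⟩ | ⟨h1, h2⟩
      · have := hΓq hw' hw (h2.trans hax)
        subst this
        exact (congrArg Prod.snd h1).symm
      · exact absurd ⟨(a, y), ⟨ha, h1⟩, h2.trans hax⟩ hxN
    · rintro _ rfl
      exact ⟨(p w).1, w.2.1, huniq _ _ _ (hπ _) (Or.inl ⟨w, hw, rfl, rfl⟩)⟩
end

section
/- Let X be a Polish space, E a countable Borel equivalence relation on X, R ⊆ X × X a Borel set with countable horizontal and vertical sections, and μ an E-ergodic, E-invariant Borel probability measure such that ∫ |R_x| dμ(x) = ∫ |R^y| dμ(y) = 1 (sections R_x = {y : (x,y)∈R}, R^y = {x : (x,y)∈R}). Then there are Borel functions π₁, π₂ : R → X with x E π₁(x,y) and y E π₂(x,y) for all (x,y) ∈ R, such that for μ-almost every point of X, both the vertical and horizontal sections of the image of R under (x,y) ↦ (π₁(x,y), π₂(x,y)) have exactly one element. -/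
open MeasureTheory ENNReal

/-!
The two shifts can be chosen independently: it suffices to find a Borel `π : R → X` moving each
point of `R` along `E` away from its first coordinate such that almost every `x` has exactly one
`π`-preimage in `R` (`exists_shift`). Applying this to `R` and to its transpose gives `π₁` and `π₂`;
the section of the image at `x` is then the image of a single point of `R`.

To build `π`, write `R` as a disjoint union of countably many Borel graphs over subsets of `X`
(Lusin–Novikov, `exists_injOn_fst_partition`) and `E` as the union of the graphs of countably many
Borel automorphisms (Feldman–Moore, `exists_automorphisms`). Going through all pairs consisting of
a piece of `R` and an automorphism, match greedily the unused points of the piece with the points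
of `X` not yet hit (`greedy`). At the end no unused point of `R` is equivalent to a missed point
of `X`. Because `μ` is invariant and `∫ |R_x| dμ = 1 = μ X`, the unused part of `R` has the same
total mass as the missed part of `X`; because `μ` is ergodic, one of them, hence each, is null.

The Lusin–Novikov theorem is proved in the following form: if `p : P → X` is a continuous map from
a Polish space with countable fibres, then `P` is covered by countably many Borel sets on which `p`
is injective (`thin_univ_of_countable_fibers`). Otherwise call a finite tuple of basic open sets
large if no such countable cover meets all the tuples of points that it contains and that lie in
one fibre. A large tuple has a large refinement in which a prescribed set is split in two
(`Large.exists_splits`): if not, the relevant coordinates would form an analytic set on which `p` is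
injective, and Lusin separation puts such a set inside a Borel set with the same property.
Iterating the splitting yields a nonempty perfect subset of a fibre, contradicting countability.
-/

namespace CountableSections
open Set Topology Filter

/-! ### Covering by sets of injectivity -/

theorem exists_basis (P : Type*) [TopologicalSpace P] [RegularSpace P]
    [SecondCountableTopology P] :
    ∃ b : ℕ → Set P, (∃ m, b m = univ) ∧ (∀ n, IsOpen (b n)) ∧
      ∀ x, ∀ U ∈ 𝓝 x, ∃ m, x ∈ b m ∧ closure (b m) ⊆ U := by
  obtain ⟨b, hb⟩ := ((TopologicalSpace.countable_countableBasis P).insert univ).exists_eq_range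
    (insert_nonempty _ _)
  refine ⟨b, ?_, fun n => ?_, fun x U hU => ?_⟩
  · have : (univ : Set P) ∈ range b := hb ▸ mem_insert _ _
    exact this
  · have : b n ∈ insert univ (TopologicalSpace.countableBasis P) := hb ▸ mem_range_self n
    rcases this with h | h
    · simp [h]
    · exact TopologicalSpace.isOpen_of_mem_countableBasis h
  · obtain ⟨t, ht, hx, hc⟩ :=
      (TopologicalSpace.isBasis_countableBasis P).exists_closure_subset hU
    have : t ∈ range b := hb ▸ mem_insert_of_mem _ ht
    obtain ⟨m, rfl⟩ := this
    exact ⟨m, hx, hc⟩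

/-- An analytic set on which `p` is injective lies in a Borel set on which `p` is injective: the
images of its parts in two disjoint basic open sets are disjoint analytic sets, and the Borel set is
cut out by Borel separators of these images. -/
theorem exists_measurable_injOn_superset {P X : Type*} [TopologicalSpace P] [PolishSpace P]
    [MeasurableSpace P] [BorelSpace P] [TopologicalSpace X] [T2Space X] [MeasurableSpace X]
    [BorelSpace X] {p : P → X} (hp : Continuous p) {A : Set P} (hA : AnalyticSet A)
    (hinj : InjOn p A) : ∃ B, A ⊆ B ∧ MeasurableSet B ∧ InjOn p B := by
  obtain ⟨b, -, hbo, hb⟩ := exists_basis P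
  have hAb : ∀ m, AnalyticSet (p '' (A ∩ b m)) := fun m => by
    refine AnalyticSet.image_of_continuous ?_ hp
    rw [inter_eq_iInter]
    refine AnalyticSet.iInter fun c => ?_
    cases c
    · exact (hbo m).measurableSet.analyticSet
    · exact hA
  have hsep : ∀ m n, ∃ u, MeasurableSet u ∧ (Disjoint (b m) (b n) →
      p '' (A ∩ b m) ⊆ u ∧ Disjoint (p '' (A ∩ b n)) u) := fun m n => by
    by_cases h : Disjoint (b m) (b n)
    · obtain ⟨u, h1, h2, h3⟩ := (hAb m).measurablySeparable (hAb n) (by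
        rw [Set.disjoint_left]
        rintro _ ⟨x, ⟨hx, hxm⟩, rfl⟩ ⟨y, ⟨hy, hyn⟩, hxy⟩
        exact Set.disjoint_left.1 h hxm (hinj hy hx hxy ▸ hyn))
      exact ⟨u, h3, fun _ => ⟨h1, h2⟩⟩
    · exact ⟨∅, MeasurableSet.empty, fun h' => (h h').elim⟩
  choose u hum hu using hsep
  refine ⟨⋂ m, ⋂ n, ⋂ _ : Disjoint (b m) (b n),
    ((b m)ᶜ ∪ p ⁻¹' u m n) ∩ ((b n)ᶜ ∪ (p ⁻¹' u m n)ᶜ), ?_, ?_, ?_⟩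
  · intro x hx
    simp only [mem_iInter]
    intro m n h
    refine ⟨?_, ?_⟩
    · by_cases hxm : x ∈ b m
      · exact Or.inr ((hu m n h).1 ⟨x, ⟨hx, hxm⟩, rfl⟩)
      · exact Or.inl hxm
    · by_cases hxn : x ∈ b n
      · exact Or.inr (Set.disjoint_left.1 (hu m n h).2 ⟨x, ⟨hx, hxn⟩, rfl⟩)
      · exact Or.inl hxn
  · refine MeasurableSet.iInter fun m => MeasurableSet.iInter fun n => MeasurableSet.iInter fun _ =>
      MeasurableSet.inter ?_ ?_
    · exact (hbo m).measurableSet.compl.union (hp.measurable (hum m n))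
    · exact (hbo n).measurableSet.compl.union (hp.measurable (hum m n)).compl
  · intro x hx y hy hxy
    by_contra hne
    obtain ⟨U, V, hU, hV, hxU, hyV, hUV⟩ := t2_separation hne
    obtain ⟨m, hxm, hm⟩ := hb x U (hU.mem_nhds hxU)
    obtain ⟨n, hyn, hn⟩ := hb y V (hV.mem_nhds hyV)
    have hd : Disjoint (b m) (b n) :=
      hUV.mono (subset_closure.trans hm) (subset_closure.trans hn)
    simp only [mem_iInter] at hx hy
    have h1 := (hx m n hd).1.resolve_left (not_not.2 hxm)
    have h2 := (hy m n hd).2.resolve_left (not_not.2 hyn)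
    exact h2 (by simpa [← hxy] using h1)

/-- `S` is covered by countably many Borel sets on which `p` is injective. -/
def Thin {P X : Type*} [MeasurableSpace P] (p : P → X) (S : Set P) : Prop :=
  ∃ B : ℕ → Set P, (∀ n, MeasurableSet (B n) ∧ InjOn p (B n)) ∧ S ⊆ ⋃ n, B n

theorem Thin.iUnion {P X ι : Type*} [Countable ι] [MeasurableSpace P] {p : P → X} {S : ι → Set P}
    (h : ∀ i, Thin p (S i)) : Thin p (⋃ i, S i) := by
  choose B hB hS using h
  rcases isEmpty_or_nonempty ι with hι | hι
  · exact ⟨fun _ => ∅, by simp, by simp⟩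
  · obtain ⟨e, he⟩ := exists_surjective_nat (ι × ℕ)
    refine ⟨fun n => B (e n).1 (e n).2, fun n => hB _ _, iUnion_subset fun i x hx => ?_⟩
    obtain ⟨k, hk⟩ := mem_iUnion.1 (hS i hx)
    obtain ⟨n, hn⟩ := he (i, k)
    exact mem_iUnion.2 ⟨n, by simpa [hn] using hk⟩

theorem Thin.of_injOn {P X : Type*} [MeasurableSpace P] {p : P → X} {S : Set P}
    (hm : MeasurableSet S) (h : InjOn p S) : Thin p S :=
  ⟨fun _ => S, fun _ => ⟨hm, h⟩, (iUnion_const S).symm.subset⟩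

theorem Thin.exists_measurable_superset {P X : Type*} [MeasurableSpace P] {p : P → X} {S : Set P}
    (h : Thin p S) : ∃ S', S ⊆ S' ∧ MeasurableSet S' ∧ Thin p S' := by
  obtain ⟨B, hB, hS⟩ := h
  exact ⟨_, hS, MeasurableSet.iUnion fun n => (hB n).1, B, hB, Subset.rfl⟩

/-- The entry of a list of codes at position `i`, as a basic open set. -/
def box {P : Type*} (b : ℕ → Set P) (l : List ℕ) (i : ℕ) : Set P := b (l.getD i 0)

/-- A sequence whose first `l.length` terms lie in one fibre of `p`, the `i`-th one in
the `i`-th basic set coded by `l`; the remaining terms are irrelevant. -/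
def Conf {P X : Type*} (b : ℕ → Set P) (p : P → X) (l : List ℕ) (z : ℕ → P) : Prop :=
  ∀ i < l.length, z i ∈ box b l i ∧ p (z i) = p (z 0)

/-- The tuple of basic sets coded by `l` is large if, after removal of any thin set, it still
contains a tuple of points lying in one fibre. -/
def Large {P X : Type*} [MeasurableSpace P] (b : ℕ → Set P) (p : P → X) (l : List ℕ) : Prop :=
  ∀ S, Thin p S → ∃ z, Conf b p l z ∧ ∀ i < l.length, z i ∉ S

/-- `l'` shrinks every basic set coded by `l` and adds one more, contained in the `i`-th set of
`l` and disjoint from the `i`-th set of `l'`; the sets coded by `l'` have diameter at most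
`2 ^ (-l.length)`. -/
structure Splits {P : Type*} [MetricSpace P] (b : ℕ → Set P) (i : ℕ) (l l' : List ℕ) :
    Prop where
  length : l'.length = l.length + 1
  closure_subset : ∀ j < l.length, closure (box b l' j) ⊆ box b l j
  dist_le : ∀ j < l'.length, ∀ x ∈ box b l' j, ∀ y ∈ box b l' j, dist x y ≤ (1 / 2) ^ l.length
  new_subset : box b l' l.length ⊆ box b l i
  disjoint : Disjoint (box b l' i) (box b l' l.length)

/-- Two points of one fibre in the `i`-th basic set, the first of them the `i`-th term of a
tuple, yield a splitting of the `i`-th set. -/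
theorem exists_splits {P X : Type*} [MetricSpace P] {b : ℕ → Set P} (hbo : ∀ n, IsOpen (b n))
    (hb : ∀ x, ∀ U ∈ 𝓝 x, ∃ m, x ∈ b m ∧ closure (b m) ⊆ U) {p : P → X} {l : List ℕ} {i : ℕ}
    (hi : i < l.length) {z : ℕ → P} (hz : Conf b p l z) {y : P} (hy : y ∈ box b l i)
    (hpy : p y = p (z 0)) (hne : y ≠ z i) :
    ∃ l', Splits b i l l' ∧ Conf b p l' (Function.update z l.length y) := by
  set w := Function.update z l.length y with hw
  have hwl : w l.length = y := by simp [hw]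
  have hwj : ∀ j < l.length, w j = z j := fun j hj => by simp [hw, hj.ne]
  -- Balls of radius `δ` are small enough and separate `y` from `z i`.
  obtain ⟨δ, hδ0, hδ1, hδ2⟩ : ∃ δ > 0, δ + δ ≤ dist y (z i) ∧ δ + δ ≤ (1 / 2 : ℝ) ^ l.length := by
    have h1 : 0 < dist y (z i) := dist_pos.2 hne
    have h2 : (0 : ℝ) < (1 / 2) ^ l.length := by positivity
    refine ⟨min (dist y (z i)) ((1 / 2) ^ l.length) / 2, by positivity, ?_, ?_⟩
    · linarith [min_le_left (dist y (z i)) ((1 / 2) ^ l.length)]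
    · linarith [min_le_right (dist y (z i)) ((1 / 2) ^ l.length)]
  have hm : ∀ j, ∃ m, j < l.length + 1 → w j ∈ b m ∧
      closure (b m) ⊆ box b l (if j = l.length then i else j) ∩ Metric.ball (w j) δ := fun j => by
    by_cases hj : j < l.length + 1
    · have hwm : w j ∈ box b l (if j = l.length then i else j) := by
        split_ifs with h
        · rw [h, hwl]; exact hy
        · rw [hwj j (by omega)]; exact (hz j (by omega)).1
      obtain ⟨m, h1, h2⟩ := hb (w j) _
        (inter_mem ((hbo _).mem_nhds hwm) (Metric.ball_mem_nhds _ hδ0))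
      exact ⟨m, fun _ => ⟨h1, h2⟩⟩
    · exact ⟨0, fun h => (hj h).elim⟩
  choose c hc using hm
  have hlen : ((List.range (l.length + 1)).map c).length = l.length + 1 := by simp
  have hbox : ∀ j < l.length + 1, box b ((List.range (l.length + 1)).map c) j = b (c j) :=
    fun j hj => by simp [box, List.getD, hj]
  refine ⟨(List.range (l.length + 1)).map c, ⟨hlen, fun j hj => ?_, fun j hj x hx x' hx' => ?_,
    ?_, ?_⟩, fun j hj => ⟨?_, ?_⟩⟩
  · rw [hbox j (by omega)]
    have := (hc j (by omega)).2.trans inter_subset_left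
    rwa [if_neg hj.ne] at this
  · rw [hlen] at hj
    rw [hbox j hj] at hx hx'
    have h1 := ((hc j hj).2 (subset_closure hx)).2
    have h2 := ((hc j hj).2 (subset_closure hx')).2
    rw [Metric.mem_ball] at h1 h2
    linarith [dist_triangle_right x x' (w j)]
  · rw [hbox _ (by omega)]
    have := (hc l.length (by omega)).2.trans inter_subset_left
    rw [if_pos rfl] at this
    exact subset_closure.trans this
  · rw [hbox _ (by omega), hbox _ (by omega)]
    refine Disjoint.mono (subset_closure.trans ((hc i (by omega)).2.trans inter_subset_right))
      (subset_closure.trans ((hc l.length (by omega)).2.trans inter_subset_right)) ?_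
    apply Metric.ball_disjoint_ball
    rw [hwl, hwj i hi, dist_comm]
    exact hδ1
  · rw [hlen] at hj
    rw [hbox j hj]
    exact (hc j hj).1
  · rw [hlen] at hj
    rw [hwj 0 (by omega)]
    rcases Nat.lt_succ_iff_lt_or_eq.1 hj with h | h
    · rw [hwj j h]; exact (hz j h).2
    · rw [h, hwl]; exact hpy

/-- Otherwise thin sets witness the failure of all the countably many splittings; outside their
union the `i`-th coordinates form an analytic set on which `p` is injective, so `l` is not large. -/
theorem Large.exists_splits {P X : Type*} [MetricSpace P] [CompleteSpace P]
    [SecondCountableTopology P] [MeasurableSpace P] [BorelSpace P]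
    [TopologicalSpace X] [T2Space X] [MeasurableSpace X] [BorelSpace X]
    {b : ℕ → Set P} (hbo : ∀ n, IsOpen (b n))
    (hb : ∀ x, ∀ U ∈ 𝓝 x, ∃ m, x ∈ b m ∧ closure (b m) ⊆ U) {p : P → X} (hp : Continuous p)
    {l : List ℕ} (hl : Large b p l) {i : ℕ} (hi : i < l.length) :
    ∃ l', Splits b i l l' ∧ Large b p l' := by
  by_contra! hcon
  have hS : ∀ l' : List ℕ, ∃ S, Thin p S ∧ (Splits b i l l' →
      ∀ z, Conf b p l' z → ∃ j < l'.length, z j ∈ S) := fun l' => by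
    by_cases h : Splits b i l l'
    · have := hcon l' h
      simp only [Large] at this
      push Not at this
      obtain ⟨S, h1, h2⟩ := this
      exact ⟨S, h1, fun _ => h2⟩
    · exact ⟨∅, ⟨fun _ => ∅, by simp, by simp⟩, fun h' => (h h').elim⟩
  choose S hST hS using hS
  obtain ⟨Y, hSY, hYm, hY⟩ := (Thin.iUnion hST).exists_measurable_superset
  -- `C` consists of the tuples in `l` outside `Y`; no splitting of `l` contains a tuple outside `Y`.
  set C : Set (ℕ → P) := {z | Conf b p l z ∧ ∀ j < l.length, z j ∉ Y} with hC
  have hCm : MeasurableSet C := by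
    have : C = ⋂ j, ⋂ _ : j < l.length, ((fun z : ℕ → P => z j) ⁻¹' (box b l j ∩ Yᶜ)) ∩
        {z | p (z j) = p (z 0)} := by
      ext z
      simp only [hC, Conf, mem_ofPred_eq, mem_iInter, mem_inter_iff, mem_preimage, mem_compl_iff]
      grind
    rw [this]
    refine MeasurableSet.iInter fun j => MeasurableSet.iInter fun _ => MeasurableSet.inter ?_ ?_
    · exact measurable_pi_apply j ((hbo _).measurableSet.inter hYm.compl)
    · exact (isClosed_eq (hp.comp (continuous_apply j))
        (hp.comp (continuous_apply 0))).measurableSet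
  have hinj : InjOn p ((fun z : ℕ → P => z i) '' C) := by
    rintro _ ⟨z, ⟨hz, hzY⟩, rfl⟩ _ ⟨z', ⟨hz', hzY'⟩, rfl⟩ hzz
    by_contra hne
    simp only at hzz hne
    obtain ⟨l', hl', hconf⟩ := CountableSections.exists_splits hbo hb hi hz (hz' i hi).1
      (hzz ▸ (hz i hi).2) (Ne.symm hne)
    obtain ⟨j, hj, hjS⟩ := hS l' hl' _ hconf
    have hjY := hSY (mem_iUnion.2 ⟨l', hjS⟩)
    rw [hl'.length] at hj
    rcases Nat.lt_succ_iff_lt_or_eq.1 hj with h | h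
    · rw [Function.update_of_ne h.ne] at hjY
      exact hzY j h hjY
    · rw [h, Function.update_self] at hjY
      exact hzY' i hi hjY
  obtain ⟨B, hAB, hBm, hBi⟩ := exists_measurable_injOn_superset hp
    (hCm.analyticSet.image_of_continuous (continuous_apply i)) hinj
  obtain ⟨z, hz, hzS⟩ := hl (⋃ c : Bool, cond c Y B)
    (Thin.iUnion fun c => by cases c; exacts [Thin.of_injOn hBm hBi, hY])
  have hzY : ∀ j < l.length, z j ∉ Y := fun j hj h => hzS j hj (mem_iUnion.2 ⟨true, h⟩)
  exact hzS i hi (mem_iUnion.2 ⟨false, hAB ⟨z, ⟨hz, hzY⟩, rfl⟩⟩)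

/-- If the space is not thin, a sequence of splittings in which every index is split infinitely
often converges to a sequence in one fibre without isolated points, so its closure is perfect. -/
theorem thin_univ_of_countable_fibers {P X : Type*} [MetricSpace P] [CompleteSpace P]
    [SecondCountableTopology P] [MeasurableSpace P] [BorelSpace P]
    [TopologicalSpace X] [T2Space X] [MeasurableSpace X] [BorelSpace X]
    {p : P → X} (hp : Continuous p) (hc : ∀ x, (p ⁻¹' {x}).Countable) : Thin p univ := by
  by_contra hthin
  obtain ⟨b, ⟨m, hm⟩, hbo, hb⟩ := exists_basis P
  have h0 : Large b p [m] := fun S hS => by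
    obtain ⟨x, hx⟩ : ∃ x, x ∉ S := by
      by_contra! h
      exact hthin ((eq_univ_of_forall h) ▸ hS)
    refine ⟨fun _ => x, fun i hi => ⟨?_, rfl⟩, fun _ _ => hx⟩
    have : i = 0 := by simpa using hi
    subst this
    simp [box, hm]
  have hstep : ∀ (n : ℕ) (l : {l : List ℕ // Large b p l ∧ l.length = n + 1}),
      ∃ l' : {l : List ℕ // Large b p l ∧ l.length = n + 1 + 1},
        Splits b (Nat.unpair n).1 l.1 l'.1 := fun n l => by
    obtain ⟨l', h1, h2⟩ := l.2.1.exists_splits hbo hb hp (i := (Nat.unpair n).1)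
      (by rw [l.2.2]; exact Nat.lt_succ_of_le (Nat.unpair_left_le n))
    exact ⟨⟨l', h2, by rw [h1.length, l.2.2]⟩, h1⟩
  choose f hf using hstep
  obtain ⟨L, hL⟩ : ∃ L : (n : ℕ) → {l : List ℕ // Large b p l ∧ l.length = n + 1},
      ∀ n, Splits b (Nat.unpair n).1 (L n).1 (L (n + 1)).1 :=
    ⟨fun n => Nat.rec ⟨[m], h0, rfl⟩ (fun n l => f n l) n, fun n => hf n _⟩
  have hlen : ∀ n, (L n).1.length = n + 1 := fun n => (L n).2.2
  have hconf : ∀ n, ∃ z, Conf b p (L n).1 z := fun n => by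
    obtain ⟨z, hz, -⟩ := (L n).2.1 ∅ ⟨fun _ => ∅, by simp, by simp⟩
    exact ⟨z, hz⟩
  choose z hz using hconf
  have hcl : ∀ n, ∀ j ≤ n, closure (box b (L (n + 1)).1 j) ⊆ box b (L n).1 j :=
    fun n j hj => (hL n).closure_subset j (by rw [hlen]; omega)
  have hanti : ∀ j n n', j ≤ n → n ≤ n' → box b (L n').1 j ⊆ box b (L n).1 j := by
    intro j n n' hj hn
    induction n', hn using Nat.le_induction with
    | base => exact Subset.rfl
    | succ k hk ih => exact (subset_closure.trans (hcl k j (hj.trans hk))).trans ih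
  have hmem : ∀ j n n', j ≤ n → n ≤ n' → z n' j ∈ box b (L n).1 j := fun j n n' hj hn =>
    hanti j n n' hj hn (hz n' j (by rw [hlen]; omega)).1
  have hdist : ∀ j n, j ≤ n → ∀ x ∈ box b (L (n + 1)).1 j, ∀ y ∈ box b (L (n + 1)).1 j,
      dist x y ≤ (1 / 2) ^ (n + 1) := fun j n hj x hx y hy => by
    have := (hL n).dist_le j (by rw [hlen]; omega) x hx y hy
    rwa [hlen] at this
  have hpow : Tendsto (fun n : ℕ => (1 / 2 : ℝ) ^ n) atTop (𝓝 0) :=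
    tendsto_pow_atTop_nhds_zero_of_lt_one (by norm_num) (by norm_num)
  have hcauchy : ∀ j, CauchySeq fun n => z n j := fun j => by
    rw [Metric.cauchySeq_iff']
    intro ε hε
    obtain ⟨N, hN⟩ := ((hpow.eventually_lt_const hε).and (eventually_ge_atTop (j + 1))).exists
    obtain ⟨k, rfl⟩ : ∃ k, N = k + 1 := ⟨N - 1, by omega⟩
    refine ⟨k + 1, fun n hn => lt_of_le_of_lt (hdist j k (by omega) _ ?_ _ ?_) hN.1⟩
    · exact hmem j (k + 1) n (by omega) hn
    · exact hmem j (k + 1) (k + 1) (by omega) le_rfl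
  choose w hw using fun j => cauchySeq_tendsto_of_complete (hcauchy j)
  have hwmem : ∀ j n, j ≤ n → w j ∈ box b (L n).1 j := fun j n hj =>
    hcl n j hj (mem_closure_of_tendsto (hw j)
      ((eventually_ge_atTop (n + 1)).mono fun n' hn' => hmem j (n + 1) n' (by omega) hn'))
  have hpw : ∀ j, p (w j) = p (w 0) := fun j => by
    refine tendsto_nhds_unique ((hp.tendsto _).comp (hw j)) ?_
    refine ((hp.tendsto _).comp (hw 0)).congr' ?_
    filter_upwards [eventually_ge_atTop j] with n hn
    exact (hz n j (by rw [hlen]; omega)).2.symm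
  have hpre : Preperfect (range w) := by
    rw [preperfect_iff_nhds]
    rintro _ ⟨i, rfl⟩ U hU
    obtain ⟨ε, hε, hεU⟩ := Metric.mem_nhds_iff.1 hU
    obtain ⟨N, hN⟩ := ((hpow.eventually_lt_const hε).and (eventually_ge_atTop (i + 1))).exists
    -- Stage `n + 1 = pair i N + 1` splits the `i`-th set, at scale below `ε`.
    set n := Nat.pair i N with hn
    have hNn : N ≤ n := Nat.right_le_pair i N
    have hs := hL n
    rw [hn, Nat.unpair_pair, ← hn] at hs
    have hnew : w (n + 1) ∈ box b (L n).1 i := by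
      apply hs.new_subset
      rw [hlen]
      exact hwmem _ _ le_rfl
    obtain ⟨k, hk⟩ : ∃ k, N = k + 1 := ⟨N - 1, by omega⟩
    refine ⟨w (n + 1), ⟨hεU ?_, mem_range_self _⟩, fun heq => ?_⟩
    · rw [Metric.mem_ball]
      refine lt_of_le_of_lt ?_ hN.1
      rw [hk]
      refine hdist i k (by omega) _ ?_ _ (hwmem i (k + 1) (by omega))
      exact hanti i (k + 1) n (by omega) (by omega) hnew
    · have hd := hs.disjoint
      rw [hlen] at hd
      refine Set.disjoint_left.1 hd (hwmem i (n + 1) (by omega)) ?_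
      rw [← heq]
      exact hwmem (n + 1) (n + 1) le_rfl
  obtain ⟨g, hg, -, hginj⟩ := hpre.perfect_closure.exists_nat_bool_injection
    (range_nonempty w).closure
  have hsub : closure (range w) ⊆ p ⁻¹' {p (w 0)} :=
    closure_minimal (by rintro _ ⟨j, rfl⟩; exact hpw j) (isClosed_singleton.preimage hp)
  have hcount : (range g).Countable := (hc _).mono (hg.trans hsub)
  rw [← countable_coe_iff, (Equiv.ofInjective g hginj).symm.countable_iff] at hcount
  obtain ⟨e, he⟩ := exists_surjective_nat (ℕ → Bool)
  obtain ⟨n, hn⟩ := he fun n => !(e n n)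
  simpa using congrFun hn n

theorem thin_univ_of_continuous {P X : Type*} [TopologicalSpace P] [PolishSpace P]
    [MeasurableSpace P] [BorelSpace P]
    [TopologicalSpace X] [T2Space X] [MeasurableSpace X] [BorelSpace X]
    {p : P → X} (hp : Continuous p) (hc : ∀ x, (p ⁻¹' {x}).Countable) : Thin p univ :=
  letI := TopologicalSpace.upgradeIsCompletelyMetrizable P
  thin_univ_of_countable_fibers hp hc

/-- The continuous case applies after refining the topology without changing the Borel sets. -/
theorem thin_univ_of_measurable {S X : Type*} [mS : MeasurableSpace S] [StandardBorelSpace S]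
    [TopologicalSpace X] [PolishSpace X] [MeasurableSpace X] [BorelSpace X]
    {p : S → X} (hp : Measurable p) (hc : ∀ x, (p ⁻¹' {x}).Countable) : Thin p univ := by
  obtain ⟨t, htB, htP⟩ := StandardBorelSpace.polish (α := S)
  obtain ⟨t', hle, hcont, hpol⟩ := hp.exists_continuous
  have hB : @BorelSpace S t' mS :=
    @BorelSpace.mk S t' mS (htB.measurable_eq.trans (borel_eq_borel_of_le hpol htP hle).symm)
  exact @thin_univ_of_continuous S X t' hpol mS hB _ _ _ _ p hcont hc

/-- **Lusin–Novikov theorem**: a Borel set with countable vertical sections is a countable disjoint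
union of Borel graphs of partial functions. -/
theorem exists_injOn_fst_partition {X Y : Type*} [TopologicalSpace X] [PolishSpace X]
    [MeasurableSpace X] [BorelSpace X] [MeasurableSpace Y] [StandardBorelSpace Y]
    {R : Set (X × Y)} (hR : MeasurableSet R) (hc : ∀ x : X, {y | (x, y) ∈ R}.Countable) :
    ∃ B : ℕ → Set (X × Y), (∀ n, MeasurableSet (B n)) ∧ (∀ n, InjOn Prod.fst (B n)) ∧
      Pairwise (Function.onFun Disjoint B) ∧ ⋃ n, B n = R := by
  have := hR.standardBorel
  obtain ⟨B, hB, hBu⟩ := thin_univ_of_measurable (S := R) (p := fun r => r.1.1)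
    (measurable_fst.comp measurable_subtype_coe) (fun x => by
      refine ((hc x).image fun y => (x, y)).preimage_of_injOn
        (Subtype.val_injective.injOn) |>.mono ?_
      rintro ⟨⟨x', y⟩, hr⟩ (rfl : x' = x)
      exact ⟨y, hr, rfl⟩)
  refine ⟨fun n => Subtype.val '' disjointed B n, fun n => ?_, fun n => ?_, fun m n hmn => ?_, ?_⟩
  · exact hR.subtype_image (MeasurableSet.disjointed (fun n => (hB n).1) n)
  · rintro _ ⟨r, hr, rfl⟩ _ ⟨r', hr', rfl⟩ h
    exact congrArg _ ((hB n).2 (disjointed_subset B n hr) (disjointed_subset B n hr') h)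
  · exact (disjoint_image_iff Subtype.val_injective).2 (disjoint_disjointed B hmn)
  · rw [← image_iUnion, iUnion_disjointed, univ_subset_iff.1 hBu, image_univ, Subtype.range_coe]

/-! ### Automorphisms generating a countable Borel equivalence relation -/

section FeldmanMoore

variable {X : Type*} [TopologicalSpace X] [PolishSpace X] [MeasurableSpace X] [BorelSpace X]

/-- The graph of an injective partial Borel map whose domain and range are disjoint extends to
a Borel involution fixing all other points. -/
theorem exists_swap {Q : Set (X × X)} (hQ : MeasurableSet Q) (h1 : InjOn Prod.fst Q)
    (h2 : InjOn Prod.snd Q) (hd : Disjoint (Prod.fst '' Q) (Prod.snd '' Q)) :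
    ∃ T : X ≃ᵐ X, (∀ x y, (x, y) ∈ Q → T x = y) ∧
      ∀ x, T x = x ∨ (x, T x) ∈ Q ∨ (T x, x) ∈ Q := by
  have hd' : ∀ x y z, (x, y) ∈ Q → (z, x) ∉ Q := fun x y z h h' =>
    Set.disjoint_left.1 hd ⟨_, h, rfl⟩ ⟨_, h', rfl⟩
  have h1' : ∀ x y z, (x, y) ∈ Q → (x, z) ∈ Q → y = z := fun x y z h h' =>
    congrArg Prod.snd (h1 h h' rfl)
  have h2' : ∀ x y z, (y, x) ∈ Q → (z, x) ∈ Q → y = z := fun x y z h h' =>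
    congrArg Prod.fst (h2 h h' rfl)
  have hex : ∀ x, ∃ y, (x, y) ∈ Q ∨ (y, x) ∈ Q ∨
      (y = x ∧ x ∉ Prod.fst '' Q ∧ x ∉ Prod.snd '' Q) := fun x => by
    by_cases hx : x ∈ Prod.fst '' Q
    · obtain ⟨⟨x, y⟩, h, rfl⟩ := hx
      exact ⟨y, Or.inl h⟩
    by_cases hx' : x ∈ Prod.snd '' Q
    · obtain ⟨⟨y, x⟩, h, rfl⟩ := hx'
      exact ⟨y, Or.inr (Or.inl h)⟩
    exact ⟨x, Or.inr (Or.inr ⟨rfl, hx, hx'⟩)⟩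
  choose f hf using hex
  have hff : Function.Involutive f := fun x => by
    rcases hf x with h | h | ⟨h, -, -⟩
    · rcases hf (f x) with h' | h' | ⟨-, -, h'⟩
      · exact absurd h (hd' _ _ _ h')
      · exact h2' _ _ _ h' h
      · exact absurd ⟨_, h, rfl⟩ h'
    · rcases hf (f x) with h' | h' | ⟨-, h', -⟩
      · exact h1' _ _ _ h' h
      · exact absurd h' (hd' _ _ _ h)
      · exact absurd ⟨_, h, rfl⟩ h'
    · rw [h, h]
  have hfm : Measurable f := fun S hS => by
    have : f ⁻¹' S = Prod.fst '' (Q ∩ univ ×ˢ S) ∪ Prod.snd '' (Q ∩ S ×ˢ univ) ∪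
        (S \ (Prod.fst '' Q ∪ Prod.snd '' Q)) := by
      ext x
      constructor
      · intro hx
        rcases hf x with h | h | ⟨h, h', h''⟩
        · exact Or.inl (Or.inl ⟨_, ⟨h, trivial, hx⟩, rfl⟩)
        · exact Or.inl (Or.inr ⟨_, ⟨h, hx, trivial⟩, rfl⟩)
        · refine Or.inr ⟨?_, fun hh => hh.elim h' h''⟩
          rw [← h]; exact hx
      · rintro ((⟨⟨x, y⟩, ⟨h, -, hy⟩, rfl⟩ | ⟨⟨y, x⟩, ⟨h, hy, -⟩, rfl⟩) | ⟨hx, hx'⟩)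
        · rcases hf x with h' | h' | ⟨-, h', -⟩
          · exact h1' _ _ _ h h' ▸ hy
          · exact absurd h' (hd' _ _ _ h)
          · exact absurd ⟨_, h, rfl⟩ h'
        · rcases hf x with h' | h' | ⟨-, -, h'⟩
          · exact absurd h (hd' _ _ _ h')
          · exact h2' _ _ _ h h' ▸ hy
          · exact absurd ⟨_, h, rfl⟩ h'
        · rcases hf x with h' | h' | ⟨h', -, -⟩
          · exact absurd (Or.inl ⟨_, h', rfl⟩) hx'
          · exact absurd (Or.inr ⟨_, h', rfl⟩) hx'
          · rw [mem_preimage, h']; exact hx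
    rw [this]
    have hi1 : ∀ Q' ⊆ Q, MeasurableSet Q' → MeasurableSet (Prod.fst '' Q') := fun Q' h hm =>
      hm.image_of_measurable_injOn measurable_fst (h1.mono h)
    have hi2 : ∀ Q' ⊆ Q, MeasurableSet Q' → MeasurableSet (Prod.snd '' Q') := fun Q' h hm =>
      hm.image_of_measurable_injOn measurable_snd (h2.mono h)
    exact ((hi1 _ inter_subset_left (hQ.inter (MeasurableSet.univ.prod hS))).union
      (hi2 _ inter_subset_left (hQ.inter (hS.prod MeasurableSet.univ)))).union
      (hS.diff ((hi1 _ Subset.rfl hQ).union (hi2 _ Subset.rfl hQ)))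
  refine ⟨⟨hff.toPerm, hfm, hfm⟩, fun x y h => ?_, fun x => ?_⟩
  · change f x = y
    rcases hf x with h' | h' | ⟨-, h', -⟩
    · exact h1' _ _ _ h' h
    · exact absurd h' (hd' _ _ _ h)
    · exact absurd ⟨_, h, rfl⟩ h'
  · change f x = x ∨ (x, f x) ∈ Q ∨ (f x, x) ∈ Q
    rcases hf x with h | h | ⟨h, -⟩
    exacts [Or.inr (Or.inl h), Or.inr (Or.inr h), Or.inl h]

/-- **Feldman–Moore theorem**, in the form used here: a countable Borel equivalence relation is
the union of the graphs of countably many Borel automorphisms. -/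
theorem exists_automorphisms {E : X → X → Prop} (hE : Equivalence E)
    (hEm : MeasurableSet {p : X × X | E p.1 p.2}) (hEc : ∀ x : X, {y | E x y}.Countable) :
    ∃ T : ℕ → X ≃ᵐ X, (∀ n x, E x (T n x)) ∧ ∀ x y, E x y → ∃ n, T n x = y := by
  obtain ⟨B, hBm, hBi, -, hBu⟩ := exists_injOn_fst_partition hEm hEc
  obtain ⟨b, -, hbo, hb⟩ := exists_basis X
  -- Both coordinates are injective on each `Q i`; those with disjoint
  -- `b i.2.2.1` and `b i.2.2.2` cover `E` off the diagonal.
  let Q : ℕ × ℕ × ℕ × ℕ → Set (X × X) := fun i =>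
    (B i.1 ∩ Prod.swap ⁻¹' B i.2.1) ∩ b i.2.2.1 ×ˢ b i.2.2.2
  have hBE : ∀ n q, q ∈ B n → E q.1 q.2 := fun n q hq => by
    have : q ∈ {p : X × X | E p.1 p.2} := hBu ▸ mem_iUnion.2 ⟨n, hq⟩
    exact this
  have hT : ∀ i, ∃ T : X ≃ᵐ X, (∀ x, E x (T x)) ∧
      (Disjoint (b i.2.2.1) (b i.2.2.2) → ∀ x y, (x, y) ∈ Q i → T x = y) := fun i => by
    by_cases hd : Disjoint (b i.2.2.1) (b i.2.2.2)
    · obtain ⟨T, hT1, hT2⟩ := exists_swap (Q := Q i)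
        (((hBm _).inter (measurable_swap (hBm _))).inter
          ((hbo _).measurableSet.prod (hbo _).measurableSet))
        ((hBi i.1).mono fun q hq => hq.1.1)
        (fun q hq q' hq' h => Prod.swap_injective (hBi i.2.1 hq.1.2 hq'.1.2 h))
        (hd.mono (by rintro _ ⟨q, hq, rfl⟩; exact hq.2.1)
          (by rintro _ ⟨q, hq, rfl⟩; exact hq.2.2))
      refine ⟨T, fun x => ?_, fun _ => hT1⟩
      rcases hT2 x with h | h | h
      · rw [h]; exact hE.refl x
      · exact hBE _ _ h.1.1
      · exact hE.symm (hBE _ _ h.1.1)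
    · exact ⟨MeasurableEquiv.refl X, fun x => hE.refl x, fun h => (hd h).elim⟩
  choose T hTE hTQ using hT
  obtain ⟨e, he⟩ := exists_surjective_nat (Option (ℕ × ℕ × ℕ × ℕ))
  let T' : Option (ℕ × ℕ × ℕ × ℕ) → X ≃ᵐ X := fun o => o.elim (MeasurableEquiv.refl X) T
  suffices h : ∀ x y, E x y → ∃ o, T' o x = y by
    refine ⟨fun n => T' (e n), fun n x => ?_, fun x y hxy => ?_⟩
    · change E x (T' (e n) x)
      rcases e n with - | i
      exacts [hE.refl x, hTE i x]
    · obtain ⟨o, ho⟩ := h x y hxy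
      obtain ⟨n, rfl⟩ := he o
      exact ⟨n, ho⟩
  intro x y hxy
  by_cases hne : x = y
  · exact ⟨none, hne⟩
  obtain ⟨U, V, hU, hV, hxU, hyV, hUV⟩ := t2_separation hne
  obtain ⟨m, hxm, hm⟩ := hb x U (hU.mem_nhds hxU)
  obtain ⟨n, hyn, hn⟩ := hb y V (hV.mem_nhds hyV)
  have h1 : (x, y) ∈ ⋃ n, B n := hBu ▸ hxy
  have h2 : (y, x) ∈ ⋃ n, B n := hBu ▸ hE.symm hxy
  obtain ⟨k, hk⟩ := mem_iUnion.1 h1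
  obtain ⟨l, hl⟩ := mem_iUnion.1 h2
  exact ⟨some (k, l, m, n), hTQ (k, l, m, n)
    (hUV.mono (subset_closure.trans hm) (subset_closure.trans hn)) x y ⟨⟨hk, hl⟩, hxm, hyn⟩⟩

end FeldmanMoore

/-! ### Greedy matching -/

/-- Greedy disjointification of a sequence of partial maps `τ n` on `S n`: the `n`-th step keeps
the points of `S n` that are not yet used and whose image is not yet hit. -/
def greedy {α β : Type*} (S : ℕ → Set α) (τ : ℕ → α → β) : ℕ → Set α
  | n => {p | p ∈ S n ∧ (∀ m : Fin n, p ∉ greedy S τ m) ∧ ∀ m : Fin n, τ n p ∉ τ m '' greedy S τ m}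

theorem mem_greedy {α β : Type*} {S : ℕ → Set α} {τ : ℕ → α → β} {n : ℕ} {p : α} :
    p ∈ greedy S τ n ↔ p ∈ S n ∧ (∀ m < n, p ∉ greedy S τ m) ∧
      ∀ m < n, τ n p ∉ τ m '' greedy S τ m := by
  rw [greedy]
  simp only [mem_ofPred_eq, Fin.forall_iff]

theorem measurableSet_greedy {α β : Type*} [MeasurableSpace α] [MeasurableSpace β]
    {S : ℕ → Set α} {τ : ℕ → α → β} (hS : ∀ n, MeasurableSet (S n)) (hτ : ∀ n, Measurable (τ n))
    (himg : ∀ n, ∀ A ⊆ S n, MeasurableSet A → MeasurableSet (τ n '' A)) (n : ℕ) :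
    MeasurableSet (greedy S τ n) := by
  induction n using Nat.strong_induction_on with
  | _ n ih =>
    have : greedy S τ n = S n ∩ ((⋂ m, ⋂ _ : m < n, (greedy S τ m)ᶜ) ∩
        ⋂ m, ⋂ _ : m < n, τ n ⁻¹' (τ m '' greedy S τ m)ᶜ) := by
      ext p
      rw [mem_greedy]
      simp only [mem_inter_iff, mem_iInter, mem_compl_iff, mem_preimage]
    rw [this]
    refine (hS n).inter (MeasurableSet.inter ?_ ?_)
    · exact MeasurableSet.iInter fun m => MeasurableSet.iInter fun h => (ih m h).compl
    · exact MeasurableSet.iInter fun m => MeasurableSet.iInter fun h =>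
        hτ n (himg m _ (fun p hp => (mem_greedy.1 hp).1) (ih m h)).compl

theorem disjoint_greedy {α β : Type*} {S : ℕ → Set α} {τ : ℕ → α → β} :
    Pairwise (Function.onFun Disjoint (greedy S τ)) := by
  rw [pairwise_disjoint_on]
  exact fun m n h => Set.disjoint_left.2 fun p hp hp' => (mem_greedy.1 hp').2.1 m h hp

theorem disjoint_image_greedy {α β : Type*} {S : ℕ → Set α} {τ : ℕ → α → β} :
    Pairwise (Function.onFun Disjoint fun n => τ n '' greedy S τ n) := by
  rw [pairwise_disjoint_on]
  refine fun m n h => Set.disjoint_left.2 ?_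
  rintro y hy ⟨p, hp, rfl⟩
  exact (mem_greedy.1 hp).2.2 m h hy

/-! ### Shifting along an ergodic equivalence relation -/

section Transport

variable {X : Type*} [TopologicalSpace X] [PolishSpace X] [MeasurableSpace X] [BorelSpace X]

/-- Fubini for a set partitioned into partial graphs: the integral of the number of points in the
vertical sections is the total measure of the domains. -/
theorem lintegral_encard {ι : Type*} [Countable ι] (μ : Measure X) {C : ι → Set (X × X)}
    (hC : ∀ n, MeasurableSet (C n)) (hinj : ∀ n, InjOn Prod.fst (C n))
    (hd : Pairwise (Function.onFun Disjoint C)) :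
    ∫⁻ x, ({y | (x, y) ∈ ⋃ n, C n}.encard).toENNReal ∂μ = ∑' n, μ (Prod.fst '' C n) := by
  have hCm : ∀ n, MeasurableSet (Prod.fst '' C n) := fun n =>
    (hC n).image_of_measurable_injOn measurable_fst (hinj n)
  have hpt : ∀ x, ({y | (x, y) ∈ ⋃ n, C n}.encard).toENNReal =
      ∑' n, (Prod.fst '' C n).indicator 1 x := fun x => by
    have hsub : ∀ n, {y | (x, y) ∈ C n}.Subsingleton := fun n y hy y' hy' =>
      congrArg Prod.snd (hinj n hy hy' rfl)
    have hU : {y | (x, y) ∈ ⋃ n, C n} = ⋃ n, {y | (x, y) ∈ C n} := by ext; simp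
    rw [hU, ← Measure.count_apply (MeasurableSet.iUnion fun n => (hsub n).measurableSet),
      measure_iUnion (fun m n hmn => ?_) (fun n => (hsub n).measurableSet)]
    · refine tsum_congr fun n => ?_
      rcases (hsub n).eq_empty_or_singleton with h | ⟨y, h⟩
      · rw [h, measure_empty, indicator_of_notMem]
        rintro ⟨⟨x, y⟩, hy, rfl⟩
        exact (h ▸ (show y ∈ {y | (x, y) ∈ C n} from hy) : y ∈ (∅ : Set X))
      · have hy : y ∈ {y | (x, y) ∈ C n} := h ▸ mem_singleton y
        have hx : x ∈ Prod.fst '' C n := ⟨(x, y), hy, rfl⟩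
        rw [h, Measure.count_singleton, indicator_of_mem hx, Pi.one_apply]
    · exact Set.disjoint_left.2 fun y hy hy' => Set.disjoint_left.1 (hd hmn) hy hy'
  simp_rw [hpt]
  rw [lintegral_tsum fun n => (measurable_one.indicator (hCm n)).aemeasurable]
  exact tsum_congr fun n => lintegral_indicator_one (hCm n)

/-- The first coordinates of the points of `R` can be shifted along `E` so that almost every
point of `X` is hit exactly once. -/
theorem exists_shift {E : X → X → Prop} (hE : Equivalence E) {T : ℕ → X ≃ᵐ X}
    (hT : ∀ n x, E x (T n x)) (hTE : ∀ x y, E x y → ∃ n, T n x = y)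
    {R : Set (X × X)} (hR : MeasurableSet R) (hc : ∀ x : X, {y | (x, y) ∈ R}.Countable)
    (μ : Measure X) [IsProbabilityMeasure μ]
    (hinv : ∀ n, ∀ B : Set X, MeasurableSet B → μ (T n '' B) = μ B)
    (herg : ∀ B : Set X, MeasurableSet B → (∀ x y, x ∈ B → E x y → y ∈ B) → μ B = 0 ∨ μ Bᶜ = 0)
    (hint : ∫⁻ x, ({y | (x, y) ∈ R}.encard).toENNReal ∂μ = 1) :
    ∃ π : X × X → X, Measurable π ∧ (∀ p ∈ R, E p.1 (π p)) ∧
      ∀ᵐ x ∂μ, ∃! p, p ∈ R ∧ π p = x := by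
  obtain ⟨B, hBm, hBi, hBd, hBu⟩ := exists_injOn_fst_partition hR hc
  set S : ℕ → Set (X × X) := fun n => B (Nat.unpair n).1 with hS
  set τ : ℕ → X × X → X := fun n p => T (Nat.unpair n).2 p.1 with hτ
  have hτm : ∀ n, Measurable (τ n) := fun n => (T _).measurable.comp measurable_fst
  have hτi : ∀ n, InjOn (τ n) (S n) := fun n p hp q hq h =>
    hBi _ hp hq ((T _).injective h)
  have himg : ∀ n, ∀ A ⊆ S n, MeasurableSet A → MeasurableSet (τ n '' A) := fun n A hA hm =>
    hm.image_of_measurable_injOn (hτm n) ((hτi n).mono hA)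
  set A := greedy S τ with hA
  have hAS : ∀ n, A n ⊆ S n := fun n p hp => (mem_greedy.1 hp).1
  have hAm : ∀ n, MeasurableSet (A n) := measurableSet_greedy (fun n => hBm _) hτm himg
  have hAd : Pairwise (Function.onFun Disjoint A) := disjoint_greedy
  have hSR : ∀ n, S n ⊆ R := fun n => hBu ▸ subset_iUnion B _
  set V : Set X := ⋃ n, τ n '' A n with hV
  have hVm : MeasurableSet V := MeasurableSet.iUnion fun n => himg n _ (hAS n) (hAm n)
  -- The unused points of the `k`-th piece of `R`.
  set D : ℕ → Set (X × X) := fun k => B k \ ⋃ n, A n with hD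
  have hDm : ∀ k, MeasurableSet (D k) := fun k => (hBm k).diff (MeasurableSet.iUnion hAm)
  have hDi : ∀ k, InjOn Prod.fst (D k) := fun k => (hBi k).mono sdiff_subset
  have hDfm : ∀ k, MeasurableSet (Prod.fst '' D k) := fun k =>
    (hDm k).image_of_measurable_injOn measurable_fst (hDi k)
  -- An unused point of `R` and a point of `X` that is not hit are never equivalent.
  have hmax : ∀ k, ∀ p ∈ D k, ∀ j, T j p.1 ∈ V := fun k p hp j => by
    by_contra hj
    refine hp.2 (mem_iUnion.2 ⟨Nat.pair k j, mem_greedy.2 ⟨?_, fun m _ hm => ?_, fun m _ hm => ?_⟩⟩)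
    · simpa [hS] using hp.1
    · exact hp.2 (mem_iUnion.2 ⟨m, hm⟩)
    · refine hj (mem_iUnion.2 ⟨m, ?_⟩)
      simpa [hτ] using hm
  -- The used and unused pieces together partition `R` into graphs.
  have hsum : ∑' n, μ (Prod.fst '' A n) + ∑' k, μ (Prod.fst '' D k) = 1 := by
    set C : ℕ × Bool → Set (X × X) := fun i => cond i.2 (A i.1) (D i.1) with hC
    have hCu : ⋃ i, C i = R := by
      ext p
      simp only [mem_iUnion]
      constructor
      · rintro ⟨⟨n, _ | _⟩, hp⟩
        · exact hBu ▸ mem_iUnion.2 ⟨n, hp.1⟩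
        · exact hSR n (hAS n hp)
      · intro hp
        by_cases h : p ∈ ⋃ n, A n
        · obtain ⟨n, hn⟩ := mem_iUnion.1 h
          exact ⟨(n, true), hn⟩
        · rw [← hBu] at hp
          obtain ⟨k, hk⟩ := mem_iUnion.1 hp
          exact ⟨(k, false), hk, h⟩
    have hCd : Pairwise (Function.onFun Disjoint C) := by
      rintro ⟨m, _ | _⟩ ⟨n, _ | _⟩ hmn
      · exact (hBd fun h => hmn (congrArg (·, false) h)).mono sdiff_subset sdiff_subset
      · exact Set.disjoint_left.2 fun p hp hp' => hp.2 (mem_iUnion.2 ⟨n, hp'⟩)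
      · exact Set.disjoint_left.2 fun p hp hp' => hp'.2 (mem_iUnion.2 ⟨m, hp⟩)
      · exact hAd fun h => hmn (congrArg (·, true) h)
    have := lintegral_encard μ (C := C)
      (by rintro ⟨n, _ | _⟩; exacts [hDm n, hAm n])
      (by rintro ⟨n, _ | _⟩; exacts [hDi n, (hBi _).mono (hAS n)]) hCd
    rw [hCu, hint, ENNReal.tsum_prod (f := fun n c => μ (Prod.fst '' C (n, c)))] at this
    rw [this, ← ENNReal.tsum_add]
    simp [hC, add_comm]
  have hμV : μ V = ∑' n, μ (Prod.fst '' A n) := by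
    rw [hV, measure_iUnion disjoint_image_greedy fun n => himg n _ (hAS n) (hAm n)]
    refine tsum_congr fun n => ?_
    rw [← hinv (Nat.unpair n).2 _
      ((hAm n).image_of_measurable_injOn measurable_fst ((hBi _).mono (hAS n))), image_image]
  have hDV : ∑' k, μ (Prod.fst '' D k) = μ Vᶜ := by
    have h := measure_add_measure_compl (μ := μ) hVm
    rw [measure_univ, ← hsum, ← hμV] at h
    exact ((ENNReal.add_right_inj (measure_ne_top μ V)).1 h).symm
  -- By ergodicity the saturation of the missed set is null or conull.
  have hV0 : μ Vᶜ = 0 := by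
    set W : Set X := ⋃ n, T n ⁻¹' Vᶜ with hW
    have hWm : MeasurableSet W := MeasurableSet.iUnion fun n => (T n).measurable hVm.compl
    rcases herg W hWm (fun x y hx hxy => by
      obtain ⟨n, hn⟩ := mem_iUnion.1 hx
      obtain ⟨m, hm⟩ := hTE y (T n x) (hE.trans (hE.symm hxy) (hT n x))
      exact mem_iUnion.2 ⟨m, by rw [mem_preimage, hm]; exact hn⟩) with h | h
    · refine measure_mono_null (fun x hx => ?_) h
      obtain ⟨n, hn⟩ := hTE x x (hE.refl x)
      exact mem_iUnion.2 ⟨n, by rw [mem_preimage, hn]; exact hx⟩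
    · rw [← hDV, ENNReal.tsum_eq_zero]
      refine fun k => measure_mono_null ?_ h
      rintro _ ⟨p, hp, rfl⟩ hpW
      obtain ⟨n, hn⟩ := mem_iUnion.1 hpW
      exact hn (hmax k p hp n)
  have hD0 : ∀ k, μ (Prod.fst '' D k) = 0 := ENNReal.tsum_eq_zero.1 (hDV.trans hV0)
  obtain ⟨π, hπm, hπ⟩ := exists_measurable_piecewise
    (fun o : Option ℕ => o.elim (⋃ n, A n)ᶜ A)
    (by rintro (_ | n); exacts [(MeasurableSet.iUnion hAm).compl, hAm n])
    (fun o : Option ℕ => o.elim Prod.fst τ)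
    (by rintro (_ | n); exacts [measurable_fst, hτm n])
    (by
      rintro (_ | m) (_ | n) hmn p ⟨hp, hp'⟩
      · rfl
      · exact (hp (mem_iUnion.2 ⟨n, hp'⟩)).elim
      · exact (hp' (mem_iUnion.2 ⟨m, hp⟩)).elim
      · exact (Set.disjoint_left.1 (hAd fun h => hmn (by rw [h])) hp hp').elim)
  have hπA : ∀ n, ∀ p ∈ A n, π p = τ n p := fun n p hp => hπ (some n) hp
  have hπE : ∀ p, E p.1 (π p) := fun p => by
    by_cases h : p ∈ ⋃ n, A n
    · obtain ⟨n, hn⟩ := mem_iUnion.1 h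
      rw [hπA n p hn]
      exact hT _ _
    · rw [hπ none h]
      exact hE.refl _
  refine ⟨π, hπm, fun p _ => hπE p, ?_⟩
  have hae1 : ∀ᵐ x ∂μ, x ∈ V := hV0
  have hae2 : ∀ᵐ x ∂μ, ∀ j k, T j x ∉ Prod.fst '' D k := by
    rw [ae_all_iff]
    intro j
    rw [ae_all_iff]
    intro k
    have h : μ (T j ⁻¹' (Prod.fst '' D k)) = 0 := by
      rw [← hinv j _ ((T j).measurable (hDfm k)), image_preimage_eq _ (T j).surjective]
      exact hD0 k
    exact measure_eq_zero_iff_ae_notMem.1 h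
  filter_upwards [hae1, hae2] with x hx1 hx2
  obtain ⟨n, p, hp, hpx⟩ := mem_iUnion.1 hx1
  refine ⟨p, ⟨hSR n (hAS n hp), (hπA n p hp).trans hpx⟩, ?_⟩
  rintro q ⟨hqR, hqx⟩
  by_cases hq : q ∈ ⋃ n, A n
  · obtain ⟨m, hm⟩ := mem_iUnion.1 hq
    have hmx : τ m q = x := (hπA m q hm).symm.trans hqx
    obtain rfl : m = n := by
      by_contra hmn
      exact Set.disjoint_left.1 (disjoint_image_greedy hmn) ⟨q, hm, hmx⟩ ⟨p, hp, hpx⟩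
    exact hτi m (hAS m hm) (hAS m hp) (hmx.trans hpx.symm)
  -- An unused preimage of `x` would be equivalent to `x`, which `hx2` excludes.
  · obtain ⟨j, hj⟩ := hTE x q.1 (hE.symm (hqx ▸ hπE q))
    rw [← hBu] at hqR
    obtain ⟨k, hk⟩ := mem_iUnion.1 hqR
    exact (hx2 j k ⟨q, ⟨hk, hq⟩, hj.symm⟩).elim

end Transport

end CountableSections

/-- Shifting both coordinates of a Borel set with countable sections along `E`
so that almost every vertical and horizontal section of the image is a singleton. -/
theorem stmt_5 {X : Type*} [TopologicalSpace X] [PolishSpace X]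
    [MeasurableSpace X] [BorelSpace X]
    (E : X → X → Prop) (hEeq : Equivalence E)
    (hEmeas : MeasurableSet {p : X × X | E p.1 p.2})
    (hEcount : ∀ x : X, {y | E x y}.Countable)
    (R : Set (X × X)) (hR : MeasurableSet R)
    (hRvert : ∀ x : X, {y | (x, y) ∈ R}.Countable)
    (hRhoriz : ∀ y : X, {x | (x, y) ∈ R}.Countable)
    (μ : Measure X) [IsProbabilityMeasure μ]
    (hinv : ∀ T : X ≃ᵐ X, (∀ x, E x (T x)) →
      ∀ B : Set X, MeasurableSet B → μ (T '' B) = μ B)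
    (herg : ∀ B : Set X, MeasurableSet B → (∀ x y, x ∈ B → E x y → y ∈ B) →
      μ B = 0 ∨ μ Bᶜ = 0)
    (hintv : ∫⁻ x, ({y | (x, y) ∈ R}.encard).toENNReal ∂μ = 1)
    (hinth : ∫⁻ y, ({x | (x, y) ∈ R}.encard).toENNReal ∂μ = 1) :
    ∃ π₁ π₂ : X × X → X, Measurable π₁ ∧ Measurable π₂ ∧
      (∀ p ∈ R, E p.1 (π₁ p) ∧ E p.2 (π₂ p)) ∧
      (∀ᵐ x ∂μ,
        {y | ∃ p ∈ R, π₁ p = x ∧ π₂ p = y}.encard = 1 ∧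
        {y | ∃ p ∈ R, π₂ p = x ∧ π₁ p = y}.encard = 1) := by
  obtain ⟨T, hT, hTE⟩ := CountableSections.exists_automorphisms hEeq hEmeas hEcount
  obtain ⟨π₁, h₁m, h₁E, h₁⟩ := CountableSections.exists_shift hEeq hT hTE hR hRvert μ
    (fun n => hinv (T n) (hT n)) herg hintv
  obtain ⟨π₂, h₂m, h₂E, h₂⟩ := CountableSections.exists_shift hEeq hT hTE
    (R := Prod.swap ⁻¹' R) (measurable_swap hR) hRhoriz μ
    (fun n => hinv (T n) (hT n)) herg hinth
  refine ⟨π₁, π₂ ∘ Prod.swap, h₁m, h₂m.comp measurable_swap,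
    fun p hp => ⟨h₁E p hp, h₂E p.swap hp⟩, ?_⟩
  filter_upwards [h₁, h₂] with x hx₁ hx₂
  obtain ⟨p, ⟨hpR, hpx⟩, hp⟩ := hx₁
  obtain ⟨q, ⟨hqR, hqx⟩, hq⟩ := hx₂
  refine ⟨Set.encard_eq_one.2 ⟨π₂ p.swap, ?_⟩, Set.encard_eq_one.2 ⟨π₁ q.swap, ?_⟩⟩
  · ext y
    constructor
    · rintro ⟨r, hr, hrx, rfl⟩
      rw [hp r ⟨hr, hrx⟩]
      rfl
    · rintro rfl
      exact ⟨p, hpR, hpx, rfl⟩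
  · ext y
    constructor
    · rintro ⟨r, hr, hrx, rfl⟩
      rw [← hq r.swap ⟨hr, hrx⟩]
      rfl
    · rintro rfl
      exact ⟨q.swap, hqR, hqx, rfl⟩
end
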